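/- Let ε ∈ (0, 2/9) and suppose 0 < a ≤ b are such that V_ε = μ⁻¹(Q_ε) ⊂ ℂ² symplectically embeds into the ellipsoid E(a,b). Then a ≥ 2ε, b ≥ √(2ε), and consequently N₂(a,b) = min(2a, b) ≥ min(4ε, √(2ε)) > 3ε. -/

import Mathlib

/-!
The three numerical assertions reduce to two obstructions to the embedding.

**Volume.** The map `z ↦ π |z|²` pushes Lebesgue measure on `ℂ` to Lebesgue measure on `[0, ∞)`, so
`V_ε` has volume at least `ε`, the area of `Q_ε` (two triangles of area `ε / 2`), and `E(a, b)` has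
volume at most `a b / 2`. A linear symplectic map has determinant `±1`, so embeddings preserve
volume and `2 ε ≤ a b ≤ b²` (`volume_bound`).

**Nonsqueezing.** Since `2 ε < 1`, the triangle with vertices `0`, `(2ε, 0)`, `(0, 2ε)` lies in
`Q_ε`, so `V_ε` contains the open ball `π (|z₁|² + |z₂|²) < 2 ε`, and `2 ε ≤ a` follows from
`nonsqueezing`: an open ball of capacity `R` embeds by `φ` into `E(a, b)` only if `R ≤ a`. The proof
is the Hofer–Zehnder variational argument. Suppose `a < R`. Choose a function `f` with
`0 ≤ f' < 1` that vanishes near `0` and is a constant `m > a` near `R` (`exists_profile`), and put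
`H = f(π |y|²)` at the point `φ y` of the image of the ball. Outside the image put `H = F ∘ q` with
`q = π (|z₁|² / a + |z₂|² / (2 b))`, where `F = m` on `[0, 1]`, `F(s) = κ s` for large `s` with
`a < κ < 2 a`, and `s F'(s) ≤ F(s)` (`exists_outer_profile`). At infinity `H` is then the quadratic
form `π ∑ λⱼ |zⱼ|²` with `1 < λ₀ < 2` and `0 < λ₁ < 1`. A `1`-periodic orbit of `H` that meets the
part of the image where `H` is not locally `F ∘ q` is conjugate to a rotation of frequency less than
one, hence is constant, and has action `-H ≤ 0` (`orbit_const`); any other orbit has nonpositive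
action because `s F'(s) ≤ F(s)`. This contradicts `HamData.exists_periodic_orbit`, which produces an
orbit of positive action.

That orbit is a limit of almost critical points of the action functional
`∑ π k |x̂(k)|² - ∫ H(x)` on trigonometric polynomials of degree at most `N`
(`HamData.exists_almost_critical`). On the nonpositive frequencies the functional is `≤ 0`; adding
the direction `k = 1`, `j = 0` keeps it `≤ 0` far away because `λ₀ > 1` and `λ₁ > 0`; and on a small
`H^{1/2}`-sphere of positive frequencies about a point where `H` vanishes to high order it is at
least some `β > 0` not depending on `N`, by the embedding of `H^{1/2}` in `L⁴`
(`integral_norm_pow_four_le`, `HamData.actS_ge`). The two sets link, by the no-retraction form of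
Brouwer's theorem (`surjective_of_eq_id_off_compact`), so a gradient descent cannot push the first
below the second (`exists_almost_critical_of_linking`). As no `λⱼ` is an integer, the almost
critical points are bounded in `H¹` uniformly in `N`, and a subsequence converges uniformly.
-/

open Set MeasureTheory
open scoped Real ENNReal Pointwise

noncomputable section

/-- The standard symplectic form `ω = Σᵢ dxᵢ ∧ dyᵢ` on `ℂⁿ ≅ ℝ²ⁿ`. -/
def stdSymp (n : ℕ) (v w : Fin n → ℂ) : ℝ :=
  ∑ i, ((starRingEnd ℂ) (v i) * w i).im

/-- `X` symplectically embeds into `X'` (both subsets of `ℂⁿ`): there is an injective map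
`φ : X → ℂⁿ` with image in `X'`, smooth on the interior of `X`, whose derivative preserves
the standard symplectic form at every interior point. -/
def SympEmb (n : ℕ) (X X' : Set (Fin n → ℂ)) : Prop :=
  ∃ φ : (Fin n → ℂ) → (Fin n → ℂ),
    Set.InjOn φ X ∧ φ '' X ⊆ X' ∧ ContDiffOn ℝ (⊤ : ℕ∞) φ (interior X) ∧
    ∀ x ∈ interior X, ∀ v w : Fin n → ℂ,
      stdSymp n (fderiv ℝ φ x v) (fderiv ℝ φ x w) = stdSymp n v w

/-- The ellipsoid `E(a₁,…,aₙ) ⊂ ℂⁿ`. -/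
def ellipsoid {n : ℕ} (a : Fin n → ℝ) : Set (Fin n → ℂ) :=
  {z | ∑ i, Real.pi * ‖z i‖ ^ 2 / a i ≤ 1}

/-- The polydisk `P(a₁,…,aₙ) ⊂ ℂⁿ`. -/
def polydisk {n : ℕ} (a : Fin n → ℝ) : Set (Fin n → ℂ) :=
  {z | ∀ i, Real.pi * ‖z i‖ ^ 2 ≤ a i}

/-- `Nk k a` is the `k`-th smallest element (with multiplicity) of the multiset
`{m · aᵢ : m ∈ ℤ_{>0}, 1 ≤ i ≤ n}`. -/
def Nk {n : ℕ} (k : ℕ) (a : Fin n → ℝ) : ℝ :=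
  sInf {t : ℝ | k ≤ {p : Fin n × ℕ | ((p.2 : ℝ) + 1) * a p.1 ≤ t}.ncard}

/-- `c_k^max(X)`: the infimum of `N_k(a)` over ellipsoids `E(a)` into which `X`
symplectically embeds. -/
def ckmax (n k : ℕ) (X : Set (Fin n → ℂ)) : ℝ :=
  sInf {c : ℝ | ∃ a : Fin n → ℝ, (∀ i, 0 < a i) ∧ SympEmb n X (ellipsoid a) ∧ c = Nk k a}

/-- `c_k^min(X)`: the supremum of `N_k(a)` over ellipsoids `E(a)` symplectically
embedding into `X`. -/
def ckmin (n k : ℕ) (X : Set (Fin n → ℂ)) : ℝ :=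
  sSup {c : ℝ | ∃ a : Fin n → ℝ, (∀ i, 0 < a i) ∧ SympEmb n (ellipsoid a) X ∧ c = Nk k a}

/-- The moment map `μ(z₁,…,zₙ) = (π|z₁|²,…,π|zₙ|²)`. -/
def momentMap (n : ℕ) (z : Fin n → ℂ) : Fin n → ℝ := fun i => Real.pi * ‖z i‖ ^ 2

/-- The toric domain `X_Ω = μ⁻¹(Ω)`. -/
def toricDomain {n : ℕ} (Ω : Set (Fin n → ℝ)) : Set (Fin n → ℂ) :=
  momentMap n ⁻¹' Ω

/-- `X_Ω` is a convex toric domain: `Ω ⊆ [0,∞)ⁿ`, the symmetrization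
`Ω̂ = {x : (|x₁|,…,|xₙ|) ∈ Ω}` is compact and convex, and `Ω` is the closure of a
nonempty relatively open subset of `[0,∞)ⁿ`. -/
def IsConvexToricDomain {n : ℕ} (Ω : Set (Fin n → ℝ)) : Prop :=
  Ω ⊆ {x | ∀ i, 0 ≤ x i} ∧
  IsCompact {x : Fin n → ℝ | (fun i => |x i|) ∈ Ω} ∧
  Convex ℝ {x : Fin n → ℝ | (fun i => |x i|) ∈ Ω} ∧
  ∃ V : Set (Fin n → ℝ), IsOpen V ∧ (V ∩ {x | ∀ i, 0 ≤ x i}).Nonempty ∧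
    Ω = closure (V ∩ {x | ∀ i, 0 ≤ x i})

/-- The quadrilateral `Q_ε` with vertices `(0,0)`, `(1,0)`, `(ε,ε)`, `(0,1)`, i.e. the union
of the triangles `conv{(0,0),(1,0),(ε,ε)}` and `conv{(0,0),(ε,ε),(0,1)}`. -/
def Qeps (ε : ℝ) : Set (Fin 2 → ℝ) :=
  convexHull ℝ {![0, 0], ![1, 0], ![ε, ε]} ∪ convexHull ℝ {![0, 0], ![ε, ε], ![0, 1]}

/-! ### Brouwer's theorem by change of variables -/

/-- Lagrange extrapolation: the value at `1` of a polynomial of bounded degree is a fixed linear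
combination of its values at points close to `0`. -/
lemma exists_extrapolation (D : ℕ) (δ : ℝ) (hδ : 0 < δ) :
    ∃ t w : Fin (D + 1) → ℝ, (∀ j, t j ∈ Ioo 0 δ) ∧
      ∀ p : Polynomial ℝ, p.natDegree ≤ D → p.eval 1 = ∑ j, w j * p.eval (t j) := by
  refine ⟨fun j => δ / (j + 2), fun j => (Lagrange.basis Finset.univ
    (fun j : Fin (D + 1) => δ / ((j : ℝ) + 2)) j).eval 1, ?_, ?_⟩
  · intro j
    have : (0 : ℝ) ≤ j := by positivity
    refine ⟨by positivity, ?_⟩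
    rw [div_lt_iff₀ (by positivity)]
    nlinarith
  · intro p hp
    have hinj : Set.InjOn (fun j : Fin (D + 1) => δ / ((j : ℝ) + 2)) (Finset.univ : Finset (Fin (D+1))) := by
      intro i _ j _ h
      simp only at h
      have hi : (0 : ℝ) ≤ i := by positivity
      have hj : (0 : ℝ) ≤ j := by positivity
      rw [div_eq_div_iff (by positivity) (by positivity)] at h
      have := mul_left_cancel₀ hδ.ne' h
      have h2 : ((i : ℕ) : ℝ) = (j : ℕ) := by linarith
      exact Fin.ext (by exact_mod_cast h2)
    have hdeg : p.degree < (Finset.univ : Finset (Fin (D+1))).card := by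
      simp only [Finset.card_univ, Fintype.card_fin]
      refine lt_of_le_of_lt Polynomial.degree_le_natDegree ?_
      exact_mod_cast Nat.lt_succ_of_le hp
    have h := Lagrange.eq_interpolate hinj hdeg
    conv_lhs => rw [h]
    rw [Lagrange.interpolate_apply, Polynomial.eval_finsetSum]
    refine Finset.sum_congr rfl fun j _ => ?_
    simp [mul_comm]

/-- `det (1 + t A)` is a polynomial in `t` of degree at most the dimension. -/
lemma exists_poly_det {d : ℕ} (A : EuclideanSpace ℝ (Fin d) →L[ℝ] EuclideanSpace ℝ (Fin d)) :
    ∃ p : Polynomial ℝ, p.natDegree ≤ d ∧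
      ∀ t : ℝ, p.eval t = (ContinuousLinearMap.id ℝ _ + t • A).det := by
  let b := (EuclideanSpace.basisFun (Fin d) ℝ).toBasis
  let M := LinearMap.toMatrix b b (A : EuclideanSpace ℝ (Fin d) →ₗ[ℝ] EuclideanSpace ℝ (Fin d))
  refine ⟨Matrix.det ((Polynomial.X : Polynomial ℝ) • M.map Polynomial.C +
    (1 : Matrix (Fin d) (Fin d) ℝ).map Polynomial.C), ?_, ?_⟩
  · simpa using Polynomial.natDegree_det_X_add_C_le M 1
  · intro t
    rw [← Polynomial.coe_evalRingHom, RingHom.map_det, ContinuousLinearMap.det, ← LinearMap.det_toMatrix b]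
    congr 1
    have : LinearMap.toMatrix b b ((ContinuousLinearMap.id ℝ (EuclideanSpace ℝ (Fin d)) + t • A :
        EuclideanSpace ℝ (Fin d) →L[ℝ] EuclideanSpace ℝ (Fin d)) :
        EuclideanSpace ℝ (Fin d) →ₗ[ℝ] EuclideanSpace ℝ (Fin d)) = 1 + t • M := by
      simp only [M, ContinuousLinearMap.toLinearMap_add, ContinuousLinearMap.toLinearMap_smul, map_add, map_smul]
      congr 1
      exact LinearMap.toMatrix_id b
    rw [this]
    ext i j
    by_cases hij : i = j <;> simp [hij] <;> ring

lemma det_id_add_pos {E : Type*} [NormedAddCommGroup E] [NormedSpace ℝ E] [FiniteDimensional ℝ E]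
    (A : E →L[ℝ] E) (hA : ‖A‖ < 1) : 0 < (ContinuousLinearMap.id ℝ E + A).det := by
  have hne : ∀ s ∈ Icc (0 : ℝ) 1, (ContinuousLinearMap.id ℝ E + s • A).det ≠ 0 := by
    intro s hs h0
    have hns : ‖s • A‖ < 1 := by
      rw [norm_smul, Real.norm_eq_abs, abs_of_nonneg hs.1]
      nlinarith [norm_nonneg A, hs.2, hs.1]
    rw [ContinuousLinearMap.det] at h0
    have hk := LinearMap.bot_lt_ker_of_det_eq_zero h0
    obtain ⟨v, hv, hv0⟩ := (Submodule.ne_bot_iff _).1 hk.ne'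
    have hv' : v = -((s • A) v) := by
      have : v + (s • A) v = 0 := by simpa using hv
      exact eq_neg_of_add_eq_zero_left this
    have h1 : ‖v‖ ≤ ‖s • A‖ * ‖v‖ := by
      conv_lhs => rw [hv', norm_neg]
      exact (s • A).le_opNorm v
    have : 0 < ‖v‖ := norm_pos_iff.2 hv0
    nlinarith
  by_contra hle
  push Not at hle
  have hc : ContinuousOn (fun s : ℝ => (ContinuousLinearMap.id ℝ E + s • A).det) (Icc 0 1) := by
    have : Continuous (fun s : ℝ => (ContinuousLinearMap.id ℝ E + s • A)) := by fun_prop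
    exact (ContinuousLinearMap.continuous_det.comp this).continuousOn
  have hiv := intermediate_value_Icc' (zero_le_one) hc
  have h0 : (0 : ℝ) ∈ Icc ((ContinuousLinearMap.id ℝ E + (1 : ℝ) • A).det)
      ((ContinuousLinearMap.id ℝ E + (0 : ℝ) • A).det) := by
    refine ⟨by simpa using hle, ?_⟩
    simp [ContinuousLinearMap.det]
  obtain ⟨s, hs, hs0⟩ := hiv h0
  exact hne s hs hs0

/-- For small `t`, change of variables along `x ↦ x + t u x`, which permutes the ball. -/
lemma integral_small_perturbation {d : ℕ}
    (u : EuclideanSpace ℝ (Fin d) → EuclideanSpace ℝ (Fin d))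
    (hu : Differentiable ℝ u) (L : NNReal) (hL : LipschitzWith L u) (R : ℝ)
    (hR : ∀ x, R ≤ ‖x‖ → u x = 0) (t : ℝ) (ht : t ∈ Ioo 0 (1 / ((L : ℝ) + 1)))
    (η : EuclideanSpace ℝ (Fin d) → ℝ) :
    ∫ x in Metric.ball 0 R, η (x + t • u x) *
      (ContinuousLinearMap.id ℝ _ + t • fderiv ℝ u x).det = ∫ x in Metric.ball 0 R, η x := by
  set f : EuclideanSpace ℝ (Fin d) → EuclideanSpace ℝ (Fin d) := fun x => x + t • u x with hf
  have htL : t * L < 1 := by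
    have h1 := ht.2
    rw [lt_div_iff₀ (by positivity)] at h1
    nlinarith [ht.1]
  have hlip : ∀ x y, ‖t • u x - t • u y‖ ≤ t * L * ‖x - y‖ := by
    intro x y
    rw [← smul_sub, norm_smul, Real.norm_eq_abs, abs_of_pos ht.1, mul_assoc]
    exact mul_le_mul_of_nonneg_left (by simpa [dist_eq_norm] using hL.dist_le_mul x y) ht.1.le
  have hinj : Function.Injective f := by
    intro x y hxy
    have h1 : x - y = t • u y - t • u x := by
      have : x + t • u x = y + t • u y := hxy
      rw [sub_eq_sub_iff_add_eq_add, this, add_comm]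
    have h2 := hlip y x
    rw [← h1, norm_sub_rev y x] at h2
    by_contra hne
    have : 0 < ‖x - y‖ := norm_pos_iff.2 (sub_ne_zero.2 hne)
    nlinarith
  have hsurj : Function.Surjective f := by
    intro y
    have hc : ContractingWith (Real.toNNReal (t * L)) (fun x => y - t • u x) := by
      refine ⟨by rw [Real.toNNReal_lt_one]; exact htL, LipschitzWith.of_dist_le_mul fun x x' => ?_⟩
      rw [dist_eq_norm, dist_eq_norm, sub_sub_sub_cancel_left, norm_sub_rev,
        Real.coe_toNNReal _ (mul_nonneg ht.1.le L.coe_nonneg)]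
      exact hlip x x'
    refine ⟨ContractingWith.fixedPoint _ hc, ?_⟩
    have h := hc.fixedPoint_isFixedPt
    have h' : y - t • u (ContractingWith.fixedPoint _ hc) = ContractingWith.fixedPoint _ hc := h
    show ContractingWith.fixedPoint _ hc + _ = y
    exact eq_sub_iff_add_eq.1 h'.symm
  have hid : ∀ x, x ∉ Metric.ball (0 : EuclideanSpace ℝ (Fin d)) R → f x = x := by
    intro x hx
    have : u x = 0 := hR x (by simpa using hx)
    simp [hf, this]
  have himg : f '' Metric.ball 0 R = Metric.ball 0 R := by
    apply Subset.antisymm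
    · rintro _ ⟨x, hx, rfl⟩
      by_contra hn
      have := hinj (hid _ hn)
      rw [this] at hn
      exact hn hx
    · intro y hy
      obtain ⟨x, rfl⟩ := hsurj y
      by_cases hx : x ∈ Metric.ball (0 : EuclideanSpace ℝ (Fin d)) R
      · exact ⟨x, hx, rfl⟩
      · rw [hid x hx] at hy
        exact absurd hy hx
  have hder : ∀ x ∈ Metric.ball (0 : EuclideanSpace ℝ (Fin d)) R,
      HasFDerivWithinAt f (ContinuousLinearMap.id ℝ _ + t • fderiv ℝ u x) (Metric.ball 0 R) x := by
    intro x _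
    exact ((hasFDerivAt_id x).add ((hu x).hasFDerivAt.const_smul t)).hasFDerivWithinAt
  have hcv := integral_image_eq_integral_abs_det_fderiv_smul volume
    (measurableSet_ball (x := (0 : EuclideanSpace ℝ (Fin d))) (ε := R)) hder hinj.injOn η
  rw [himg] at hcv
  rw [hcv]
  refine setIntegral_congr_fun measurableSet_ball fun x _ => ?_
  have hpos : 0 < (ContinuousLinearMap.id ℝ (EuclideanSpace ℝ (Fin d)) + t • fderiv ℝ u x).det := by
    apply det_id_add_pos
    rw [norm_smul, Real.norm_eq_abs, abs_of_pos ht.1]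
    have := norm_fderiv_le_of_lipschitz ℝ hL (x₀ := x)
    nlinarith [ht.1]
  simp only [smul_eq_mul]
  rw [abs_of_pos hpos, mul_comm]

/-- The change of variables formula along `x ↦ x + u x` with signed Jacobian, for polynomial
integrands and without injectivity: both sides are the value at `t = 1` of a polynomial in `t`,
namely the integral for `t u`, which is constant for small `t`. -/
lemma integral_ball_perturbation {d : ℕ}
    (u : EuclideanSpace ℝ (Fin d) → EuclideanSpace ℝ (Fin d))
    (hu : ContDiff ℝ 1 u) (hcs : HasCompactSupport u) (R : ℝ)
    (hR : ∀ x, R ≤ ‖x‖ → u x = 0) (r : ℝ) (n : ℕ) :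
    ∫ x in Metric.ball 0 R, (1 - r * ‖x + u x‖ ^ 2) ^ n *
      (ContinuousLinearMap.id ℝ _ + fderiv ℝ u x).det =
    ∫ x in Metric.ball (0 : EuclideanSpace ℝ (Fin d)) R, (1 - r * ‖x‖ ^ 2) ^ n := by
  obtain ⟨L, hL⟩ := hu.lipschitzWith_of_hasCompactSupport hcs (by simp)
  obtain ⟨t, w, ht, hw⟩ := exists_extrapolation (2 * n + d) (1 / ((L : ℝ) + 1)) (by positivity)
  have hpoly : ∀ x, ∃ p : Polynomial ℝ, p.natDegree ≤ 2 * n + d ∧ ∀ s : ℝ, p.eval s =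
      (1 - r * ‖x + s • u x‖ ^ 2) ^ n *
        (ContinuousLinearMap.id ℝ _ + s • fderiv ℝ u x).det := by
    intro x
    obtain ⟨p, hp, hpe⟩ := exists_poly_det (fderiv ℝ u x)
    refine ⟨(Polynomial.C (-r * ‖u x‖ ^ 2) * Polynomial.X ^ 2 +
      Polynomial.C (-r * (2 * inner ℝ x (u x))) * Polynomial.X +
      Polynomial.C (1 - r * ‖x‖ ^ 2)) ^ n * p, ?_, ?_⟩
    · refine Polynomial.natDegree_mul_le.trans (add_le_add ?_ hp)
      refine Polynomial.natDegree_pow_le.trans ?_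
      rw [mul_comm]
      exact Nat.mul_le_mul_right n (Polynomial.natDegree_quadratic_le)
    · intro s
      rw [Polynomial.eval_mul, hpe]
      congr 1
      rw [Polynomial.eval_pow, norm_add_sq_real, inner_smul_right, norm_smul, mul_pow,
        Real.norm_eq_abs, sq_abs]
      congr 1
      simp only [Polynomial.eval_add, Polynomial.eval_mul, Polynomial.eval_C, Polynomial.eval_pow,
        Polynomial.eval_X]
      ring
  have hexp : ∀ x, (1 - r * ‖x + u x‖ ^ 2) ^ n *
      (ContinuousLinearMap.id ℝ _ + fderiv ℝ u x).det = ∑ j, w j *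
      ((1 - r * ‖x + t j • u x‖ ^ 2) ^ n *
      (ContinuousLinearMap.id ℝ _ + t j • fderiv ℝ u x).det) := by
    intro x
    obtain ⟨p, hp, hpe⟩ := hpoly x
    have h := hw p hp
    simp only [hpe, one_smul] at h
    exact h
  have hone : (1 : ℝ) = ∑ j, w j := by
    have h := hw 1 (by simp)
    simpa using h
  have hInt : ∀ s : ℝ, IntegrableOn (fun x => (1 - r * ‖x + s • u x‖ ^ 2) ^ n *
      (ContinuousLinearMap.id ℝ _ + s • fderiv ℝ u x).det) (Metric.ball 0 R) := by
    intro s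
    have hc : Continuous (fun x => (1 - r * ‖x + s • u x‖ ^ 2) ^ n *
      (ContinuousLinearMap.id ℝ _ + s • fderiv ℝ u x).det) := by
      have h1 := hu.continuous
      have h2 := hu.continuous_fderiv (by simp)
      have h3 : Continuous (fun x => (ContinuousLinearMap.id ℝ (EuclideanSpace ℝ (Fin d)) +
        s • fderiv ℝ u x).det) := ContinuousLinearMap.continuous_det.comp (by fun_prop)
      fun_prop
    exact (hc.continuousOn.integrableOn_compact (isCompact_closedBall 0 R)).mono_set
      Metric.ball_subset_closedBall
  simp_rw [hexp]
  rw [integral_finsetSum _ (fun j _ => (hInt (t j)).const_mul (w j))]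
  simp_rw [integral_const_mul]
  have : ∀ j, ∫ x in Metric.ball 0 R, (1 - r * ‖x + t j • u x‖ ^ 2) ^ n *
      (ContinuousLinearMap.id ℝ _ + t j • fderiv ℝ u x).det =
      ∫ x in Metric.ball (0 : EuclideanSpace ℝ (Fin d)) R, (1 - r * ‖x‖ ^ 2) ^ n := fun j =>
    integral_small_perturbation u (hu.differentiable (by simp)) L hL R hR (t j) (ht j)
      (fun y => (1 - r * ‖y‖ ^ 2) ^ n)
  simp_rw [this]
  rw [← Finset.sum_mul, ← hone, one_mul]

/-- A `C¹` compactly supported perturbation of the identity does not stay away from the origin.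
Otherwise, for suitable `r`, the left side of `integral_ball_perturbation` would decay
exponentially faster in `n` than the right side, to which the points near `0` contribute. -/
lemma smooth_perturbation_hits_zero {d : ℕ}
    (u : EuclideanSpace ℝ (Fin d) → EuclideanSpace ℝ (Fin d))
    (hu : ContDiff ℝ 1 u) (hcs : HasCompactSupport u) (c : ℝ) (hc : 0 < c)
    (hmiss : ∀ x, c ≤ ‖x + u x‖) : False := by
  obtain ⟨R, hRpos, hRs⟩ : ∃ R, c < R ∧ ∀ x, R ≤ ‖x‖ → u x = 0 := by
    obtain ⟨R, hR⟩ := hcs.isCompact.isBounded.subset_ball (0 : EuclideanSpace ℝ (Fin d))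
    refine ⟨max (c + 1) R, lt_max_of_lt_left (by linarith), fun x hx => ?_⟩
    by_contra hne
    have := hR (subset_tsupport _ hne)
    simp only [Metric.mem_ball, dist_zero_right] at this
    linarith [le_max_right (c + 1) R]
  have hcont : Continuous (fun x => x + u x) := continuous_id.add hu.continuous
  have hdc : Continuous (fun x => (ContinuousLinearMap.id ℝ (EuclideanSpace ℝ (Fin d)) +
        fderiv ℝ u x).det) := by
    have h2 := hu.continuous_fderiv (by simp)
    exact ContinuousLinearMap.continuous_det.comp (by fun_prop)
  obtain ⟨ρ0, hρ0⟩ := (isCompact_closedBall (0 : EuclideanSpace ℝ (Fin d)) R).exists_bound_of_continuousOn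
    hcont.continuousOn
  obtain ⟨C, hC⟩ := (isCompact_closedBall (0 : EuclideanSpace ℝ (Fin d)) R).exists_bound_of_continuousOn
    hdc.continuousOn
  set ρ := max ρ0 R with hρ
  have hρR : R ≤ ρ := le_max_right _ _
  have hρpos : 0 < ρ := by linarith
  set r := 1 / ρ ^ 2 with hr
  have hrpos : 0 < r := by positivity
  have hrρ : r * ρ ^ 2 = 1 := by rw [hr]; field_simp
  set q1 := 1 - r * c ^ 2 with hq1
  set q2 := 1 - r * (c / 2) ^ 2 with hq2
  have hq1n : 0 ≤ q1 := by
    have : c ^ 2 ≤ ρ ^ 2 := by gcongr; linarith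
    nlinarith
  have hq12 : q1 < q2 := by
    have : 0 < r * c ^ 2 := by positivity
    rw [hq1, hq2]; nlinarith
  set B := Metric.ball (0 : EuclideanSpace ℝ (Fin d)) R with hB
  set B' := Metric.ball (0 : EuclideanSpace ℝ (Fin d)) (c / 2) with hB'
  have hBB : B' ⊆ B := Metric.ball_subset_ball (by linarith)
  have hv : 0 < volume.real B' := by
    rw [measureReal_def]
    exact ENNReal.toReal_pos (Metric.measure_ball_pos _ _ (by positivity)).ne' measure_ball_lt_top.ne
  have key : ∀ n : ℕ, volume.real B' * q2 ^ n ≤ (|C| * volume.real B) * q1 ^ n := by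
    intro n
    have hI := integral_ball_perturbation u hu hcs R hRs r n
    have h1 : ∫ x in B, (1 - r * ‖x + u x‖ ^ 2) ^ n *
      (ContinuousLinearMap.id ℝ _ + fderiv ℝ u x).det ≤ (|C| * volume.real B) * q1 ^ n := by
      refine (le_abs_self _).trans ?_
      rw [← Real.norm_eq_abs]
      refine (norm_setIntegral_le_of_norm_le_const (C := q1 ^ n * |C|) measure_ball_lt_top
        fun x hx => ?_).trans (le_of_eq (by ring))
      have hx' : x ∈ Metric.closedBall (0 : EuclideanSpace ℝ (Fin d)) R :=
        Metric.ball_subset_closedBall hx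
      rw [norm_mul, norm_pow]
      have e1 : ‖x + u x‖ ≤ ρ := (hρ0 x hx').trans (le_max_left _ _)
      have e2 := hmiss x
      have e3 : 0 ≤ 1 - r * ‖x + u x‖ ^ 2 := by
        have : ‖x + u x‖ ^ 2 ≤ ρ ^ 2 := by gcongr
        nlinarith
      have e4 : 1 - r * ‖x + u x‖ ^ 2 ≤ q1 := by
        have : c ^ 2 ≤ ‖x + u x‖ ^ 2 := by gcongr
        rw [hq1]; nlinarith
      refine mul_le_mul ?_ ((hC x hx').trans (le_abs_self _)) (norm_nonneg _) (by positivity)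
      rw [Real.norm_eq_abs, abs_of_nonneg e3]
      exact pow_le_pow_left₀ e3 e4 n
    have hnn : ∀ x ∈ B, 0 ≤ (1 - r * ‖x‖ ^ 2) ^ n := by
      intro x hx
      have : ‖x‖ < R := by simpa [hB] using hx
      have : ‖x‖ ^ 2 ≤ ρ ^ 2 := by gcongr; linarith
      apply pow_nonneg
      nlinarith
    have hInt : IntegrableOn (fun x : EuclideanSpace ℝ (Fin d) => (1 - r * ‖x‖ ^ 2) ^ n) B := by
      have : Continuous (fun x : EuclideanSpace ℝ (Fin d) => (1 - r * ‖x‖ ^ 2) ^ n) := by fun_prop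
      exact (this.continuousOn.integrableOn_compact (isCompact_closedBall 0 R)).mono_set
        Metric.ball_subset_closedBall
    have h2 : volume.real B' * q2 ^ n ≤ ∫ x in B, (1 - r * ‖x‖ ^ 2) ^ n := by
      have h3 : ∫ x in B', (1 - r * ‖x‖ ^ 2) ^ n ≤ ∫ x in B, (1 - r * ‖x‖ ^ 2) ^ n :=
        setIntegral_mono_set hInt ((ae_restrict_iff' measurableSet_ball).2
          (Filter.Eventually.of_forall hnn)) (Filter.Eventually.of_forall hBB)
      refine le_trans ?_ h3
      have h4 : ∫ x in B', q2 ^ n = volume.real B' * q2 ^ n := by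
        rw [setIntegral_const, smul_eq_mul]
      rw [← h4]
      refine setIntegral_mono_on (integrableOn_const measure_ball_lt_top.ne) (hInt.mono_set hBB)
        measurableSet_ball fun x hx => ?_
      have : ‖x‖ < c / 2 := by simpa [hB'] using hx
      have : ‖x‖ ^ 2 ≤ (c / 2) ^ 2 := by gcongr
      apply pow_le_pow_left₀ (by linarith)
      rw [hq2]; nlinarith
    linarith
  have hlim : Filter.Tendsto (fun n : ℕ => (|C| * volume.real B) * (q1 / q2) ^ n) Filter.atTop
      (nhds ((|C| * volume.real B) * 0)) :=
    (tendsto_pow_atTop_nhds_zero_of_lt_one (div_nonneg hq1n (by linarith))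
      ((div_lt_one (by linarith)).2 hq12)).const_mul _
  rw [mul_zero] at hlim
  have := ge_of_tendsto' hlim (fun n => by
    show volume.real B' ≤ _
    rw [div_pow, ← mul_div_assoc, le_div_iff₀ (pow_pos (by linarith) n)]
    exact key n)
  linarith

/-- A form of Brouwer's theorem: a continuous map that is the identity off a compact set is
surjective. -/
theorem surjective_of_eq_id_off_compact_euclidean {d : ℕ}
    (f : EuclideanSpace ℝ (Fin d) → EuclideanSpace ℝ (Fin d)) (hf : Continuous f)
    (K : Set (EuclideanSpace ℝ (Fin d))) (hK : IsCompact K) (hid : ∀ x ∉ K, f x = x) :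
    Function.Surjective f := by
  intro y
  by_contra hne
  push Not at hne
  -- conjugating by a translation, the missed point becomes the origin
  set u : EuclideanSpace ℝ (Fin d) → EuclideanSpace ℝ (Fin d) := fun x => f (x + y) - (x + y) with hu
  have huc : Continuous u := by fun_prop
  have hcs : HasCompactSupport u := by
    refine HasCompactSupport.intro (K := (fun x => x + (-y)) '' K) (hK.image (by fun_prop)) ?_
    intro x hx
    have : x + y ∉ K := fun h => hx ⟨x + y, h, by simp⟩
    simp [hu, hid _ this]
  have hmiss : ∀ x, x + u x ≠ 0 := by
    intro x h
    apply hne (x + y)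
    have : x + u x = f (x + y) - y := by simp only [hu]; abel
    rw [this, sub_eq_zero] at h
    exact h
  obtain ⟨c, hc, hcle⟩ : ∃ c > 0, ∀ x, c ≤ ‖x + u x‖ := by
    obtain ⟨R, hR⟩ := hcs.isCompact.isBounded.subset_ball (0 : EuclideanSpace ℝ (Fin d))
    have hcompact := isCompact_closedBall (0 : EuclideanSpace ℝ (Fin d)) (max R 1)
    obtain ⟨x0, _, hx0⟩ := hcompact.exists_isMinOn (f := fun x => ‖x + u x‖)
      ⟨0, by simp⟩ (by fun_prop)
    refine ⟨min ‖x0 + u x0‖ 1, lt_min (norm_pos_iff.2 (hmiss x0)) one_pos, fun x => ?_⟩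
    by_cases hx : x ∈ Metric.closedBall (0 : EuclideanSpace ℝ (Fin d)) (max R 1)
    · exact (min_le_left _ _).trans (hx0 hx)
    · have hx' : max R 1 < ‖x‖ := by simpa using hx
      have : u x = 0 := by
        by_contra h0
        have := hR (subset_tsupport _ h0)
        simp only [Metric.mem_ball, dist_zero_right] at this
        linarith [le_max_left R 1]
      rw [this, add_zero]
      exact (min_le_right _ _).trans ((le_max_right R 1).trans hx'.le)
  obtain ⟨v, hv, hvd, hvs⟩ := huc.exists_contDiff_approx 1 (ε := fun _ => c / 2)
    continuous_const (fun _ => by positivity)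
  refine smooth_perturbation_hits_zero v hv (hcs.mono hvs) (c / 2) (by positivity) fun x => ?_
  have h1 := hcle x
  have h2 := hvd x
  rw [dist_eq_norm] at h2
  have h3 : ‖x + u x‖ ≤ ‖x + v x‖ + ‖v x - u x‖ := by
    have : x + u x = (x + v x) - (v x - u x) := by abel
    rw [this]; exact norm_sub_le _ _
  linarith

theorem surjective_of_eq_id_off_compact {F : Type*} [NormedAddCommGroup F] [NormedSpace ℝ F]
    [FiniteDimensional ℝ F] (f : F → F) (hf : Continuous f)
    (K : Set F) (hK : IsCompact K) (hid : ∀ x ∉ K, f x = x) :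
    Function.Surjective f := by
  let e : F ≃L[ℝ] EuclideanSpace ℝ (Fin (Module.finrank ℝ F)) :=
    ContinuousLinearEquiv.ofFinrankEq (by simp)
  have h := surjective_of_eq_id_off_compact_euclidean (fun x => e (f (e.symm x)))
    (by fun_prop) (e '' K) (hK.image e.continuous) (by
      intro x hx
      have : e.symm x ∉ K := fun h => hx ⟨_, h, by simp⟩
      simp [hid _ this])
  intro y
  obtain ⟨x, hx⟩ := h (e y)
  exact ⟨e.symm x, e.injective hx⟩

/-! ### Linking in finite dimensions -/

/-- A linking principle. Let `Φ` have gradient `g` in the sense of the upper second order bound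
`hdesc`. Suppose `Φ ≤ 0` on the boundary of the half cylinder of size `τ` spanned by the
coordinates with `¬ pos i` and the half line `ℝ≥0` in the coordinate `i₀`, and `β ≤ Φ` on the
sphere-like set `ν = ρ` in the affine space of the positive coordinates through `p`. Then `g` is
arbitrarily small somewhere on `{β ≤ Φ}`. Otherwise finitely many truncated gradient steps, which
fix the boundary of the half cylinder, would push the half cylinder below level `β`, while by
Brouwer's theorem its image still meets the sphere. -/
theorem exists_almost_critical_of_linking {ι : Type*} [Fintype ι] [DecidableEq ι]
    (pos : ι → Prop) [DecidablePred pos] (i₀ : ι) (hi₀ : pos i₀)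
    (Φ : (ι → ℂ) → ℝ) (g : (ι → ℂ) → ι → ℂ) (hΦ : Continuous Φ) (hg : Continuous g)
    (L : ℝ) (hL : 0 ≤ L)
    (hdesc : ∀ c v, Φ (c + v) ≤ Φ c + ∑ i, ((starRingEnd ℂ) (g c i) * v i).re
      + L * ∑ i, ‖v i‖ ^ 2)
    (ν : (ι → ℂ) → ℝ) (hν : Continuous ν)
    (hνe : ∀ (c : ι → ℂ) (s : ℝ), 0 ≤ s → c i₀ = s → (∀ i, pos i → i ≠ i₀ → c i = 0) → ν c = s)
    (p : ι → ℂ) (τ ρ : ℝ) (hρ : 0 < ρ) (hρτ : ρ < τ) (hp : ∀ i, ‖p i‖ < τ)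
    (β : ℝ) (hβ : 0 < β)
    (hbd0 : ∀ c : ι → ℂ, (∀ i, pos i → c i = 0) → Φ c ≤ 0)
    (hbdτ : ∀ c : ι → ℂ, (∀ i, pos i → i ≠ i₀ → c i = 0) → (∃ i, τ ≤ ‖c i‖) → Φ c ≤ 0)
    (hΓ : ∀ c : ι → ℂ, (∀ i, ¬ pos i → c i = p i) → ν c = ρ → β ≤ Φ c)
    (δ : ℝ) (hδ : 0 < δ) :
    ∃ c, β ≤ Φ c ∧ ∑ i, ‖g c i‖ ^ 2 ≤ δ := by
  by_contra hno
  push Not at hno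
  have hτ : 0 < τ := hρ.trans hρτ
  -- the gradient step `T` is cut off by `χ (Φ c)`, so it fixes `{Φ ≤ 0}`
  set η : ℝ := 1 / (2 * (L + 1)) with hη
  have hηpos : 0 < η := by positivity
  have hηL : L * η ≤ 1 / 2 := by
    rw [hη, mul_one_div, div_le_iff₀ (by positivity)]; linarith
  set χ : ℝ → ℝ := fun r => min 1 (max 0 (r / β)) with hχ
  have hχc : Continuous χ := by fun_prop
  have hχ0 : ∀ r, 0 ≤ χ r := fun r => le_min zero_le_one (le_max_left _ _)
  have hχ1 : ∀ r, χ r ≤ 1 := fun r => min_le_left _ _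
  have hχneg : ∀ r ≤ 0, χ r = 0 := by
    intro r hr
    have : r / β ≤ 0 := div_nonpos_of_nonpos_of_nonneg hr hβ.le
    simp [hχ, max_eq_left this]
  have hχbig : ∀ r, β ≤ r → χ r = 1 := by
    intro r hr
    have : 1 ≤ r / β := (one_le_div hβ).2 hr
    simp [hχ, this]
  set T : (ι → ℂ) → (ι → ℂ) := fun c i => c i - ((η * χ (Φ c) : ℝ) : ℂ) * g c i with hT
  have hTc : Continuous T := by
    refine continuous_pi fun i => ?_
    have h1 : Continuous fun c => g c i := (continuous_apply i).comp hg
    have h2 : Continuous fun c : ι → ℂ => c i := continuous_apply i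
    have h3 : Continuous fun c => ((η * χ (Φ c) : ℝ) : ℂ) :=
      Complex.continuous_ofReal.comp (continuous_const.mul (hχc.comp hΦ))
    exact h2.sub (h3.mul h1)
  have hstep : ∀ c, Φ (T c) ≤ Φ c - η / 2 * χ (Φ c) * ∑ i, ‖g c i‖ ^ 2 := by
    intro c
    set κ := η * χ (Φ c) with hκ
    have h := hdesc c (fun i => -((κ : ℂ) * g c i))
    have e1 : c + (fun i => -((κ : ℂ) * g c i)) = T c := by
      ext i; simp [hT, hκ, sub_eq_add_neg]
    have e2 : ∑ i, ((starRingEnd ℂ) (g c i) * -((κ : ℂ) * g c i)).re = -κ * ∑ i, ‖g c i‖ ^ 2 := by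
      rw [Finset.mul_sum]
      refine Finset.sum_congr rfl fun i _ => ?_
      have : (starRingEnd ℂ) (g c i) * -((κ : ℂ) * g c i) = ((-κ * ‖g c i‖ ^ 2 : ℝ) : ℂ) := by
        have := Complex.conj_mul' (g c i)
        push_cast
        linear_combination (-(κ : ℂ)) * this
      rw [this, Complex.ofReal_re]
    have e3 : ∑ i, ‖-((κ : ℂ) * g c i)‖ ^ 2 = κ ^ 2 * ∑ i, ‖g c i‖ ^ 2 := by
      rw [Finset.mul_sum]
      refine Finset.sum_congr rfl fun i _ => ?_
      rw [norm_neg, norm_mul, Complex.norm_real, mul_pow, Real.norm_eq_abs, sq_abs]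
    rw [e1, e2, e3] at h
    have hS : 0 ≤ ∑ i, ‖g c i‖ ^ 2 := by positivity
    have hκ0 : 0 ≤ κ := mul_nonneg hηpos.le (hχ0 _)
    have hκη : κ ≤ η := by
      have := mul_le_mul_of_nonneg_left (hχ1 (Φ c)) hηpos.le
      rwa [mul_one] at this
    have hLκ : L * κ ≤ 1 / 2 := (mul_le_mul_of_nonneg_left hκη hL).trans hηL
    have h5 : L * κ ^ 2 ≤ κ / 2 := by nlinarith
    have h6 := mul_le_mul_of_nonneg_right h5 hS
    have h7 : η / 2 * χ (Φ c) = κ / 2 := by rw [hκ]; ring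
    rw [h7]
    nlinarith
  have hmono : ∀ c, Φ (T c) ≤ Φ c := by
    intro c
    have : 0 ≤ η / 2 * χ (Φ c) * ∑ i, ‖g c i‖ ^ 2 :=
      mul_nonneg (mul_nonneg (by positivity) (hχ0 _)) (by positivity)
    linarith [hstep c]
  have hdrop : ∀ (n : ℕ) (c : ι → ℂ), β ≤ Φ (T^[n] c) → Φ (T^[n] c) ≤ Φ c - n * (η / 2 * δ) := by
    intro n
    induction n with
    | zero => intro c _; simp
    | succ n ih =>
      intro c hc
      rw [Function.iterate_succ_apply] at hc ⊢
      have h1 := ih (T c) hc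
      have hnn : 0 ≤ (n : ℝ) * (η / 2 * δ) := by positivity
      have h2 : β ≤ Φ c := by linarith [hmono c]
      have h3 := hstep c
      rw [hχbig _ h2, mul_one] at h3
      have h4 := mul_le_mul_of_nonneg_left (hno c h2).le (by positivity : 0 ≤ η / 2)
      push_cast
      linarith
  have hfix : ∀ (n : ℕ) (c : ι → ℂ), Φ c ≤ 0 → T^[n] c = c := by
    intro n c hc
    have : T c = c := by
      ext i; simp [hT, hχneg _ hc]
    exact Function.iterate_fixed this n
  -- `J` parametrizes the half space and `Q` is the half cylinder in it
  let J : ({i // ¬ pos i} → ℂ) × ℝ → (ι → ℂ) := fun x i => if h : pos i then (if i = i₀ then (x.2 : ℂ) else 0)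
    else x.1 ⟨i, h⟩
  have hJc : Continuous J := by
    refine continuous_pi fun i => ?_
    by_cases h : pos i
    · by_cases h' : i = i₀
      · simp only [J, h', if_true, hi₀, dif_pos]
        fun_prop
      · simp only [J, h, h', dif_pos, if_false]
        fun_prop
    · simp only [J, h, dif_neg, not_false_iff]
      fun_prop
  have hJ0 : ∀ x i, pos i → i ≠ i₀ → J x i = 0 := by
    intro x i h h'; simp [J, h, h']
  have hJi₀ : ∀ x, J x i₀ = x.2 := by intro x; simp [J, hi₀]
  have hJneg : ∀ x i (h : ¬ pos i), J x i = x.1 ⟨i, h⟩ := by intro x i h; simp [J, h]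
  let Q : Set (({i // ¬ pos i} → ℂ) × ℝ) := Metric.closedBall 0 τ ×ˢ Icc 0 τ
  have hQc : IsCompact Q := (isCompact_closedBall _ _).prod isCompact_Icc
  obtain ⟨M, hM⟩ := hQc.exists_bound_of_continuousOn (hΦ.comp hJc).continuousOn
  obtain ⟨n, hn⟩ := exists_nat_gt ((M - β) / (η / 2 * δ))
  rw [div_lt_iff₀ (by positivity)] at hn
  let G : ({i // ¬ pos i} → ℂ) × ℝ → ({i // ¬ pos i} → ℂ) × ℝ := fun x => (fun i => (T^[n] (J x)) i, ν (T^[n] (J x)))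
  have hGc : Continuous G := by
    have h1 : Continuous fun x => T^[n] (J x) := (hTc.iterate n).comp hJc
    refine Continuous.prodMk ?_ (hν.comp h1)
    exact continuous_pi fun i => (continuous_apply _).comp h1
  have hGfr : ∀ x ∈ frontier Q, G x = x := by
    intro x hx
    have hxQ : x ∈ Q := hQc.isClosed.frontier_subset hx
    obtain ⟨hx1, hx2⟩ := hxQ
    have hΦx : Φ (J x) ≤ 0 := by
      by_contra hpos
      push Not at hpos
      apply hx.2
      rw [mem_interior]
      refine ⟨Metric.ball 0 τ ×ˢ Ioo 0 τ, Set.prod_mono Metric.ball_subset_closedBall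
        Ioo_subset_Icc_self, Metric.isOpen_ball.prod isOpen_Ioo, ?_, ?_, ?_⟩
      · rw [mem_ball_zero_iff, pi_norm_lt_iff hτ]
        intro i
        by_contra hle
        push Not at hle
        have := hbdτ (J x) (hJ0 x) ⟨i.1, by rw [hJneg x i.1 i.2]; exact hle⟩
        linarith
      · rcases hx2.1.eq_or_lt with h | h
        · have := hbd0 (J x) (fun i hi => by
            by_cases h' : i = i₀
            · rw [h', hJi₀, ← h]; simp
            · exact hJ0 x i hi h')
          linarith
        · exact h
      · by_contra hle
        push Not at hle
        have := hbdτ (J x) (hJ0 x) ⟨i₀, by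
          rw [hJi₀, Complex.norm_real]; exact hle.trans (le_abs_self _)⟩
        linarith
    have hf := hfix n _ hΦx
    refine Prod.ext ?_ ?_
    · ext i
      simp only [G, hf]
      rw [hJneg x i.1 i.2]
    · simp only [G, hf]
      exact hνe _ _ hx2.1 (hJi₀ x) (hJ0 x)
  classical
  have hsurj := surjective_of_eq_id_off_compact (Q.piecewise G id)
    (hGc.piecewise (fun x hx => hGfr x hx) continuous_id) Q hQc
    (fun x hx => by simp [Set.piecewise, hx])
  obtain ⟨x, hx⟩ := hsurj (fun i => p i, ρ)
  have hxQ : x ∈ Q := by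
    by_contra hxn
    rw [Set.piecewise_eq_of_notMem _ _ _ hxn] at hx
    apply hxn
    rw [id] at hx
    rw [hx]
    refine ⟨?_, hρ.le, hρτ.le⟩
    rw [mem_closedBall_zero_iff, pi_norm_le_iff_of_nonneg hτ.le]
    exact fun i => (hp i).le
  rw [Set.piecewise_eq_of_mem _ _ _ hxQ] at hx
  have hx1 := congrArg Prod.fst hx
  have hx2 := congrArg Prod.snd hx
  have hβn : β ≤ Φ (T^[n] (J x)) :=
    hΓ _ (fun i hi => congrFun hx1 ⟨i, hi⟩) hx2
  have h1 := hdrop n _ hβn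
  have h2 : Φ (J x) ≤ M := (le_abs_self _).trans (hM x hxQ)
  linarith

/-! ### Trigonometric polynomials -/

/-- The character `t ↦ e^{2πikt}` of `ℝ/ℤ`. -/
def ee (k : ℤ) (t : ℝ) : ℂ := Complex.exp (2 * π * Complex.I * k * t)

lemma ee_add (k l : ℤ) (t : ℝ) : ee (k + l) t = ee k t * ee l t := by
  rw [ee, ee, ee, ← Complex.exp_add]; congr 1; push_cast; ring

lemma ee_zero (t : ℝ) : ee 0 t = 1 := by simp [ee]

lemma ee_eq_exp_mul_I (k : ℤ) (t : ℝ) : ee k t = Complex.exp ((2 * π * k * t : ℝ) * Complex.I) := by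
  rw [ee]; congr 1; push_cast; ring

lemma norm_ee (k : ℤ) (t : ℝ) : ‖ee k t‖ = 1 := by
  rw [ee_eq_exp_mul_I, Complex.norm_exp_ofReal_mul_I]

lemma conj_ee (k : ℤ) (t : ℝ) : (starRingEnd ℂ) (ee k t) = ee (-k) t := by
  rw [ee, ← Complex.exp_conj, ee]; congr 1
  rw [map_mul, map_mul, map_mul, map_mul, Complex.conj_I, Complex.conj_ofReal, Complex.conj_ofReal,
    map_intCast, map_ofNat]
  push_cast; ring

lemma continuous_ee (k : ℤ) : Continuous (ee k) := by
  unfold ee; fun_prop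

lemma ee_periodic (k : ℤ) (t : ℝ) : ee k (t + 1) = ee k t := by
  rw [ee, ee]
  have : 2 * (π : ℂ) * Complex.I * k * ((t + 1 : ℝ) : ℂ) =
    2 * π * Complex.I * k * t + k * (2 * π * Complex.I) := by push_cast; ring
  rw [this, Complex.exp_add, Complex.exp_int_mul_two_pi_mul_I, mul_one]

lemma integral_ee (k : ℤ) : ∫ t in (0 : ℝ)..1, ee k t = if k = 0 then 1 else 0 := by
  by_cases hk : k = 0
  · simp [hk, ee_zero]
  · have h0 : 2 * (π : ℂ) * Complex.I * k ≠ 0 := by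
      simp [hk, Real.pi_ne_zero]
    have := integral_exp_mul_complex (a := 0) (b := 1) h0
    simp only [ee, hk, if_false]
    rw [this]
    have h1 := ee_periodic k 0
    simp only [ee, zero_add] at h1
    rw [h1]; simp

lemma integral_conj_ee_mul (k l : ℤ) :
    ∫ t in (0 : ℝ)..1, (starRingEnd ℂ) (ee k t) * ee l t = if k = l then 1 else 0 := by
  have : ∀ t, (starRingEnd ℂ) (ee k t) * ee l t = ee (-k + l) t := fun t => by
    rw [conj_ee, ee_add]
  simp_rw [this, integral_ee]
  congr 1
  rw [neg_add_eq_zero]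

/-- Parseval's identity for trigonometric polynomials. -/
lemma parseval_trig (S : Finset ℤ) (c : ℤ → ℂ) :
    ∫ t in (0 : ℝ)..1, ‖∑ k ∈ S, c k * ee k t‖ ^ 2 = ∑ k ∈ S, ‖c k‖ ^ 2 := by
  have h : ∫ t in (0 : ℝ)..1, (starRingEnd ℂ) (∑ k ∈ S, c k * ee k t) * (∑ k ∈ S, c k * ee k t)
      = ∑ k ∈ S, ((‖c k‖ ^ 2 : ℝ) : ℂ) := by
    have e : ∀ t, (starRingEnd ℂ) (∑ k ∈ S, c k * ee k t) * (∑ k ∈ S, c k * ee k t) =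
        ∑ k ∈ S, ∑ l ∈ S, ((starRingEnd ℂ) (c k) * c l) * ((starRingEnd ℂ) (ee k t) * ee l t) := by
      intro t
      rw [map_sum, Finset.sum_mul_sum]
      refine Finset.sum_congr rfl fun k _ => Finset.sum_congr rfl fun l _ => ?_
      rw [map_mul]; ring
    simp_rw [e]
    have hc : ∀ k l, Continuous fun t =>
        ((starRingEnd ℂ) (c k) * c l) * ((starRingEnd ℂ) (ee k t) * ee l t) := by
      intro k l
      have h1 := continuous_ee k
      have h2 := continuous_ee l
      exact continuous_const.mul ((Complex.continuous_conj.comp h1).mul h2)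
    rw [intervalIntegral.integral_finsetSum (fun k _ =>
      (continuous_finsetSum _ fun l _ => hc k l).intervalIntegrable _ _)]
    refine Finset.sum_congr rfl fun k hk => ?_
    rw [intervalIntegral.integral_finsetSum (fun l _ => (hc k l).intervalIntegrable _ _)]
    simp_rw [intervalIntegral.integral_const_mul, integral_conj_ee_mul]
    simp only [mul_ite, mul_one, mul_zero, Finset.sum_ite_eq, hk, if_true]
    rw [Complex.conj_mul']; push_cast; rfl
  simp_rw [Complex.conj_mul'] at h
  have h2 : ∫ t in (0 : ℝ)..1, ((‖∑ k ∈ S, c k * ee k t‖ ^ 2 : ℝ) : ℂ) =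
      ((∑ k ∈ S, ‖c k‖ ^ 2 : ℝ) : ℂ) := by
    push_cast at h ⊢; exact h
  rw [intervalIntegral.integral_ofReal] at h2
  exact_mod_cast h2

/-- `H^{1/2} ⊆ L⁴` for trigonometric polynomials with positive frequencies. -/
lemma integral_norm_pow_four_le (S : Finset ℤ) (hS : ∀ k ∈ S, 1 ≤ k) (c : ℤ → ℂ) :
    ∫ t in (0 : ℝ)..1, ‖∑ k ∈ S, c k * ee k t‖ ^ 4 ≤ 2 * (∑ k ∈ S, k * ‖c k‖ ^ 2) ^ 2 := by
  classical
  set M := (S ×ˢ S).image (fun x => x.1 + x.2) with hM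
  set P : ℤ → Finset (ℤ × ℤ) := fun m => (S ×ˢ S).filter (fun x => x.1 + x.2 = m) with hP
  set d : ℤ → ℂ := fun m => ∑ x ∈ P m, c x.1 * c x.2 with hd
  have hmaps : ∀ x ∈ S ×ˢ S, x.1 + x.2 ∈ M := fun x hx => Finset.mem_image_of_mem _ hx
  have hsq : ∀ t, (∑ k ∈ S, c k * ee k t) ^ 2 = ∑ m ∈ M, d m * ee m t := by
    intro t
    rw [sq, Finset.sum_mul_sum, ← Finset.sum_product', ← Finset.sum_fiberwise_of_maps_to hmaps]
    refine Finset.sum_congr rfl fun m _ => ?_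
    rw [hd, Finset.sum_mul]
    refine Finset.sum_congr rfl fun x hx => ?_
    have : x.1 + x.2 = m := (Finset.mem_filter.1 hx).2
    rw [← this, ee_add]; ring
  have h4 : ∀ t, ‖∑ k ∈ S, c k * ee k t‖ ^ 4 = ‖∑ m ∈ M, d m * ee m t‖ ^ 2 := by
    intro t; rw [← hsq, norm_pow]; ring
  simp_rw [h4]
  rw [parseval_trig]
  have hPS : ∀ m, ∀ x ∈ P m, 1 ≤ x.1 ∧ 1 ≤ x.2 ∧ x.1 + x.2 = m := by
    intro m x hx
    obtain ⟨h1, h2⟩ := Finset.mem_filter.1 hx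
    obtain ⟨h3, h4⟩ := Finset.mem_product.1 h1
    exact ⟨hS _ h3, hS _ h4, h2⟩
  have hbound : ∀ m ∈ M, ‖d m‖ ^ 2 ≤
      2 * ∑ x ∈ P m, ((x.1 : ℝ) * ‖c x.1‖ ^ 2) * ((x.2 : ℝ) * ‖c x.2‖ ^ 2) := by
    intro m _
    have h1 : ‖d m‖ ≤ ∑ x ∈ P m, ‖c x.1‖ * ‖c x.2‖ := by
      refine (norm_sum_le _ _).trans (le_of_eq ?_)
      simp only [norm_mul]
    have h2 : (∑ x ∈ P m, ‖c x.1‖ * ‖c x.2‖) ^ 2 ≤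
        (∑ x ∈ P m, 1 / ((x.1 : ℝ) * x.2)) *
        ∑ x ∈ P m, ((x.1 : ℝ) * ‖c x.1‖ ^ 2) * ((x.2 : ℝ) * ‖c x.2‖ ^ 2) := by
      apply Finset.sum_sq_le_sum_mul_sum_of_sq_le_mul
      · intro x hx
        obtain ⟨h1, h2, _⟩ := hPS m x hx
        have h1' : (1 : ℝ) ≤ x.1 := by exact_mod_cast h1
        have h2' : (1 : ℝ) ≤ x.2 := by exact_mod_cast h2
        positivity
      · intro x hx
        obtain ⟨h1, h2, _⟩ := hPS m x hx
        have h1' : (1 : ℝ) ≤ x.1 := by exact_mod_cast h1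
        have h2' : (1 : ℝ) ≤ x.2 := by exact_mod_cast h2
        positivity
      · intro x hx
        obtain ⟨h1, h2, _⟩ := hPS m x hx
        have h1' : (1 : ℝ) ≤ x.1 := by exact_mod_cast h1
        have h2' : (1 : ℝ) ≤ x.2 := by exact_mod_cast h2
        apply le_of_eq
        field_simp
    -- `1/(kl) ≤ 2/(k+l)`, and there are fewer than `m` pairs with `k + l = m`
    have h3 : ∑ x ∈ P m, 1 / ((x.1 : ℝ) * x.2) ≤ 2 := by
      rcases (P m).eq_empty_or_nonempty with he | ⟨x0, hx0⟩
      · rw [he]; simp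
      obtain ⟨a1, a2, a3⟩ := hPS m x0 hx0
      have hm : (2 : ℤ) ≤ m := by omega
      have hm' : (2 : ℝ) ≤ m := by exact_mod_cast hm
      have hcard : ((P m).card : ℝ) ≤ m := by
        have : (P m).card ≤ (Finset.Icc 1 m).card := by
          refine Finset.card_le_card_of_injOn Prod.fst ?_ ?_
          · intro x hx
            obtain ⟨b1, b2, b3⟩ := hPS m x hx
            simp only [Finset.coe_Icc, mem_Icc]
            omega
          · intro x hx y hy hxy
            obtain ⟨b1, b2, b3⟩ := hPS m x hx
            obtain ⟨b1', b2', b3'⟩ := hPS m y hy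
            exact Prod.ext hxy (by omega)
        rw [Int.card_Icc] at this
        have h' : ((P m).card : ℤ) ≤ m := by omega
        exact_mod_cast h'
      have hle : ∀ x ∈ P m, 1 / ((x.1 : ℝ) * x.2) ≤ 2 / m := by
        intro x hx
        obtain ⟨b1, b2, b3⟩ := hPS m x hx
        have h1' : (1 : ℝ) ≤ x.1 := by exact_mod_cast b1
        have h2' : (1 : ℝ) ≤ x.2 := by exact_mod_cast b2
        have h3' : (m : ℝ) = x.1 + x.2 := by exact_mod_cast b3.symm
        rw [div_le_div_iff₀ (by positivity) (by positivity), h3']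
        nlinarith
      calc ∑ x ∈ P m, 1 / ((x.1 : ℝ) * x.2) ≤ ∑ x ∈ P m, 2 / (m : ℝ) := Finset.sum_le_sum hle
        _ = (P m).card * (2 / m) := by rw [Finset.sum_const, nsmul_eq_mul]
        _ ≤ m * (2 / m) := by gcongr
        _ = 2 := by field_simp
    have h5 : 0 ≤ ∑ x ∈ P m, ((x.1 : ℝ) * ‖c x.1‖ ^ 2) * ((x.2 : ℝ) * ‖c x.2‖ ^ 2) := by
      refine Finset.sum_nonneg fun x hx => ?_
      obtain ⟨h1, h2, _⟩ := hPS m x hx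
      have h1' : (1 : ℝ) ≤ x.1 := by exact_mod_cast h1
      have h2' : (1 : ℝ) ≤ x.2 := by exact_mod_cast h2
      positivity
    calc ‖d m‖ ^ 2 ≤ (∑ x ∈ P m, ‖c x.1‖ * ‖c x.2‖) ^ 2 := by gcongr
      _ ≤ _ := h2
      _ ≤ _ := mul_le_mul_of_nonneg_right h3 h5
  refine (Finset.sum_le_sum hbound).trans (le_of_eq ?_)
  rw [← Finset.mul_sum]
  congr 1
  rw [Finset.sum_fiberwise_of_maps_to (g := fun x : ℤ × ℤ => x.1 + x.2) hmaps
    (f := fun x : ℤ × ℤ => ((x.1 : ℝ) * ‖c x.1‖ ^ 2) * ((x.2 : ℝ) * ‖c x.2‖ ^ 2)),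
    sq, Finset.sum_mul_sum, ← Finset.sum_product']

/-! ### The action functional on trigonometric polynomials -/

/-- The loop in `ℂ²` with Fourier coefficients `C k`, `k ∈ S`. -/
def loopS (S : Finset ℤ) (C : ℤ → Fin 2 → ℂ) (t : ℝ) : Fin 2 → ℂ :=
  fun j => ∑ k ∈ S, C k j * ee k t

/-- The `k`-th Fourier coefficient of a `1`-periodic function. -/
def fc (y : ℝ → ℂ) (k : ℤ) : ℂ := ∫ t in (0 : ℝ)..1, y t * (starRingEnd ℂ) (ee k t)

lemma continuous_conj_ee (k : ℤ) : Continuous fun t => (starRingEnd ℂ) (ee k t) :=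
  Complex.continuous_conj.comp (continuous_ee k)

lemma continuous_loopS (S : Finset ℤ) (C : ℤ → Fin 2 → ℂ) : Continuous (loopS S C) := by
  refine continuous_pi fun j => continuous_finsetSum _ fun k _ => ?_
  exact continuous_const.mul (continuous_ee k)

lemma loopS_add (S : Finset ℤ) (C D : ℤ → Fin 2 → ℂ) (t : ℝ) :
    loopS S (C + D) t = loopS S C t + loopS S D t := by
  ext j
  simp only [loopS, Pi.add_apply, add_mul, Finset.sum_add_distrib]

lemma integral_re_eq {f : ℝ → ℂ} (hf : Continuous f) :
    ∫ t in (0 : ℝ)..1, (f t).re = (∫ t in (0 : ℝ)..1, f t).re := by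
  exact (Complex.reCLM.intervalIntegral_comp_comm (hf.intervalIntegrable 0 1))

lemma integral_conj_eq {f : ℝ → ℂ} :
    ∫ t in (0 : ℝ)..1, (starRingEnd ℂ) (f t) = (starRingEnd ℂ) (∫ t in (0 : ℝ)..1, f t) := by
  rw [intervalIntegral.integral_of_le zero_le_one, intervalIntegral.integral_of_le zero_le_one,
    integral_conj]

lemma integral_inner_trig (S : Finset ℤ) (v : ℤ → ℂ) {y : ℝ → ℂ} (hy : Continuous y) :
    ∫ t in (0 : ℝ)..1, ((starRingEnd ℂ) (y t) * ∑ k ∈ S, v k * ee k t).re =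
      ∑ k ∈ S, ((starRingEnd ℂ) (fc y k) * v k).re := by
  have hcy : Continuous fun t => (starRingEnd ℂ) (y t) := Complex.continuous_conj.comp hy
  have hc : ∀ k, Continuous fun t => (starRingEnd ℂ) (y t) * (v k * ee k t) := fun k =>
    hcy.mul (continuous_const.mul (continuous_ee k))
  simp_rw [Finset.mul_sum]
  rw [integral_re_eq (continuous_finsetSum _ fun k _ => hc k),
    intervalIntegral.integral_finsetSum (fun k _ => (hc k).intervalIntegrable _ _), Complex.re_sum]
  refine Finset.sum_congr rfl fun k _ => ?_
  congr 1
  rw [fc, ← integral_conj_eq, ← intervalIntegral.integral_mul_const]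
  congr 1; ext t
  rw [map_mul, Complex.conj_conj]; ring

/-- Bessel's inequality. -/
lemma bessel_fc (S : Finset ℤ) {y : ℝ → ℂ} (hy : Continuous y) :
    ∑ k ∈ S, ‖fc y k‖ ^ 2 ≤ ∫ t in (0 : ℝ)..1, ‖y t‖ ^ 2 := by
  have h1 := integral_inner_trig S (fc y) hy
  have h2 := parseval_trig S (fc y)
  have h3 : ∑ k ∈ S, ((starRingEnd ℂ) (fc y k) * fc y k).re = ∑ k ∈ S, ‖fc y k‖ ^ 2 := by
    refine Finset.sum_congr rfl fun k _ => ?_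
    rw [Complex.conj_mul']; norm_cast
  rw [h3] at h1
  set Y : ℝ → ℂ := fun t => ∑ k ∈ S, fc y k * ee k t with hY
  have hYc : Continuous Y := continuous_finsetSum _ fun k _ => continuous_const.mul (continuous_ee k)
  have hcy : Continuous fun t => (starRingEnd ℂ) (y t) := Complex.continuous_conj.comp hy
  have h4 : ∫ t in (0 : ℝ)..1, ((starRingEnd ℂ) (y t) * Y t).re ≤
      ∫ t in (0 : ℝ)..1, ((1 / 2) * ‖y t‖ ^ 2 + (1 / 2) * ‖Y t‖ ^ 2) := by
    apply intervalIntegral.integral_mono zero_le_one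
    · exact (Complex.continuous_re.comp (hcy.mul hYc)).intervalIntegrable _ _
    · exact ((continuous_const.mul (hy.norm.pow 2)).add
        (continuous_const.mul (hYc.norm.pow 2))).intervalIntegrable _ _
    · intro t
      have := Complex.re_le_norm ((starRingEnd ℂ) (y t) * Y t)
      rw [norm_mul, RCLike.norm_conj] at this
      simp only
      nlinarith [sq_nonneg (‖y t‖ - ‖Y t‖)]
  have i1 : IntervalIntegrable (fun t => 1 / 2 * ‖y t‖ ^ 2) volume 0 1 :=
    (continuous_const.mul (hy.norm.pow 2)).intervalIntegrable _ _
  have i2 : IntervalIntegrable (fun t => 1 / 2 * ‖Y t‖ ^ 2) volume 0 1 :=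
    (continuous_const.mul (hYc.norm.pow 2)).intervalIntegrable _ _
  rw [intervalIntegral.integral_add i1 i2,
    intervalIntegral.integral_const_mul, intervalIntegral.integral_const_mul] at h4
  linarith

/-- The properties of the perturbation `K` of the quadratic form `π ∑ λⱼ |zⱼ|²` and of its
gradient `G` on which the variational argument relies; `p` is a point near which
`H = π ∑ λⱼ |zⱼ|² + K` vanishes. -/
structure HamData (lam : Fin 2 → ℝ) (K : (Fin 2 → ℂ) → ℝ) (G : (Fin 2 → ℂ) → (Fin 2 → ℂ))
    (p : Fin 2 → ℂ) (M L A : ℝ) : Prop where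
  lam0 : 1 < lam 0 ∧ lam 0 < 2
  lam1 : 0 < lam 1 ∧ lam 1 < 1
  contK : Continuous K
  contG : Continuous G
  boundK : ∀ z, |K z| ≤ M
  boundG : ∀ z j, ‖G z j‖ ≤ M
  taylor : ∀ z w, K z + ∑ j, ((starRingEnd ℂ) (G z j) * w j).re - L * ∑ j, ‖w j‖ ^ 2 ≤ K (z + w)
  L_nonneg : 0 ≤ L
  H_nonneg : ∀ z, 0 ≤ ∑ j, π * lam j * ‖z j‖ ^ 2 + K z
  A_pos : 0 < A
  H_quartic : ∀ z, ∑ j, π * lam j * ‖(p + z) j‖ ^ 2 + K (p + z) ≤ A * ∑ j, ‖z j‖ ^ 4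

/-- The action functional restricted to trigonometric polynomials with frequencies in `S`. -/
def actS (lam : Fin 2 → ℝ) (K : (Fin 2 → ℂ) → ℝ) (S : Finset ℤ) (C : ℤ → Fin 2 → ℂ) : ℝ :=
  ∑ k ∈ S, ∑ j, π * (k - lam j) * ‖C k j‖ ^ 2 - ∫ t in (0 : ℝ)..1, K (loopS S C t)

/-- The gradient of `actS` with respect to the Fourier coefficients. -/
def gradS (lam : Fin 2 → ℝ) (G : (Fin 2 → ℂ) → (Fin 2 → ℂ)) (S : Finset ℤ) (C : ℤ → Fin 2 → ℂ)
    (k : ℤ) (j : Fin 2) : ℂ :=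
  2 * π * (k - lam j) * C k j - fc (fun t => G (loopS S C t) j) k

section
variable {lam : Fin 2 → ℝ} {K : (Fin 2 → ℂ) → ℝ} {G : (Fin 2 → ℂ) → (Fin 2 → ℂ)}
  {p : Fin 2 → ℂ} {M L A : ℝ}

lemma integral_loopS_sq (S : Finset ℤ) (C : ℤ → Fin 2 → ℂ) (j : Fin 2) :
    ∫ t in (0 : ℝ)..1, ‖loopS S C t j‖ ^ 2 = ∑ k ∈ S, ‖C k j‖ ^ 2 :=
  parseval_trig S (fun k => C k j)

lemma norm_add_sq_complex (c v : ℂ) :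
    ‖c + v‖ ^ 2 = ‖c‖ ^ 2 + 2 * ((starRingEnd ℂ) c * v).re + ‖v‖ ^ 2 := by
  rw [Complex.sq_norm, Complex.sq_norm, Complex.sq_norm, Complex.normSq_add]
  have : (c * (starRingEnd ℂ) v).re = ((starRingEnd ℂ) c * v).re := by
    simp [Complex.mul_re]
  rw [this]; ring

/-- The upper second order bound for `actS` at a fixed truncation. -/
lemma HamData.actS_add_le (h : HamData lam K G p M L A) (N : ℕ) (C V : ℤ → Fin 2 → ℂ) :
    actS lam K (Finset.Icc (-N : ℤ) N) (C + V) ≤ actS lam K (Finset.Icc (-N : ℤ) N) C +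
      ∑ k ∈ Finset.Icc (-N : ℤ) N, ∑ j,
        ((starRingEnd ℂ) (gradS lam G (Finset.Icc (-N : ℤ) N) C k j) * V k j).re +
      (π * N + L) * ∑ k ∈ Finset.Icc (-N : ℤ) N, ∑ j, ‖V k j‖ ^ 2 := by
  set S := Finset.Icc (-N : ℤ) N with hS
  have hlam : ∀ j, 0 < lam j := by
    intro j; fin_cases j
    · exact zero_lt_one.trans h.lam0.1
    · exact h.lam1.1
  have cx := continuous_loopS S C
  have cv := continuous_loopS S V
  have cG : ∀ j, Continuous fun t => G (loopS S C t) j := fun j =>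
    (continuous_apply j).comp (h.contG.comp cx)
  have cvj : ∀ j, Continuous fun t => loopS S V t j := fun j => (continuous_apply j).comp cv
  have cin : ∀ j, Continuous fun t => ((starRingEnd ℂ) (G (loopS S C t) j) * loopS S V t j).re :=
    fun j => Complex.continuous_re.comp ((Complex.continuous_conj.comp (cG j)).mul (cvj j))
  -- the part coming from `K`
  have h1 : (∫ t in (0 : ℝ)..1, K (loopS S C t)) +
      ∑ j, ∑ k ∈ S, ((starRingEnd ℂ) (fc (fun t => G (loopS S C t) j) k) * V k j).re -
      L * ∑ j, ∑ k ∈ S, ‖V k j‖ ^ 2 ≤ ∫ t in (0 : ℝ)..1, K (loopS S (C + V) t) := by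
    have e : (∫ t in (0 : ℝ)..1, (K (loopS S C t) +
        ∑ j, ((starRingEnd ℂ) (G (loopS S C t) j) * loopS S V t j).re -
        L * ∑ j, ‖loopS S V t j‖ ^ 2)) = (∫ t in (0 : ℝ)..1, K (loopS S C t)) +
      ∑ j, ∑ k ∈ S, ((starRingEnd ℂ) (fc (fun t => G (loopS S C t) j) k) * V k j).re -
      L * ∑ j, ∑ k ∈ S, ‖V k j‖ ^ 2 := by
      rw [intervalIntegral.integral_sub, intervalIntegral.integral_add,
        intervalIntegral.integral_const_mul, intervalIntegral.integral_finsetSum,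
        intervalIntegral.integral_finsetSum]
      · congr 2
        · refine Finset.sum_congr rfl fun j _ => ?_
          exact integral_inner_trig S (fun k => V k j) (cG j)
        · refine Finset.sum_congr rfl fun j _ => ?_
          exact integral_loopS_sq S V j
      · intro j _; exact ((cvj j).norm.pow 2).intervalIntegrable _ _
      · intro j _; exact (cin j).intervalIntegrable _ _
      · exact (h.contK.comp cx).intervalIntegrable _ _
      · exact (continuous_finsetSum _ fun j _ => cin j).intervalIntegrable _ _
      · exact ((h.contK.comp cx).add
          (continuous_finsetSum _ fun j _ => cin j)).intervalIntegrable _ _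
      · exact (continuous_const.mul (continuous_finsetSum _ fun j _ =>
          (cvj j).norm.pow 2)).intervalIntegrable _ _
    rw [← e]
    apply intervalIntegral.integral_mono zero_le_one
    · exact (((h.contK.comp cx).add (continuous_finsetSum _ fun j _ => cin j)).sub
        (continuous_const.mul (continuous_finsetSum _ fun j _ =>
          (cvj j).norm.pow 2))).intervalIntegrable _ _
    · exact (h.contK.comp (continuous_loopS S _)).intervalIntegrable _ _
    · intro t
      simp only
      rw [loopS_add]
      exact h.taylor _ _
  -- the quadratic part
  have h2 : ∑ k ∈ S, ∑ j, π * (k - lam j) * ‖(C + V) k j‖ ^ 2 ≤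
      ∑ k ∈ S, ∑ j, (π * (k - lam j) * ‖C k j‖ ^ 2 +
        ((starRingEnd ℂ) (2 * π * (k - lam j) * C k j) * V k j).re + π * N * ‖V k j‖ ^ 2) := by
    refine Finset.sum_le_sum fun k hk => Finset.sum_le_sum fun j _ => ?_
    have hk' : (k : ℝ) ≤ N := by exact_mod_cast (Finset.mem_Icc.1 hk).2
    have e2 : ((starRingEnd ℂ) (2 * π * (k - lam j) * C k j) * V k j).re =
        2 * (π * (k - lam j)) * ((starRingEnd ℂ) (C k j) * V k j).re := by
      have : (2 * π * (k - lam j) * C k j : ℂ) = ((2 * (π * (k - lam j)) : ℝ) : ℂ) * C k j := by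
        push_cast; ring
      rw [this, map_mul, Complex.conj_ofReal, mul_assoc, Complex.re_ofReal_mul]
    rw [e2, Pi.add_apply, Pi.add_apply, norm_add_sq_complex]
    have : π * (k - lam j) * ‖V k j‖ ^ 2 ≤ π * N * ‖V k j‖ ^ 2 := by
      have := hlam j
      gcongr
      linarith
    linarith
  simp only [Finset.sum_add_distrib] at h2
  simp only [actS, gradS]
  simp only [map_sub, sub_mul, Complex.sub_re, Finset.sum_sub_distrib]
  rw [Finset.sum_comm (s := S) (f := fun k j =>
    ((starRingEnd ℂ) (fc (fun t => G (loopS S C t) j) k) * V k j).re), add_mul]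
  rw [Finset.sum_comm (s := Finset.univ) (t := S) (f := fun j k => ‖V k j‖ ^ 2)] at h1
  have h3 : ∑ k ∈ S, ∑ j, π * N * ‖V k j‖ ^ 2 = π * N * ∑ k ∈ S, ∑ j, ‖V k j‖ ^ 2 := by
    simp_rw [← Finset.mul_sum]
  linarith

end

/-! ### The geometry of the action functional -/

section
variable {lam : Fin 2 → ℝ} {K : (Fin 2 → ℂ) → ℝ} {G : (Fin 2 → ℂ) → (Fin 2 → ℂ)}
  {p : Fin 2 → ℂ} {M L A : ℝ}

lemma HamData.lam_pos (h : HamData lam K G p M L A) (j : Fin 2) : 0 < lam j := by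
  fin_cases j
  · exact zero_lt_one.trans h.lam0.1
  · exact h.lam1.1

/-- The action functional is `∑ π k |C k|² - ∫ H` with `H = π ∑ λⱼ |zⱼ|² + K`. -/
lemma HamData.actS_eq (h : HamData lam K G p M L A) (S : Finset ℤ) (C : ℤ → Fin 2 → ℂ) :
    actS lam K S C = ∑ k ∈ S, ∑ j, π * k * ‖C k j‖ ^ 2 -
      ∫ t in (0 : ℝ)..1, (∑ j, π * lam j * ‖loopS S C t j‖ ^ 2 + K (loopS S C t)) := by
  have cx := continuous_loopS S C
  have cxj : ∀ j, Continuous fun t => π * lam j * ‖loopS S C t j‖ ^ 2 := fun j =>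
    continuous_const.mul (((continuous_apply j).comp cx).norm.pow 2)
  rw [intervalIntegral.integral_add, intervalIntegral.integral_finsetSum]
  · simp_rw [intervalIntegral.integral_const_mul, integral_loopS_sq]
    rw [actS, ← sub_sub]
    congr 1
    simp_rw [Finset.mul_sum]
    rw [Finset.sum_comm (s := Finset.univ), ← Finset.sum_sub_distrib]
    refine Finset.sum_congr rfl fun k _ => ?_
    rw [← Finset.sum_sub_distrib]
    refine Finset.sum_congr rfl fun j _ => ?_
    ring
  · intro j _; exact (cxj j).intervalIntegrable _ _
  · exact (continuous_finsetSum _ fun j _ => cxj j).intervalIntegrable _ _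
  · exact (h.contK.comp cx).intervalIntegrable _ _

lemma HamData.actS_nonpos (h : HamData lam K G p M L A) (S : Finset ℤ) (C : ℤ → Fin 2 → ℂ)
    (hC : ∀ k ∈ S, ∀ j, 0 < k → C k j = 0) : actS lam K S C ≤ 0 := by
  rw [h.actS_eq]
  have h1 : 0 ≤ ∫ t in (0 : ℝ)..1, (∑ j, π * lam j * ‖loopS S C t j‖ ^ 2 + K (loopS S C t)) :=
    intervalIntegral.integral_nonneg zero_le_one fun t _ => h.H_nonneg _
  have h2 : ∑ k ∈ S, ∑ j, π * k * ‖C k j‖ ^ 2 ≤ 0 := by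
    refine Finset.sum_nonpos fun k hk => Finset.sum_nonpos fun j _ => ?_
    by_cases hk0 : 0 < k
    · rw [hC k hk j hk0]; simp
    · have : (k : ℝ) ≤ 0 := by exact_mod_cast not_lt.1 hk0
      have := mul_nonneg Real.pi_pos.le (sq_nonneg ‖C k j‖)
      nlinarith
  linarith

lemma HamData.abs_integral_K_le (h : HamData lam K G p M L A) (S : Finset ℤ)
    (C : ℤ → Fin 2 → ℂ) : |∫ t in (0 : ℝ)..1, K (loopS S C t)| ≤ M := by
  have := intervalIntegral.norm_integral_le_of_norm_le_const (a := 0) (b := 1) (C := M)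
    (f := fun t => K (loopS S C t)) (fun t _ => h.boundK _)
  simpa using this

/-- A coefficient bound making `actS` coercive on the half space used for linking: the
eigenvalues `k - λⱼ` with `k ≤ 0`, or `k = 1` and `j = 0`, are bounded away from zero. -/
lemma HamData.actS_le_of_large (h : HamData lam K G p M L A) (S : Finset ℤ) (C : ℤ → Fin 2 → ℂ)
    (hC : ∀ k ∈ S, ∀ j, 0 < k → (k = 1 ∧ j = 0) ∨ C k j = 0) (d : ℝ) (hd0 : d ≤ lam 0 - 1)
    (hd1 : d ≤ lam 1) (hd : 0 < d) (τ : ℝ) (hτ : 0 ≤ τ) (hM : M ≤ π * d * τ ^ 2)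
    (hex : ∃ k ∈ S, ∃ j, τ ≤ ‖C k j‖) : actS lam K S C ≤ 0 := by
  have h1 : ∑ k ∈ S, ∑ j, π * (k - lam j) * ‖C k j‖ ^ 2 ≤ -(π * d * τ ^ 2) := by
    have hle : ∀ k ∈ S, ∀ j, π * (k - lam j) * ‖C k j‖ ^ 2 ≤ -(π * d * ‖C k j‖ ^ 2) := by
      intro k hk j
      have key : (k - lam j ≤ -d) ∨ C k j = 0 := by
        by_cases hk0 : 0 < k
        · rcases hC k hk j hk0 with ⟨rfl, rfl⟩ | h'
          · left; push_cast; linarith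
          · exact Or.inr h'
        · left
          have hk' : (k : ℝ) ≤ 0 := by exact_mod_cast not_lt.1 hk0
          have h0 := h.lam0
          fin_cases j
          · simp only [Fin.zero_eta]; linarith
          · simp only [Fin.mk_one]; linarith
      rcases key with hkey | hkey
      · have := mul_nonneg Real.pi_pos.le (sq_nonneg ‖C k j‖)
        nlinarith
      · rw [hkey]; simp
    obtain ⟨k0, hk0, j0, hj0⟩ := hex
    have hnp : ∀ k ∈ S, ∀ j, 0 ≤ π * d * ‖C k j‖ ^ 2 := fun k _ j => by positivity
    calc ∑ k ∈ S, ∑ j, π * (k - lam j) * ‖C k j‖ ^ 2 ≤ ∑ k ∈ S, ∑ j, -(π * d * ‖C k j‖ ^ 2) :=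
          Finset.sum_le_sum fun k hk => Finset.sum_le_sum fun j _ => hle k hk j
      _ = -∑ k ∈ S, ∑ j, π * d * ‖C k j‖ ^ 2 := by simp only [Finset.sum_neg_distrib]
      _ ≤ -(π * d * ‖C k0 j0‖ ^ 2) := by
          apply neg_le_neg
          exact (Finset.single_le_sum (f := fun j => π * d * ‖C k0 j‖ ^ 2)
            (fun j _ => hnp k0 hk0 j) (Finset.mem_univ j0)).trans
            (Finset.single_le_sum (f := fun k => ∑ j, π * d * ‖C k j‖ ^ 2)
            (fun k hk => Finset.sum_nonneg fun j _ => hnp k hk j) hk0)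
      _ ≤ _ := by gcongr
  have h2 := (abs_le.1 (h.abs_integral_K_le S C)).1
  rw [actS]
  linarith

/-- The lower bound on the sphere of squared `H^{1/2}`-radius `r` about the constant loop `p`: the
quartic bound on `H` and the embedding of `H^{1/2}` in `L⁴` make `∫ H` quadratic in `r`. -/
lemma HamData.actS_ge (h : HamData lam K G p M L A) (N : ℕ)
    (C : ℤ → Fin 2 → ℂ) (hC0 : C 0 = p)
    (hCneg : ∀ k ∈ Finset.Icc (-N : ℤ) N, k < 0 → C k = 0) (r : ℝ)
    (hr : ∑ k ∈ Finset.Icc (1 : ℤ) N, ∑ j, k * ‖C k j‖ ^ 2 = r) :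
    π * r - 2 * A * r ^ 2 ≤ actS lam K (Finset.Icc (-N : ℤ) N) C := by
  have hsplit : ∀ F : ℤ → ℂ, (∀ k ∈ Finset.Icc (-N : ℤ) N, k < 0 → F k = 0) →
      ∑ k ∈ Finset.Icc (-N : ℤ) N, F k = F 0 + ∑ k ∈ Finset.Icc (1 : ℤ) N, F k := by
    intro F hF
    have hsub : insert (0 : ℤ) (Finset.Icc (1 : ℤ) N) ⊆ Finset.Icc (-N : ℤ) N := by
      intro k hk
      simp only [Finset.mem_insert, Finset.mem_Icc] at hk ⊢
      omega
    rw [← Finset.sum_subset hsub, Finset.sum_insert (by simp)]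
    intro k hk hk'
    apply hF k hk
    simp only [Finset.mem_insert, Finset.mem_Icc] at hk hk'
    omega
  set S := Finset.Icc (-N : ℤ) N with hS
  set S' := Finset.Icc (1 : ℤ) N with hS'
  have hloop : ∀ t, loopS S C t = p + loopS S' C t := by
    intro t; ext j
    simp only [loopS, Pi.add_apply]
    rw [hsplit (fun k => C k j * ee k t) (fun k hk hk0 => by rw [hCneg k hk hk0]; simp),
      hC0, ee_zero, mul_one]
  have hquad : ∑ k ∈ S, ∑ j, π * k * ‖C k j‖ ^ 2 = π * r := by
    have := hsplit (fun k => ((∑ j, π * k * ‖C k j‖ ^ 2 : ℝ) : ℂ))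
      (fun k hk hk0 => by rw [hCneg k hk hk0]; simp)
    have h2 : ∑ k ∈ S, ∑ j, π * k * ‖C k j‖ ^ 2 =
        ∑ j, π * (0 : ℤ) * ‖C 0 j‖ ^ 2 + ∑ k ∈ S', ∑ j, π * k * ‖C k j‖ ^ 2 := by
      exact_mod_cast this
    rw [h2, ← hr, Finset.mul_sum]
    simp only [Int.cast_zero, mul_zero, zero_mul, Finset.sum_const_zero, zero_add]
    refine Finset.sum_congr rfl fun k _ => ?_
    rw [Finset.mul_sum]
    refine Finset.sum_congr rfl fun j _ => ?_
    ring
  rw [h.actS_eq, hquad]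
  have cx := continuous_loopS S' C
  have cxj : ∀ j, Continuous fun t => ‖loopS S' C t j‖ ^ 4 := fun j =>
    ((continuous_apply j).comp cx).norm.pow 4
  have cxl : ∀ j, Continuous fun t => π * lam j * ‖loopS S C t j‖ ^ 2 := fun j =>
    continuous_const.mul (((continuous_apply j).comp (continuous_loopS S C)).norm.pow 2)
  have hInt : ∫ t in (0 : ℝ)..1, (∑ j, π * lam j * ‖loopS S C t j‖ ^ 2 + K (loopS S C t)) ≤
      ∫ t in (0 : ℝ)..1, A * ∑ j, ‖loopS S' C t j‖ ^ 4 := by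
    apply intervalIntegral.integral_mono zero_le_one
    · exact ((continuous_finsetSum _ fun j _ => cxl j).add
        (h.contK.comp (continuous_loopS S C))).intervalIntegrable _ _
    · exact (continuous_const.mul (continuous_finsetSum _ fun j _ => cxj j)).intervalIntegrable _ _
    · intro t
      simp only
      rw [hloop]
      exact h.H_quartic _
  rw [intervalIntegral.integral_const_mul, intervalIntegral.integral_finsetSum
    (fun j _ => (cxj j).intervalIntegrable _ _)] at hInt
  have h4 : ∑ j, ∫ t in (0 : ℝ)..1, ‖loopS S' C t j‖ ^ 4 ≤ 2 * r ^ 2 := by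
    have h5 : ∀ j, ∫ t in (0 : ℝ)..1, ‖loopS S' C t j‖ ^ 4 ≤ 2 * (∑ k ∈ S', k * ‖C k j‖ ^ 2) ^ 2 :=
      fun j => integral_norm_pow_four_le S' (fun k hk => (Finset.mem_Icc.1 hk).1) (fun k => C k j)
    have h6 : ∀ j, 0 ≤ ∑ k ∈ S', (k : ℝ) * ‖C k j‖ ^ 2 := fun j =>
      Finset.sum_nonneg fun k hk => by
        have : (0 : ℝ) ≤ k := by exact_mod_cast zero_le_one.trans (Finset.mem_Icc.1 hk).1
        positivity
    rw [Finset.sum_comm] at hr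
    rw [← hr]
    simp only [Fin.sum_univ_two]
    nlinarith [h5 0, h5 1, h6 0, h6 1, mul_nonneg (h6 0) (h6 1)]
  nlinarith [h.A_pos]

/-- Extension by zero of a finite family of Fourier coefficients. -/
def extC (S : Finset ℤ) (c : S × Fin 2 → ℂ) (k : ℤ) (j : Fin 2) : ℂ :=
  if h : k ∈ S then c (⟨k, h⟩, j) else 0

lemma extC_mem {S : Finset ℤ} (c : S × Fin 2 → ℂ) (i : S × Fin 2) :
    extC S c i.1 i.2 = c i := by
  simp [extC]

lemma sum_extC {S : Finset ℤ} (F : ℤ → Fin 2 → ℝ) :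
    ∑ i : S × Fin 2, F i.1 i.2 = ∑ k ∈ S, ∑ j, F k j := by
  rw [Fintype.sum_prod_type]
  exact Finset.sum_coe_sort S (fun k => ∑ j, F k j)

lemma continuous_extC (S : Finset ℤ) (k : ℤ) (j : Fin 2) : Continuous fun c => extC S c k j := by
  unfold extC
  split_ifs <;> fun_prop

lemma extC_add (S : Finset ℤ) (c d : S × Fin 2 → ℂ) : extC S (c + d) = extC S c + extC S d := by
  ext k j
  simp only [extC, Pi.add_apply]
  split_ifs <;> simp

lemma continuous_loopS_extC (S : Finset ℤ) :
    Continuous fun x : (S × Fin 2 → ℂ) × ℝ => loopS S (extC S x.1) x.2 := by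
  refine continuous_pi fun j => continuous_finsetSum _ fun k _ => ?_
  exact ((continuous_extC S k j).comp continuous_fst).mul ((continuous_ee k).comp continuous_snd)

/-- Almost critical points of the truncated action functional, at a level bounded below
independently of the truncation. -/
lemma HamData.exists_almost_critical (h : HamData lam K G p M L A) :
    ∃ β > 0, ∀ N : ℕ, 1 ≤ N → ∀ δ > 0, ∃ C : ℤ → Fin 2 → ℂ,
      (∀ k ∉ Finset.Icc (-N : ℤ) N, ∀ j, C k j = 0) ∧
      β ≤ actS lam K (Finset.Icc (-N : ℤ) N) C ∧
      ∑ k ∈ Finset.Icc (-N : ℤ) N, ∑ j, ‖gradS lam G (Finset.Icc (-N : ℤ) N) C k j‖ ^ 2 ≤ δ := by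
  have hA := h.A_pos
  -- `r = π / (4A)` maximizes `π r - 2 A r²`
  refine ⟨π ^ 2 / (8 * A), by positivity, fun N hN δ hδ => ?_⟩
  set S := Finset.Icc (-N : ℤ) N with hS
  have hN' : (1 : ℤ) ≤ N := by exact_mod_cast hN
  have h1S : (1 : ℤ) ∈ S := Finset.mem_Icc.2 ⟨by omega, by omega⟩
  have h0S : (0 : ℤ) ∈ S := Finset.mem_Icc.2 ⟨by omega, by omega⟩
  have hM0 : 0 ≤ M := (abs_nonneg _).trans (h.boundK 0)
  set d := min (lam 0 - 1) (lam 1) with hd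
  have hdpos : 0 < d := lt_min (by linarith [h.lam0.1]) h.lam1.1
  set ρ := Real.sqrt (π / (4 * A)) with hρ
  have hρpos : 0 < ρ := Real.sqrt_pos.2 (by positivity)
  set τ := 1 + ρ + (∑ j, ‖p j‖) + Real.sqrt (M / (π * d)) with hτ
  have hpsum : 0 ≤ ∑ j, ‖p j‖ := Finset.sum_nonneg fun j _ => norm_nonneg _
  have hsq0 := Real.sqrt_nonneg (M / (π * d))
  have hτM : M ≤ π * d * τ ^ 2 := by
    have h1 : M / (π * d) = Real.sqrt (M / (π * d)) ^ 2 := (Real.sq_sqrt (by positivity)).symm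
    have h2 : Real.sqrt (M / (π * d)) ^ 2 ≤ τ ^ 2 := by gcongr; linarith
    rw [← h1, div_le_iff₀ (by positivity)] at h2
    linarith
  have hsumpos : ∀ c : S × Fin 2 → ℂ, 0 ≤ ∑ k ∈ Finset.Icc (1 : ℤ) N, ∑ j, (k : ℝ) * ‖extC S c k j‖ ^ 2 := by
    intro c
    refine Finset.sum_nonneg fun k hk => Finset.sum_nonneg fun j _ => ?_
    have : (0 : ℝ) ≤ k := by exact_mod_cast zero_le_one.trans (Finset.mem_Icc.1 hk).1
    positivity
  obtain ⟨c, hc1, hc2⟩ := exists_almost_critical_of_linking (ι := S × Fin 2)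
    (fun i => 0 < (i.1 : ℤ)) (⟨1, h1S⟩, 0) (by simp)
    (fun c => actS lam K S (extC S c)) (fun c i => gradS lam G S (extC S c) i.1 i.2)
    (by
      unfold actS
      refine Continuous.sub ?_ ?_
      · refine continuous_finsetSum _ fun k _ => continuous_finsetSum _ fun j _ => ?_
        exact continuous_const.mul ((continuous_extC S k j).norm.pow 2)
      · apply intervalIntegral.continuous_parametric_intervalIntegral_of_continuous'
        exact h.contK.comp (continuous_loopS_extC S))
    (by
      refine continuous_pi fun i => ?_
      unfold gradS fc
      refine Continuous.sub ?_ ?_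
      · exact continuous_const.mul (continuous_extC S _ _)
      · apply intervalIntegral.continuous_parametric_intervalIntegral_of_continuous'
        exact ((continuous_apply i.2).comp (h.contG.comp (continuous_loopS_extC S))).mul
          ((continuous_conj_ee _).comp continuous_snd))
    (π * N + L) (by have := h.L_nonneg; positivity)
    (by
      intro c v
      have := h.actS_add_le N (extC S c) (extC S v)
      rw [← hS, ← extC_add, ← sum_extC, ← sum_extC] at this
      simpa only [extC_mem] using this)
    (fun c => Real.sqrt (∑ k ∈ Finset.Icc (1 : ℤ) N, ∑ j, (k : ℝ) * ‖extC S c k j‖ ^ 2))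
    (by
      apply Real.continuous_sqrt.comp
      refine continuous_finsetSum _ fun k _ => continuous_finsetSum _ fun j _ => ?_
      exact continuous_const.mul ((continuous_extC S k j).norm.pow 2))
    (by
      intro c s hs hcs hc0
      have hz : ∀ k ∈ Finset.Icc (1 : ℤ) N, ∀ j, ¬(k = 1 ∧ j = 0) → extC S c k j = 0 := by
        intro k hk j hkj
        obtain ⟨a1, a2⟩ := Finset.mem_Icc.1 hk
        have hkS : k ∈ S := Finset.mem_Icc.2 ⟨by omega, a2⟩
        simp only [extC, hkS, dif_pos]
        apply hc0
        · show 0 < k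
          omega
        · intro he
          rw [Prod.ext_iff] at he
          exact hkj ⟨congrArg Subtype.val he.1, he.2⟩
      rw [Finset.sum_eq_single_of_mem 1 (Finset.mem_Icc.2 ⟨le_refl _, hN'⟩),
        Finset.sum_eq_single_of_mem 0 (Finset.mem_univ _)]
      · have : extC S c 1 0 = s := by
          simp only [extC, h1S, dif_pos]; exact hcs
        rw [this]; simp [hs]
      · intro j _ hj
        rw [hz 1 (Finset.mem_Icc.2 ⟨le_refl _, hN'⟩) j (by tauto)]; simp
      · intro k hk hk1
        refine Finset.sum_eq_zero fun j _ => ?_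
        rw [hz k hk j (by tauto)]; simp)
    (fun i => if (i.1 : ℤ) = 0 then p i.2 else 0) τ ρ hρpos (by linarith)
    (by
      intro i
      split_ifs
      · have := Finset.single_le_sum (f := fun j => ‖p j‖) (fun j _ => norm_nonneg _)
          (Finset.mem_univ i.2)
        linarith
      · rw [norm_zero]; linarith)
    (π ^ 2 / (8 * A)) (by positivity)
    (by
      intro c hc
      apply h.actS_nonpos
      intro k hk j hk0
      simp only [extC, hk, dif_pos]
      exact hc _ hk0)
    (by
      intro c hc ⟨i, hi⟩
      apply h.actS_le_of_large S _ _ d (min_le_left _ _) (min_le_right _ _) hdpos τ (by linarith)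
        hτM ⟨i.1, i.1.2, i.2, by rwa [extC_mem]⟩
      intro k hk j hk0
      by_cases hkj : k = 1 ∧ j = 0
      · exact Or.inl hkj
      · right
        simp only [extC, hk, dif_pos]
        apply hc _ hk0
        intro he
        rw [Prod.ext_iff] at he
        exact hkj ⟨congrArg Subtype.val he.1, he.2⟩)
    (by
      intro c hc hν
      have := h.actS_ge N (extC S c) (by
          ext j
          simp only [extC, h0S, dif_pos]
          rw [hc _ (by simp)]; simp) (by
          intro k hk hk0
          ext j
          rw [← hS] at hk
          simp only [extC, hk, dif_pos]
          rw [hc _ (by simp; omega)]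
          simp [hk0.ne]) (ρ ^ 2) (by
          rw [← hν, Real.sq_sqrt (hsumpos c)])
      rw [← hS] at this
      refine le_trans (le_of_eq ?_) this
      rw [hρ, Real.sq_sqrt (by positivity)]
      field_simp
      ring)
    δ hδ
  refine ⟨extC S c, fun k hk j => by simp [extC, hk], hc1, ?_⟩
  rw [← sum_extC]
  exact hc2

end

/-! ### Sobolev and Fourier preliminaries -/

section
open Filter Topology

lemma summable_inv_one_add_abs_sq : Summable fun k : ℤ => ((1 + |(k : ℝ)|) ^ 2)⁻¹ := by
  have h : Summable fun n : ℕ => ((1 + |(n : ℝ)|) ^ 2)⁻¹ := by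
    have h1 : Summable fun n : ℕ => ((((n + 1 : ℕ) : ℝ)) ^ 2)⁻¹ :=
      (summable_nat_add_iff (f := fun n : ℕ => (((n : ℝ)) ^ 2)⁻¹) 1).2
        (Real.summable_nat_pow_inv.2 one_lt_two)
    refine h1.congr fun n => ?_
    rw [abs_of_nonneg (Nat.cast_nonneg n)]; push_cast; rw [add_comm]
  refine Summable.of_nat_of_neg ?_ ?_
  · simpa using h
  · simpa using h

/-- A family of coefficients bounded in the Sobolev space `H¹` is bounded in `ℓ¹`. -/
lemma summable_norm_of_weighted {u : ℤ → ℂ} {B : ℝ}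
    (h : ∀ F : Finset ℤ, ∑ k ∈ F, (1 + |(k : ℝ)|) ^ 2 * ‖u k‖ ^ 2 ≤ B) :
    (Summable fun k : ℤ => (1 + |(k : ℝ)|) ^ 2 * ‖u k‖ ^ 2) ∧ (Summable fun k => ‖u k‖) ∧
    ∑' k : ℤ, (1 + |(k : ℝ)|) ^ 2 * ‖u k‖ ^ 2 ≤ B ∧
    ∑' k, ‖u k‖ ≤ B + ∑' k : ℤ, ((1 + |(k : ℝ)|) ^ 2)⁻¹ := by
  have h1 : Summable fun k : ℤ => (1 + |(k : ℝ)|) ^ 2 * ‖u k‖ ^ 2 :=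
    summable_of_sum_le (fun k => by positivity) h
  have h2 : ∑' k : ℤ, (1 + |(k : ℝ)|) ^ 2 * ‖u k‖ ^ 2 ≤ B := h1.tsum_le_of_sum_le h
  have hle : ∀ k, ‖u k‖ ≤ (1 + |(k : ℝ)|) ^ 2 * ‖u k‖ ^ 2 + ((1 + |(k : ℝ)|) ^ 2)⁻¹ := by
    intro k
    have hw : 0 < 1 + |(k : ℝ)| := by positivity
    have e : ‖u k‖ = ((1 + |(k : ℝ)|) * ‖u k‖) * (1 + |(k : ℝ)|)⁻¹ := by field_simp
    have := sq_nonneg (((1 + |(k : ℝ)|) * ‖u k‖) - (1 + |(k : ℝ)|)⁻¹)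
    have p1 : 0 ≤ ((1 + |(k : ℝ)|) * ‖u k‖) * (1 + |(k : ℝ)|)⁻¹ := by positivity
    have e2 : ((1 + |(k : ℝ)|) ^ 2)⁻¹ = (1 + |(k : ℝ)|)⁻¹ ^ 2 := (inv_pow _ _).symm
    rw [e2]
    nlinarith
  have h3 : Summable fun k => ‖u k‖ :=
    Summable.of_nonneg_of_le (fun k => norm_nonneg _) hle (h1.add summable_inv_one_add_abs_sq)
  refine ⟨h1, h3, h2, ?_⟩
  calc ∑' k, ‖u k‖ ≤ ∑' k : ℤ, ((1 + |(k : ℝ)|) ^ 2 * ‖u k‖ ^ 2 + ((1 + |(k : ℝ)|) ^ 2)⁻¹) :=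
        h3.tsum_le_tsum hle (h1.add summable_inv_one_add_abs_sq)
    _ = _ := h1.tsum_add summable_inv_one_add_abs_sq
    _ ≤ _ := by gcongr

/-- The compact inclusion of `H¹` into `ℓ¹`: bounded and coefficientwise convergent sequences
converge. -/
lemma tendsto_tsum_norm_sub_of_weighted {u : ℕ → ℤ → ℂ} {v : ℤ → ℂ} {B : ℝ}
    (h : ∀ n, ∀ F : Finset ℤ, ∑ k ∈ F, (1 + |(k : ℝ)|) ^ 2 * ‖u n k‖ ^ 2 ≤ B)
    (hlim : ∀ k, Tendsto (fun n => u n k) atTop (𝓝 (v k))) :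
    (∀ F : Finset ℤ, ∑ k ∈ F, (1 + |(k : ℝ)|) ^ 2 * ‖v k‖ ^ 2 ≤ B) ∧
    Tendsto (fun n => ∑' k, ‖u n k - v k‖) atTop (𝓝 0) := by
  have hv : ∀ F : Finset ℤ, ∑ k ∈ F, (1 + |(k : ℝ)|) ^ 2 * ‖v k‖ ^ 2 ≤ B := by
    intro F
    have : Tendsto (fun n => ∑ k ∈ F, (1 + |(k : ℝ)|) ^ 2 * ‖u n k‖ ^ 2) atTop
        (𝓝 (∑ k ∈ F, (1 + |(k : ℝ)|) ^ 2 * ‖v k‖ ^ 2)) :=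
      tendsto_finsetSum _ fun k _ => (((hlim k).norm.pow 2).const_mul _)
    exact le_of_tendsto' this fun n => h n F
  refine ⟨hv, ?_⟩
  have hB : 0 ≤ B := by simpa using hv ∅
  have hd : ∀ n, ∀ F : Finset ℤ, ∑ k ∈ F, (1 + |(k : ℝ)|) ^ 2 * ‖u n k - v k‖ ^ 2 ≤ 4 * B := by
    intro n F
    have h1 := h n F
    have h2 := hv F
    have : ∑ k ∈ F, (1 + |(k : ℝ)|) ^ 2 * ‖u n k - v k‖ ^ 2 ≤
        ∑ k ∈ F, (2 * ((1 + |(k : ℝ)|) ^ 2 * ‖u n k‖ ^ 2) + 2 * ((1 + |(k : ℝ)|) ^ 2 * ‖v k‖ ^ 2)) := by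
      refine Finset.sum_le_sum fun k _ => ?_
      have h3 := norm_sub_le (u n k) (v k)
      have h4 : ‖u n k - v k‖ ^ 2 ≤ 2 * ‖u n k‖ ^ 2 + 2 * ‖v k‖ ^ 2 := by
        nlinarith [sq_nonneg (‖u n k‖ - ‖v k‖), norm_nonneg (u n k - v k)]
      have h5 : 0 ≤ (1 + |(k : ℝ)|) ^ 2 := by positivity
      nlinarith
    rw [Finset.sum_add_distrib, ← Finset.mul_sum, ← Finset.mul_sum] at this
    linarith
  rw [Metric.tendsto_atTop]
  intro e he
  -- truncate `‖u n k - v k‖` by a small multiple of the weighted square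
  set η := e / (2 * (4 * B + 1)) with hη
  have hηpos : 0 < η := by positivity
  set q : ℕ → ℤ → ℝ := fun n k => max (‖u n k - v k‖ - η * ((1 + |(k : ℝ)|) ^ 2 * ‖u n k - v k‖ ^ 2)) 0
    with hq
  have hqle : ∀ n k, q n k ≤ (1 / (4 * η)) * ((1 + |(k : ℝ)|) ^ 2)⁻¹ := by
    intro n k
    apply max_le _ (by positivity)
    have hw : 0 < (1 + |(k : ℝ)|) ^ 2 := by positivity
    set W := (1 + |(k : ℝ)|) ^ 2
    rw [← sub_nonneg]
    have : 1 / (4 * η) * W⁻¹ - (‖u n k - v k‖ - η * (W * ‖u n k - v k‖ ^ 2)) =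
        (2 * η * W * ‖u n k - v k‖ - 1) ^ 2 / (4 * η * W) := by
      field_simp; ring
    rw [this]; positivity
  have hqlim : Tendsto (fun n => ∑' k, q n k) atTop (𝓝 (∑' _ : ℤ, (0 : ℝ))) := by
    refine tendsto_tsum_of_dominated_convergence
      (bound := fun k : ℤ => (1 / (4 * η)) * ((1 + |(k : ℝ)|) ^ 2)⁻¹)
      (summable_inv_one_add_abs_sq.mul_left _) ?_ ?_
    · intro k
      have h1 : Tendsto (fun n => ‖u n k - v k‖) atTop (𝓝 0) := by
        have := ((hlim k).sub_const (v k)).norm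
        simpa using this
      have h2 := (h1.sub (((h1.pow 2).const_mul ((1 + |(k : ℝ)|) ^ 2)).const_mul η)).max
        (tendsto_const_nhds (x := (0 : ℝ)))
      simpa using h2
    · refine Eventually.of_forall fun n k => ?_
      rw [Real.norm_of_nonneg (le_max_right _ _)]
      exact hqle n k
  rw [tsum_zero, Metric.tendsto_atTop] at hqlim
  obtain ⟨N, hN⟩ := hqlim (e / 2) (by positivity)
  refine ⟨N, fun n hn => ?_⟩
  have h1 := hN n hn
  obtain ⟨s1, s2, s3, -⟩ := summable_norm_of_weighted (hd n)
  have sq' : Summable (q n) :=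
    Summable.of_nonneg_of_le (fun k => le_max_right _ _) (hqle n)
      (summable_inv_one_add_abs_sq.mul_left _)
  have h2 : ∑' k, ‖u n k - v k‖ ≤ ∑' k : ℤ, (q n k + η * ((1 + |(k : ℝ)|) ^ 2 * ‖u n k - v k‖ ^ 2)) := by
    refine s2.tsum_le_tsum (fun k => ?_) (sq'.add (s1.mul_left η))
    have := le_max_left (‖u n k - v k‖ - η * ((1 + |(k : ℝ)|) ^ 2 * ‖u n k - v k‖ ^ 2)) 0
    linarith
  rw [sq'.tsum_add (s1.mul_left η), tsum_mul_left] at h2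
  have h3 : η * ∑' k : ℤ, ((1 + |(k : ℝ)|) ^ 2 * ‖u n k - v k‖ ^ 2) < e / 2 := by
    have : η * ∑' k : ℤ, ((1 + |(k : ℝ)|) ^ 2 * ‖u n k - v k‖ ^ 2) ≤ η * (4 * B) := by gcongr
    refine this.trans_lt ?_
    rw [hη, div_mul_eq_mul_div, div_lt_div_iff₀ (by positivity) (by positivity)]
    nlinarith
  rw [Real.dist_eq, sub_zero, abs_lt] at h1 ⊢
  constructor
  · have : 0 ≤ ∑' k, ‖u n k - v k‖ := tsum_nonneg fun k => norm_nonneg _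
    linarith
  · linarith [h1.2]

/-- A continuous `1`-periodic function whose Fourier coefficients of nonzero order vanish is
constant. -/
lemma const_of_fc_eq_zero {D : ℝ → ℂ} (hD : Continuous D) (hp : ∀ t, D (t + 1) = D t)
    (h : ∀ k ≠ 0, fc D k = 0) (t : ℝ) : D t = fc D 0 := by
  have : Fact ((0 : ℝ) < 1) := ⟨zero_lt_one⟩
  have hper : Function.Periodic D 1 := hp
  let f : C(AddCircle (1 : ℝ), ℂ) := ⟨hper.lift, by
    exact continuous_coinduced_dom.2 hD⟩
  have hf : ∀ t : ℝ, f t = D t := fun t => hper.lift_coe t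
  have hcoef : ∀ k : ℤ, fourierCoeff f k = fc D k := by
    intro k
    rw [fourierCoeff_eq_intervalIntegral f k 0]
    simp only [zero_add, div_one, one_smul, fc]
    congr 1; ext s
    rw [hf, conj_ee, fourier_coe_apply, ee, smul_eq_mul, mul_comm]
    congr 2; push_cast; ring
  have hsupp : ∀ k : ℤ, k ≠ 0 → fourierCoeff f k = 0 := fun k hk => by rw [hcoef, h k hk]
  have hs : Summable (fourierCoeff f) :=
    summable_of_ne_finset_zero (s := {0}) fun k hk => hsupp k (by simpa using hk)
  have := has_pointwise_sum_fourier_series_of_summable hs (t : AddCircle (1 : ℝ))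
  have h2 := this.unique (hasSum_single 0 fun k hk => by rw [hsupp k hk]; simp)
  rw [hf] at h2
  rw [h2, hcoef]; simp

end

/-! ### A priori bounds -/

section
open Filter Topology

section
variable {lam : Fin 2 → ℝ} {K : (Fin 2 → ℂ) → ℝ} {G : (Fin 2 → ℂ) → (Fin 2 → ℂ)}
  {p : Fin 2 → ℂ} {M L A : ℝ}

/-- Nonresonance: no `λⱼ` is an integer, so `|k - λⱼ|` is comparable to `1 + |k|`. -/
lemma HamData.exists_gap (h : HamData lam K G p M L A) :
    ∃ d > 0, ∀ (k : ℤ) (j : Fin 2), d * (1 + |(k : ℝ)|) ≤ |(k : ℝ) - lam j| := by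
  obtain ⟨h1, h2⟩ := h.lam0
  obtain ⟨h3, h4⟩ := h.lam1
  set d := min (min (lam 0 - 1) (2 - lam 0)) (min (lam 1) (1 - lam 1)) with hd
  have hd1 : d ≤ lam 0 - 1 := (min_le_left _ _).trans (min_le_left _ _)
  have hd2 : d ≤ 2 - lam 0 := (min_le_left _ _).trans (min_le_right _ _)
  have hd3 : d ≤ lam 1 := (min_le_right _ _).trans (min_le_left _ _)
  have hd4 : d ≤ 1 - lam 1 := (min_le_right _ _).trans (min_le_right _ _)
  have hd0 : 0 < d := lt_min (lt_min (by linarith) (by linarith)) (lt_min h3 (by linarith))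
  refine ⟨d / 4, by positivity, fun k j => ?_⟩
  have hlam2 : 0 ≤ lam j ∧ lam j ≤ 2 := by
    fin_cases j
    · simp only [Fin.zero_eta]; constructor <;> linarith
    · simp only [Fin.mk_one]; constructor <;> linarith
  have hgap : d ≤ |(k : ℝ) - lam j| := by
    rw [le_abs]
    fin_cases j
    · simp only [Fin.zero_eta]
      rcases le_or_gt k 1 with hk | hk
      · right; have : (k : ℝ) ≤ 1 := by exact_mod_cast hk
        linarith
      · left; have : (2 : ℝ) ≤ k := by exact_mod_cast hk
        linarith
    · simp only [Fin.mk_one]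
      rcases le_or_gt k 0 with hk | hk
      · right; have : (k : ℝ) ≤ 0 := by exact_mod_cast hk
        linarith
      · left; have : (1 : ℝ) ≤ k := by exact_mod_cast hk
        linarith
  rcases le_or_gt |(k : ℝ)| 3 with hk | hk
  · nlinarith
  · have h5 : |(k : ℝ)| - |lam j| ≤ |(k : ℝ) - lam j| := abs_sub_abs_le_abs_sub _ _
    rw [abs_of_nonneg hlam2.1] at h5
    have : d ≤ 1 := by linarith
    nlinarith

/-- The `H¹` bound on almost critical points, uniform in the truncation. -/
lemma HamData.exists_weighted_bound (h : HamData lam K G p M L A) :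
    ∃ B, ∀ (S : Finset ℤ) (C : ℤ → Fin 2 → ℂ), (∀ k ∉ S, ∀ j, C k j = 0) →
      ∑ k ∈ S, ∑ j, ‖gradS lam G S C k j‖ ^ 2 ≤ 1 →
      ∀ j, ∀ F : Finset ℤ, ∑ k ∈ F, (1 + |(k : ℝ)|) ^ 2 * ‖C k j‖ ^ 2 ≤ B := by
  obtain ⟨d, hd, hgap⟩ := h.exists_gap
  refine ⟨(1 / d ^ 2) * (2 + 2 * M ^ 2), fun S C hC hg j F => ?_⟩
  have hcG : Continuous fun t => G (loopS S C t) j :=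
    (continuous_apply j).comp (h.contG.comp (continuous_loopS S C))
  have hb : ∑ k ∈ S, ‖fc (fun t => G (loopS S C t) j) k‖ ^ 2 ≤ M ^ 2 := by
    refine (bessel_fc S hcG).trans ?_
    have : ∫ t in (0 : ℝ)..1, ‖G (loopS S C t) j‖ ^ 2 ≤ ∫ t in (0 : ℝ)..1, M ^ 2 := by
      apply intervalIntegral.integral_mono zero_le_one
      · exact (hcG.norm.pow 2).intervalIntegrable _ _
      · exact intervalIntegrable_const
      · intro t
        simp only
        have := h.boundG (loopS S C t) j
        gcongr
    simpa using this
  have hg' : ∑ k ∈ S, ‖gradS lam G S C k j‖ ^ 2 ≤ 1 := by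
    refine le_trans (Finset.sum_le_sum fun k _ => ?_) hg
    exact Finset.single_le_sum (f := fun j => ‖gradS lam G S C k j‖ ^ 2)
      (fun j _ => by positivity) (Finset.mem_univ j)
  have hpt : ∀ k ∈ S, (1 + |(k : ℝ)|) ^ 2 * ‖C k j‖ ^ 2 ≤ (1 / d ^ 2) *
      (2 * ‖gradS lam G S C k j‖ ^ 2 + 2 * ‖fc (fun t => G (loopS S C t) j) k‖ ^ 2) := by
    intro k _
    have e1 : ‖(2 * π * (k - lam j) * C k j : ℂ)‖ = 2 * π * (|(k : ℝ) - lam j| * ‖C k j‖) := by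
      have : (2 * π * (k - lam j) * C k j : ℂ) = ((2 * (π * (k - lam j)) : ℝ) : ℂ) * C k j := by
        push_cast; ring
      rw [this, norm_mul, Complex.norm_real, Real.norm_eq_abs, abs_mul, abs_mul, abs_two,
        abs_of_pos Real.pi_pos]
      ring
    have e2 : ‖(2 * π * (k - lam j) * C k j : ℂ)‖ ≤
        ‖gradS lam G S C k j‖ + ‖fc (fun t => G (loopS S C t) j) k‖ := by
      have : (2 * π * (k - lam j) * C k j : ℂ) =
        gradS lam G S C k j + fc (fun t => G (loopS S C t) j) k := by rw [gradS]; ring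
      rw [this]; exact norm_add_le _ _
    have e3 : d * ((1 + |(k : ℝ)|) * ‖C k j‖) ≤
        ‖gradS lam G S C k j‖ + ‖fc (fun t => G (loopS S C t) j) k‖ := by
      have i1 : d * ((1 + |(k : ℝ)|) * ‖C k j‖) ≤ |(k : ℝ) - lam j| * ‖C k j‖ := by
        rw [← mul_assoc]; exact mul_le_mul_of_nonneg_right (hgap k j) (norm_nonneg _)
      have i2 : 0 ≤ |(k : ℝ) - lam j| * ‖C k j‖ := by positivity
      have := Real.pi_gt_three
      nlinarith
    rw [← mul_pow, div_mul_eq_mul_div, le_div_iff₀ (by positivity)]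
    have e4 : (d * ((1 + |(k : ℝ)|) * ‖C k j‖)) ^ 2 ≤
        (‖gradS lam G S C k j‖ + ‖fc (fun t => G (loopS S C t) j) k‖) ^ 2 := by
      gcongr
    nlinarith [sq_nonneg (‖gradS lam G S C k j‖ - ‖fc (fun t => G (loopS S C t) j) k‖)]
  have hFS : ∑ k ∈ F, (1 + |(k : ℝ)|) ^ 2 * ‖C k j‖ ^ 2 ≤
      ∑ k ∈ S, (1 + |(k : ℝ)|) ^ 2 * ‖C k j‖ ^ 2 := by
    have : ∑ k ∈ F ∩ S, (1 + |(k : ℝ)|) ^ 2 * ‖C k j‖ ^ 2 =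
        ∑ k ∈ F, (1 + |(k : ℝ)|) ^ 2 * ‖C k j‖ ^ 2 := by
      refine Finset.sum_subset Finset.inter_subset_left fun k hk hk' => ?_
      rw [hC k (fun hkS => hk' (Finset.mem_inter.2 ⟨hk, hkS⟩))]; simp
    rw [← this]
    exact Finset.sum_le_sum_of_subset_of_nonneg Finset.inter_subset_right
      fun k _ _ => by positivity
  refine hFS.trans ((Finset.sum_le_sum hpt).trans ?_)
  rw [← Finset.mul_sum, Finset.sum_add_distrib, ← Finset.mul_sum, ← Finset.mul_sum]
  gcongr
  linarith

/-- The action of a loop in terms of `K` alone, up to an error controlled by the gradient; this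
form passes to the limit under uniform convergence. -/
lemma HamData.actS_eq_of_gradS (h : HamData lam K G p M L A) (S : Finset ℤ) (C : ℤ → Fin 2 → ℂ) :
    actS lam K S C = (∫ t in (0 : ℝ)..1, ((1 / 2) *
        ∑ j, ((starRingEnd ℂ) (G (loopS S C t) j) * loopS S C t j).re - K (loopS S C t))) +
      (1 / 2) * ∑ k ∈ S, ∑ j, ((starRingEnd ℂ) (gradS lam G S C k j) * C k j).re := by
  have cx := continuous_loopS S C
  have cG : ∀ j, Continuous fun t => G (loopS S C t) j := fun j =>
    (continuous_apply j).comp (h.contG.comp cx)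
  have cin : ∀ j, Continuous fun t => ((starRingEnd ℂ) (G (loopS S C t) j) * loopS S C t j).re :=
    fun j => Complex.continuous_re.comp ((Complex.continuous_conj.comp (cG j)).mul
      ((continuous_apply j).comp cx))
  rw [intervalIntegral.integral_sub, intervalIntegral.integral_const_mul,
    intervalIntegral.integral_finsetSum, actS]
  · have e1 : ∀ j, ∫ t in (0 : ℝ)..1, ((starRingEnd ℂ) (G (loopS S C t) j) * loopS S C t j).re =
        ∑ k ∈ S, ((starRingEnd ℂ) (fc (fun t => G (loopS S C t) j) k) * C k j).re := fun j =>
      integral_inner_trig S (fun k => C k j) (cG j)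
    simp_rw [e1]
    rw [Finset.sum_comm (s := Finset.univ)]
    have e2 : ∑ k ∈ S, ∑ j, π * (k - lam j) * ‖C k j‖ ^ 2 =
        1 / 2 * ∑ k ∈ S, ∑ j, ((starRingEnd ℂ) (fc (fun t => G (loopS S C t) j) k) * C k j).re +
        1 / 2 * ∑ k ∈ S, ∑ j, ((starRingEnd ℂ) (gradS lam G S C k j) * C k j).re := by
      rw [← mul_add, ← Finset.sum_add_distrib, Finset.mul_sum]
      refine Finset.sum_congr rfl fun k _ => ?_
      rw [← Finset.sum_add_distrib, Finset.mul_sum]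
      refine Finset.sum_congr rfl fun j _ => ?_
      rw [← Complex.add_re, ← add_mul, ← map_add]
      have e3 : fc (fun t => G (loopS S C t) j) k + gradS lam G S C k j =
          ((2 * (π * (k - lam j)) : ℝ) : ℂ) * C k j := by rw [gradS]; push_cast; ring
      rw [e3, map_mul, Complex.conj_ofReal, mul_assoc (Complex.ofReal _), Complex.re_ofReal_mul, Complex.conj_mul']
      have e4 : ((‖C k j‖ : ℂ) ^ 2).re = ‖C k j‖ ^ 2 := by norm_cast
      rw [e4]; ring
    rw [e2]; ring
  · intro j _; exact (cin j).intervalIntegrable _ _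
  · exact (continuous_const.mul (continuous_finsetSum _ fun j _ => cin j)).intervalIntegrable _ _
  · exact (h.contK.comp cx).intervalIntegrable _ _

/-- Bounded convergence on `[0,1]`. -/
lemma tendsto_integral_of_bounded {E : Type*} [NormedAddCommGroup E] [NormedSpace ℝ E]
    {F : ℕ → ℝ → E} {f : ℝ → E} (hF : ∀ n, Continuous (F n)) (b : ℝ)
    (hb : ∀ n t, ‖F n t‖ ≤ b) (hlim : ∀ t, Tendsto (fun n => F n t) atTop (𝓝 (f t))) :
    Tendsto (fun n => ∫ t in (0 : ℝ)..1, F n t) atTop (𝓝 (∫ t in (0 : ℝ)..1, f t)) :=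
  intervalIntegral.tendsto_integral_filter_of_dominated_convergence (fun _ => b)
    (Eventually.of_forall fun n => (hF n).aestronglyMeasurable)
    (Eventually.of_forall fun n => Eventually.of_forall fun t _ => hb n t)
    intervalIntegrable_const (Eventually.of_forall fun t _ => hlim t)

end

end

/-! ### Existence of a periodic orbit -/

section
open Filter Topology

section
variable {lam : Fin 2 → ℝ} {K : (Fin 2 → ℂ) → ℝ} {G : (Fin 2 → ℂ) → (Fin 2 → ℂ)}
  {p : Fin 2 → ℂ} {M L A : ℝ}

lemma fc_loopS (S : Finset ℤ) (C : ℤ → Fin 2 → ℂ) (k : ℤ) (j : Fin 2) :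
    fc (fun t => loopS S C t j) k = if k ∈ S then C k j else 0 := by
  have hc : ∀ l, Continuous fun t => C l j * ((starRingEnd ℂ) (ee k t) * ee l t) := fun l =>
    continuous_const.mul ((continuous_conj_ee k).mul (continuous_ee l))
  have : ∀ t, loopS S C t j * (starRingEnd ℂ) (ee k t) =
      ∑ l ∈ S, C l j * ((starRingEnd ℂ) (ee k t) * ee l t) := by
    intro t
    rw [loopS, Finset.sum_mul]
    exact Finset.sum_congr rfl fun l _ => by ring
  simp_rw [fc, this]
  rw [intervalIntegral.integral_finsetSum (fun l _ => (hc l).intervalIntegrable _ _)]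
  simp_rw [intervalIntegral.integral_const_mul, integral_conj_ee_mul]
  simp

lemma fc_add {y z : ℝ → ℂ} (hy : Continuous y) (hz : Continuous z) (k : ℤ) :
    fc (fun t => y t + z t) k = fc y k + fc z k := by
  simp only [fc, add_mul]
  exact intervalIntegral.integral_add ((hy.mul (continuous_conj_ee k)).intervalIntegrable _ _)
    ((hz.mul (continuous_conj_ee k)).intervalIntegrable _ _)

lemma fc_const_mul (a : ℂ) (y : ℝ → ℂ) (k : ℤ) : fc (fun t => a * y t) k = a * fc y k := by
  simp only [fc, mul_assoc]
  exact intervalIntegral.integral_const_mul _ _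

lemma hasDerivAt_ee (k : ℤ) (t : ℝ) : HasDerivAt (ee k) (2 * π * Complex.I * k * ee k t) t := by
  have h1 : HasDerivAt (fun s : ℝ => 2 * π * Complex.I * k * (s : ℂ)) (2 * π * Complex.I * k) t := by
    simpa using (Complex.ofRealCLM.hasDerivAt (x := t)).const_mul (2 * π * Complex.I * k)
  exact h1.cexp.congr_deriv (mul_comm _ _)

/-- The Fourier coefficients of the derivative of a periodic function. -/
lemma fc_deriv {y y' : ℝ → ℂ} (hy : ∀ t, HasDerivAt y (y' t) t) (hy' : Continuous y')
    (hper : y 1 = y 0) (k : ℤ) : fc y' k = 2 * π * Complex.I * k * fc y k := by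
  have hcy : Continuous y := continuous_iff_continuousAt.2 fun t => (hy t).continuousAt
  have h1 := intervalIntegral.integral_mul_deriv_eq_deriv_mul (a := 0) (b := 1)
    (u := y) (v := ee (-k)) (u' := y') (v' := fun t => 2 * π * Complex.I * (-k : ℤ) * ee (-k) t)
    (fun t _ => hy t) (fun t _ => hasDerivAt_ee (-k) t) (hy'.intervalIntegrable _ _)
    ((continuous_const.mul (continuous_ee (-k))).intervalIntegrable _ _)
  have h2 : ee (-k) 1 = ee (-k) 0 := by
    have := ee_periodic (-k) 0
    rwa [zero_add] at this
  rw [h2, hper, sub_self, zero_sub] at h1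
  simp only [fc, conj_ee]
  have h3 : ∫ t in (0 : ℝ)..1, y t * (2 * π * Complex.I * (-k : ℤ) * ee (-k) t) =
      -(2 * π * Complex.I * k) * ∫ t in (0 : ℝ)..1, y t * ee (-k) t := by
    rw [← intervalIntegral.integral_const_mul]
    congr 1; ext t; push_cast; ring
  rw [h3] at h1
  linear_combination h1

/-- A continuous function `x` whose Fourier coefficients satisfy `2πk x̂ₖ = Ŷₖ` is periodic with
derivative `iY`. -/
lemma hasDerivAt_of_fc {x Y : ℝ → ℂ} (hx : Continuous x) (hY : Continuous Y)
    (hxp : ∀ t, x (t + 1) = x t) (hYp : ∀ t, Y (t + 1) = Y t)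
    (h : ∀ k : ℤ, 2 * π * k * fc x k = fc Y k) (t : ℝ) :
    HasDerivAt x (Complex.I * Y t) t := by
  set y : ℝ → ℂ := fun s => ∫ r in (0 : ℝ)..s, Complex.I * Y r with hy
  have hcI : Continuous fun r => Complex.I * Y r := continuous_const.mul hY
  have hyd : ∀ s, HasDerivAt y (Complex.I * Y s) s := fun s =>
    intervalIntegral.integral_hasDerivAt_right (hcI.intervalIntegrable _ _)
      (hcI.stronglyMeasurableAtFilter _ _) hcI.continuousAt
  have hyc : Continuous y := continuous_iff_continuousAt.2 fun s => (hyd s).continuousAt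
  have hY0 : ∫ r in (0 : ℝ)..1, Complex.I * Y r = 0 := by
    have := h 0
    simp only [fc, Int.cast_zero, mul_zero, zero_mul, ee_zero, map_one, mul_one] at this
    rw [intervalIntegral.integral_const_mul, ← this, mul_zero]
  have hyp : ∀ s, y (s + 1) = y s := by
    intro s
    have h1 : Function.Periodic (fun r => Complex.I * Y r) 1 := fun r => by simp only [hYp]
    have h2 := h1.intervalIntegral_add_eq s 0
    rw [zero_add, hY0] at h2
    have h3 := intervalIntegral.integral_add_adjacent_intervals (a := 0) (b := s) (c := s + 1)
      (hcI.intervalIntegrable (μ := volume) _ _) (hcI.intervalIntegrable _ _)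
    rw [h2, add_zero] at h3
    exact h3.symm
  have hyc' : Continuous fun s => (-1) * y s := continuous_const.mul hyc
  have hxyc : Continuous fun s => x s + (-1) * y s := hx.add hyc'
  have hfc : ∀ k : ℤ, k ≠ 0 → fc (fun s => x s + (-1) * y s) k = 0 := by
    intro k hk
    rw [fc_add hx hyc', fc_const_mul]
    have h1 := fc_deriv hyd hcI (by have := hyp 0; rwa [zero_add] at this) k
    rw [fc_const_mul, ← h k] at h1
    have h2 : 2 * (π : ℂ) * Complex.I * k ≠ 0 := by simp [hk, Real.pi_ne_zero]
    have h3 : 2 * (π : ℂ) * Complex.I * k * (fc x k + -1 * fc y k) = 0 := by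
      linear_combination h1
    exact (mul_eq_zero.1 h3).resolve_left h2
  have hconst := const_of_fc_eq_zero hxyc
    (fun s => by simp only [hxp, hyp]) hfc
  have hxy : x = fun s => y s + fc (fun s => x s + (-1) * y s) 0 := by
    ext s
    rw [← hconst s]; ring
  rw [hxy]
  exact (hyd t).add_const _

/-- Existence of a `1`-periodic solution of `x' = i ∇H(x)` with positive action, for
`H = π ∑ λⱼ |zⱼ|² + K`. The quadratic part of `H` contributes nothing to the action
`∫ ½ ⟨∇H(x), x⟩ - H(x)`. -/
theorem HamData.exists_periodic_orbit (h : HamData lam K G p M L A) :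
    ∃ x : ℝ → Fin 2 → ℂ, (∀ t, x (t + 1) = x t) ∧
      (∀ t j, HasDerivAt (fun s => x s j)
        (Complex.I * (2 * π * lam j * x t j + G (x t) j)) t) ∧
      0 < ∫ t in (0 : ℝ)..1,
        ((1 / 2) * ∑ j, ((starRingEnd ℂ) (G (x t) j) * x t j).re - K (x t)) := by
  obtain ⟨β, hβ, hex⟩ := h.exists_almost_critical
  obtain ⟨B, hB⟩ := h.exists_weighted_bound
  set S : ℕ → Finset ℤ := fun n => Finset.Icc (-((n + 1 : ℕ) : ℤ)) ((n + 1 : ℕ) : ℤ) with hS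
  set η : ℕ → ℝ := fun n => 1 / ((n : ℝ) + 1) with hη
  have hηpos : ∀ n, 0 < η n := fun n => by positivity
  have hη1 : ∀ n, η n ≤ 1 := fun n => by
    rw [hη]; simp only; rw [div_le_one (by positivity)]; linarith [Nat.cast_nonneg (α := ℝ) n]
  choose C hC0 hC1 hC2 using fun n : ℕ =>
    hex (n + 1) (Nat.le_add_left 1 n) (η n ^ 2) (pow_pos (hηpos n) 2)
  have hw : ∀ n j, ∀ F : Finset ℤ, ∑ k ∈ F, (1 + |(k : ℝ)|) ^ 2 * ‖C n k j‖ ^ 2 ≤ B := by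
    intro n j F
    exact hB (S n) (C n) (hC0 n) ((hC2 n).trans (pow_le_one₀ (hηpos n).le (hη1 n))) j F
  have hcb : ∀ n k j, ‖C n k j‖ ≤ Real.sqrt B := by
    intro n k j
    apply Real.le_sqrt_of_sq_le
    have := hw n j {k}
    rw [Finset.sum_singleton] at this
    have h1 : 1 ≤ (1 + |(k : ℝ)|) ^ 2 := one_le_pow₀ (by linarith [abs_nonneg (k : ℝ)])
    nlinarith [sq_nonneg ‖C n k j‖]
  -- a coefficientwise convergent subsequence
  have hcomp : IsCompact (Set.univ.pi fun _ : ℤ => Set.univ.pi fun _ : Fin 2 =>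
      Metric.closedBall (0 : ℂ) (Real.sqrt B)) :=
    isCompact_univ_pi fun _ => isCompact_univ_pi fun _ => isCompact_closedBall _ _
  obtain ⟨c, -, ψ, hψ, hlim⟩ := hcomp.tendsto_subseq (x := C) (fun n => by
    intro k _ j _
    simpa using hcb n k j)
  have hlimk : ∀ k j, Tendsto (fun n => C (ψ n) k j) atTop (𝓝 (c k j)) := fun k j =>
    tendsto_pi_nhds.1 (tendsto_pi_nhds.1 hlim k) j
  have hT := fun j => tendsto_tsum_norm_sub_of_weighted (u := fun n k => C (ψ n) k j)
    (v := fun k => c k j) (B := B) (fun n F => hw (ψ n) j F) (fun k => hlimk k j)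
  have hsum := fun j => (summable_norm_of_weighted (hT j).1).2.1
  set x : ℝ → Fin 2 → ℂ := fun t j => ∑' k, c k j * ee k t with hx
  have hxper : ∀ t, x (t + 1) = x t := fun t => by
    ext j; simp only [hx, ee_periodic]
  have hxcj : ∀ j, Continuous fun t => x t j := fun j =>
    continuous_tsum (fun k => continuous_const.mul (continuous_ee k)) (hsum j) (fun k t => by
      rw [norm_mul, norm_ee, mul_one])
  have hxc : Continuous x := continuous_pi hxcj
  set X : ℕ → ℝ → Fin 2 → ℂ := fun n => loopS (S (ψ n)) (C (ψ n)) with hX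
  have hXc : ∀ n, Continuous (X n) := fun n => continuous_loopS _ _
  have hXts : ∀ n t j, X n t j = ∑' k, C (ψ n) k j * ee k t := fun n t j => by
    rw [tsum_eq_sum (s := S (ψ n))]
    · rfl
    · intro k hk; rw [hC0 (ψ n) k hk, zero_mul]
  have hsumn : ∀ n j, Summable fun k => ‖C (ψ n) k j‖ := fun n j =>
    (summable_norm_of_weighted (hw (ψ n) j)).2.1
  have hsn : ∀ n j t, Summable fun k => C (ψ n) k j * ee k t := fun n j t =>
    Summable.of_norm ((hsumn n j).congr fun k => by rw [norm_mul, norm_ee, mul_one])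
  have hs : ∀ j t, Summable fun k => c k j * ee k t := fun j t =>
    Summable.of_norm ((hsum j).congr fun k => by rw [norm_mul, norm_ee, mul_one])
  have hXlimj : ∀ t j, Tendsto (fun n => X n t j) atTop (𝓝 (x t j)) := by
    intro t j
    rw [tendsto_iff_norm_sub_tendsto_zero]
    refine squeeze_zero (fun n => norm_nonneg _) (fun n => ?_) (hT j).2
    rw [hXts, hx]
    simp only
    rw [← (hsn n j t).tsum_sub (hs j t)]
    have e : ∀ k, ‖C (ψ n) k j * ee k t - c k j * ee k t‖ = ‖C (ψ n) k j - c k j‖ := fun k => by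
      rw [← sub_mul, norm_mul, norm_ee, mul_one]
    have hsd : Summable fun k => ‖C (ψ n) k j * ee k t - c k j * ee k t‖ :=
      ((hsn n j t).sub (hs j t)).norm
    refine (norm_tsum_le_tsum_norm hsd).trans (le_of_eq ?_)
    simp_rw [e]
  have hXlim : ∀ t, Tendsto (fun n => X n t) atTop (𝓝 (x t)) := fun t =>
    tendsto_pi_nhds.2 fun j => hXlimj t j
  set b := B + ∑' k : ℤ, ((1 + |(k : ℝ)|) ^ 2)⁻¹ with hb
  have hXb : ∀ n t j, ‖X n t j‖ ≤ b := by
    intro n t j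
    rw [hXts]
    refine (norm_tsum_le_tsum_norm (hsn n j t).norm).trans ?_
    simp_rw [norm_mul, norm_ee, mul_one]
    exact (summable_norm_of_weighted (hw (ψ n) j)).2.2.2
  have hψt : Tendsto ψ atTop atTop := hψ.tendsto_atTop
  -- Fourier coefficients of the limit
  have hfcx : ∀ k j, fc (fun t => x t j) k = c k j := by
    intro k j
    have h1 : Tendsto (fun n => fc (fun t => X n t j) k) atTop (𝓝 (fc (fun t => x t j) k)) := by
      refine tendsto_integral_of_bounded (fun n => ((continuous_apply j).comp (hXc n)).mul
        (continuous_conj_ee k)) b (fun n t => ?_) fun t => (hXlimj t j).mul_const _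
      rw [norm_mul, RCLike.norm_conj, norm_ee, mul_one]
      exact hXb n t j
    refine tendsto_nhds_unique h1 ((hlimk k j).congr fun n => ?_)
    simp only [hX]
    rw [fc_loopS]
    split_ifs with hk
    · rfl
    · exact hC0 (ψ n) k hk j
  have hηlim : Tendsto (fun n => η (ψ n)) atTop (𝓝 0) :=
    tendsto_one_div_add_atTop_nhds_zero_nat.comp hψt
  have hgb : ∀ n k j, k ∈ S (ψ n) → ‖gradS lam G (S (ψ n)) (C (ψ n)) k j‖ ≤ η (ψ n) := by
    intro n k j hk
    have h1 : ‖gradS lam G (S (ψ n)) (C (ψ n)) k j‖ ^ 2 ≤ η (ψ n) ^ 2 := by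
      refine le_trans ?_ (hC2 (ψ n))
      exact (Finset.single_le_sum (f := fun j => ‖gradS lam G (S (ψ n)) (C (ψ n)) k j‖ ^ 2)
        (fun j _ => by positivity) (Finset.mem_univ j)).trans
        (Finset.single_le_sum (f := fun k => ∑ j, ‖gradS lam G (S (ψ n)) (C (ψ n)) k j‖ ^ 2)
        (fun k _ => Finset.sum_nonneg fun j _ => by positivity) hk)
    exact abs_le_of_sq_le_sq' h1 (hηpos _).le |>.2
  have hGc : ∀ j, Continuous fun t => G (x t) j := fun j =>
    (continuous_apply j).comp (h.contG.comp hxc)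
  have hGXlim : ∀ t j, Tendsto (fun n => G (X n t) j) atTop (𝓝 (G (x t) j)) := fun t j =>
    ((continuous_apply j).comp h.contG).continuousAt.tendsto.comp (hXlim t)
  have hGXc : ∀ n j, Continuous fun t => G (X n t) j := fun n j =>
    (continuous_apply j).comp (h.contG.comp (hXc n))
  have hcrit : ∀ k j, 2 * π * (k - lam j) * c k j = fc (fun t => G (x t) j) k := by
    intro k j
    have h1 : Tendsto (fun n => fc (fun t => G (X n t) j) k) atTop
        (𝓝 (fc (fun t => G (x t) j) k)) := by
      refine tendsto_integral_of_bounded (fun n => (hGXc n j).mul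
        (continuous_conj_ee k)) M (fun n t => ?_) fun t => (hGXlim t j).mul_const _
      rw [norm_mul, RCLike.norm_conj, norm_ee, mul_one]
      exact h.boundG _ j
    have h2 : Tendsto (fun n => gradS lam G (S (ψ n)) (C (ψ n)) k j) atTop
        (𝓝 (2 * π * (k - lam j) * c k j - fc (fun t => G (x t) j) k)) :=
      ((hlimk k j).const_mul _).sub h1
    have h3 : Tendsto (fun n => gradS lam G (S (ψ n)) (C (ψ n)) k j) atTop (𝓝 0) := by
      refine squeeze_zero_norm' ?_ hηlim
      filter_upwards [hψt.eventually_ge_atTop k.natAbs] with n hn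
      apply hgb
      simp only [hS, Finset.mem_Icc]
      omega
    exact sub_eq_zero.1 (tendsto_nhds_unique h2 h3)
  refine ⟨x, hxper, fun t j => ?_, ?_⟩
  · have hlx : Continuous fun s => 2 * (π : ℂ) * lam j * x s j := continuous_const.mul (hxcj j)
    have hY : Continuous fun s => 2 * (π : ℂ) * lam j * x s j + G (x s) j := hlx.add (hGc j)
    refine hasDerivAt_of_fc (hxcj j) hY
      (fun s => by rw [hxper]) (fun s => by simp only [hxper]) (fun k => ?_) t
    rw [fc_add hlx (hGc j), fc_const_mul, hfcx, ← hcrit]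
    ring
  · refine lt_of_lt_of_le hβ ?_
    -- the action of the approximations converges
    have hnb : ∀ z : Fin 2 → ℂ, (∀ j, ‖z j‖ ≤ b) →
        ‖(1 / 2) * ∑ j, ((starRingEnd ℂ) (G z j) * z j).re - K z‖ ≤ 2 * (M * b) + M := by
      intro z hz
      have hj : ∀ j, |((starRingEnd ℂ) (G z j) * z j).re| ≤ M * b := by
        intro j
        refine (Complex.abs_re_le_norm _).trans ?_
        rw [norm_mul, RCLike.norm_conj]
        exact mul_le_mul (h.boundG z j) (hz j) (norm_nonneg _)
          ((norm_nonneg _).trans (h.boundG z j))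
      have hk := h.boundK z
      rw [Real.norm_eq_abs, Fin.sum_univ_two]
      have := hj 0
      have := hj 1
      rw [abs_le] at *
      constructor <;> linarith
    have hcF : Continuous fun z : Fin 2 → ℂ =>
        (1 / 2) * ∑ j, ((starRingEnd ℂ) (G z j) * z j).re - K z := by
      refine Continuous.sub (continuous_const.mul (continuous_finsetSum _ fun j _ => ?_)) h.contK
      exact Complex.continuous_re.comp ((Complex.continuous_conj.comp
        ((continuous_apply j).comp h.contG)).mul (continuous_apply j))
    have hA : Tendsto (fun n => ∫ t in (0 : ℝ)..1,
        ((1 / 2) * ∑ j, ((starRingEnd ℂ) (G (X n t) j) * X n t j).re - K (X n t))) atTop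
        (𝓝 (∫ t in (0 : ℝ)..1,
        ((1 / 2) * ∑ j, ((starRingEnd ℂ) (G (x t) j) * x t j).re - K (x t)))) :=
      tendsto_integral_of_bounded (fun n => hcF.comp (hXc n)) (2 * (M * b) + M)
        (fun n t => hnb _ (hXb n t)) fun t => hcF.continuousAt.tendsto.comp (hXlim t)
    have hE : Tendsto (fun n => (∫ t in (0 : ℝ)..1,
        ((1 / 2) * ∑ j, ((starRingEnd ℂ) (G (X n t) j) * X n t j).re - K (X n t))) +
        η (ψ n) * (1 + 2 * B)) atTop (𝓝 ((∫ t in (0 : ℝ)..1,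
        ((1 / 2) * ∑ j, ((starRingEnd ℂ) (G (x t) j) * x t j).re - K (x t))) + 0 * (1 + 2 * B))) :=
      hA.add (hηlim.mul_const _)
    rw [zero_mul, add_zero] at hE
    refine ge_of_tendsto' hE fun n => ?_
    refine (hC1 (ψ n)).trans ?_
    show actS lam K (S (ψ n)) (C (ψ n)) ≤ _
    rw [h.actS_eq_of_gradS]
    refine add_le_add (le_refl _) ?_
    set g := gradS lam G (S (ψ n)) (C (ψ n)) with hg
    have hpos := hηpos (ψ n)
    have e1 : ∑ k ∈ S (ψ n), ∑ j, ((starRingEnd ℂ) (g k j) * C (ψ n) k j).re ≤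
        ∑ k ∈ S (ψ n), ∑ j, (1 / η (ψ n) * ‖g k j‖ ^ 2 + η (ψ n) * ‖C (ψ n) k j‖ ^ 2) := by
      refine Finset.sum_le_sum fun k _ => Finset.sum_le_sum fun j _ => ?_
      refine (Complex.re_le_norm _).trans ?_
      rw [norm_mul, RCLike.norm_conj]
      have e2 : 1 / η (ψ n) * ‖g k j‖ ^ 2 + η (ψ n) * ‖C (ψ n) k j‖ ^ 2 -
          2 * (‖g k j‖ * ‖C (ψ n) k j‖) = (‖g k j‖ - η (ψ n) * ‖C (ψ n) k j‖) ^ 2 / η (ψ n) := by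
        field_simp; ring
      have e3 : 0 ≤ (‖g k j‖ - η (ψ n) * ‖C (ψ n) k j‖) ^ 2 / η (ψ n) := by positivity
      have e4 : 0 ≤ ‖g k j‖ * ‖C (ψ n) k j‖ := by positivity
      linarith
    simp only [Finset.sum_add_distrib, ← Finset.mul_sum] at e1
    have e5 : 1 / η (ψ n) * ∑ k ∈ S (ψ n), ∑ j, ‖g k j‖ ^ 2 ≤ η (ψ n) := by
      rw [div_mul_eq_mul_div, one_mul, div_le_iff₀ hpos, ← sq]
      exact hC2 (ψ n)
    have e6 : ∑ k ∈ S (ψ n), ∑ j, ‖C (ψ n) k j‖ ^ 2 ≤ 2 * B := by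
      rw [Finset.sum_comm, Fin.sum_univ_two]
      have : ∀ j, ∑ k ∈ S (ψ n), ‖C (ψ n) k j‖ ^ 2 ≤ B := fun j => by
        refine le_trans (Finset.sum_le_sum fun k _ => ?_) (hw (ψ n) j (S (ψ n)))
        have h1 : 1 ≤ (1 + |(k : ℝ)|) ^ 2 := one_le_pow₀ (by linarith [abs_nonneg (k : ℝ)])
        nlinarith [sq_nonneg ‖C (ψ n) k j‖]
      linarith [this 0, this 1]
    have hB0 : 0 ≤ B := by simpa using hw 0 0 ∅
    nlinarith [mul_le_mul_of_nonneg_left e6 hpos.le, mul_nonneg hpos.le hB0]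

end

end

/-! ### Gradients and compactly supported perturbations -/

section
open Filter Topology
open scoped ContDiff

/-- The gradient of a real function on `ℂ²` with respect to the real inner product
`∑ Re (conj uⱼ vⱼ)`. -/
def gradE (F : (Fin 2 → ℂ) → ℝ) (z : Fin 2 → ℂ) (j : Fin 2) : ℂ :=
  ⟨fderiv ℝ F z (Pi.single j 1), fderiv ℝ F z (Pi.single j Complex.I)⟩

lemma sum_gradE (F : (Fin 2 → ℂ) → ℝ) (z w : Fin 2 → ℂ) :
    ∑ j, ((starRingEnd ℂ) (gradE F z j) * w j).re = fderiv ℝ F z w := by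
  have hw : w = ∑ j, ((w j).re • (Pi.single j (1 : ℂ) : Fin 2 → ℂ) +
      (w j).im • (Pi.single j Complex.I : Fin 2 → ℂ)) := by
    ext i
    rw [Finset.sum_apply]
    simp only [Pi.add_apply, Pi.smul_apply, Fin.sum_univ_two]
    fin_cases i <;> simp [Complex.re_add_im]
  conv_rhs => rw [hw]
  rw [map_sum]
  refine Finset.sum_congr rfl fun j _ => ?_
  rw [map_add, map_smul, map_smul]
  simp [gradE, Complex.mul_re]
  ring

lemma continuous_gradE {F : (Fin 2 → ℂ) → ℝ} (hF : ContDiff ℝ 2 F) : Continuous (gradE F) := by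
  have h := hF.continuous_fderiv (by norm_num)
  refine continuous_pi fun j => ?_
  have : (fun z => gradE F z j) = fun z => ((fderiv ℝ F z (Pi.single j 1) : ℝ) : ℂ) +
      (fderiv ℝ F z (Pi.single j Complex.I) : ℝ) * Complex.I := by
    ext z; exact (Complex.mk_eq_add_mul_I _ _)
  rw [this]
  have h1 : ∀ v, Continuous fun z => ((fderiv ℝ F z v : ℝ) : ℂ) := fun v =>
    Complex.continuous_ofReal.comp (h.clm_apply continuous_const)
  exact (h1 _).add ((h1 _).mul continuous_const)

lemma norm_single_two (j : Fin 2) (c : ℂ) : ‖(Pi.single j c : Fin 2 → ℂ)‖ = ‖c‖ := by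
  rw [Pi.norm_single]

lemma norm_mk_le (x y : ℝ) : ‖(⟨x, y⟩ : ℂ)‖ ≤ |x| + |y| := by
  simpa using Complex.norm_le_abs_re_add_abs_im ⟨x, y⟩

lemma gradE_sub_le (F : (Fin 2 → ℂ) → ℝ) (z w : Fin 2 → ℂ) (j : Fin 2) :
    ‖gradE F z j - gradE F w j‖ ≤ 2 * ‖fderiv ℝ F z - fderiv ℝ F w‖ := by
  have h1 : gradE F z j - gradE F w j = ⟨(fderiv ℝ F z - fderiv ℝ F w) (Pi.single j 1),
      (fderiv ℝ F z - fderiv ℝ F w) (Pi.single j Complex.I)⟩ := by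
    apply Complex.ext <;> simp [gradE]
  rw [h1]
  refine (norm_mk_le _ _).trans ?_
  have h2 := (fderiv ℝ F z - fderiv ℝ F w).le_opNorm (Pi.single j 1)
  have h3 := (fderiv ℝ F z - fderiv ℝ F w).le_opNorm (Pi.single j Complex.I)
  rw [norm_single_two, Real.norm_eq_abs] at h2 h3
  simp only [norm_one, Complex.norm_I, mul_one] at h2 h3
  linarith

lemma norm_gradE_le (F : (Fin 2 → ℂ) → ℝ) (z : Fin 2 → ℂ) (j : Fin 2) :
    ‖gradE F z j‖ ≤ 2 * ‖fderiv ℝ F z‖ := by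
  refine (norm_mk_le _ _).trans ?_
  have h2 := (fderiv ℝ F z).le_opNorm (Pi.single j 1)
  have h3 := (fderiv ℝ F z).le_opNorm (Pi.single j Complex.I)
  rw [norm_single_two, Real.norm_eq_abs] at h2 h3
  simp only [norm_one, Complex.norm_I, mul_one] at h2 h3
  linarith

lemma exists_lipschitz_fderiv {K : (Fin 2 → ℂ) → ℝ} (hK : ContDiff ℝ 2 K)
    (hc : HasCompactSupport K) : ∃ C, LipschitzWith C (fderiv ℝ K) :=
  ContDiff.lipschitzWith_of_hasCompactSupport (𝕂 := ℝ) (n := 1) (hc.fderiv ℝ)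
    (hK.fderiv_right (by norm_num)) (by norm_num)

/-- The quartic bound `H_quartic` holds because `H` vanishes near `p` and grows at most
quadratically. -/
lemma exists_hamData {lam : Fin 2 → ℝ} {K : (Fin 2 → ℂ) → ℝ} {p : Fin 2 → ℂ}
    (hl0 : 1 < lam 0 ∧ lam 0 < 2) (hl1 : 0 < lam 1 ∧ lam 1 < 1) (hK : ContDiff ℝ 2 K)
    (hc : HasCompactSupport K) (hH : ∀ z, 0 ≤ ∑ j, π * lam j * ‖z j‖ ^ 2 + K z)
    (hp : ∀ᶠ z in 𝓝 p, ∑ j, π * lam j * ‖z j‖ ^ 2 + K z = 0) :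
    ∃ M L A, HamData lam K (gradE K) p M L A := by
  obtain ⟨M₁, hM₁⟩ := hc.exists_bound_of_continuous hK.continuous
  obtain ⟨M₂, hM₂⟩ := (hc.fderiv ℝ).exists_bound_of_continuous
    (hK.continuous_fderiv (by norm_num))
  obtain ⟨C, hC⟩ := exists_lipschitz_fderiv hK hc
  obtain ⟨r, hr, hball⟩ := Metric.eventually_nhds_iff.1 hp
  have hM0 : 0 ≤ M₁ := (norm_nonneg _).trans (hM₁ 0)
  have hM0' : 0 ≤ M₂ := (norm_nonneg _).trans (hM₂ 0)
  have hnorm : ∀ (w : Fin 2 → ℂ) (n : ℕ), ‖w‖ ^ n ≤ ∑ j, ‖w j‖ ^ n ∨ n = 0 := by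
    intro w n
    by_cases hn : n = 0
    · exact Or.inr hn
    left
    obtain ⟨j, hj⟩ : ∃ j, ‖w‖ = ‖w j‖ := by
      obtain ⟨j, -, hj⟩ := Finset.exists_mem_eq_sup Finset.univ Finset.univ_nonempty (fun j => ‖w j‖₊)
      exact ⟨j, by rw [← coe_nnnorm, Pi.nnnorm_def, hj, coe_nnnorm]⟩
    rw [hj]
    exact Finset.single_le_sum (f := fun j => ‖w j‖ ^ n) (fun j _ => by positivity)
      (Finset.mem_univ j)
  refine ⟨M₁ + 2 * M₂, C, 8 * π / r ^ 2 + (8 * π * ‖p‖ ^ 2 + M₁) / r ^ 4 + 1,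
    hl0, hl1, hK.continuous, continuous_gradE hK, ?_, ?_, ?_, C.2, hH, by positivity, ?_⟩
  · intro z; have := hM₁ z; rw [Real.norm_eq_abs] at this; linarith
  · intro z j; have := norm_gradE_le K z j; linarith [hM₂ z]
  · intro z w
    rw [sum_gradE]
    have hseg : ∀ y ∈ segment ℝ z (z + w), ‖fderiv ℝ K y - fderiv ℝ K z‖ ≤ C * ‖w‖ := by
      intro y hy
      have h1 := hC.dist_le_mul y z
      rw [dist_eq_norm, dist_eq_norm] at h1
      refine h1.trans ?_
      gcongr
      have := norm_sub_le_of_mem_segment hy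
      simpa using this
    have := (convex_segment z (z + w)).norm_image_sub_le_of_norm_fderiv_le'
      (f := K) (φ := fderiv ℝ K z) (fun y _ => (hK.differentiable (by norm_num)).differentiableAt) hseg
      (left_mem_segment ℝ _ _) (right_mem_segment ℝ _ _)
    rw [add_sub_cancel_left, Real.norm_eq_abs] at this
    have h2 := (abs_le.1 this).1
    have h3 := (hnorm w 2).resolve_right (by norm_num)
    have h4 : (C : ℝ) * ‖w‖ ^ 2 ≤ C * ∑ j, ‖w j‖ ^ 2 := mul_le_mul_of_nonneg_left h3 C.2
    nlinarith
  · intro z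
    have h4 := (hnorm z 4).resolve_right (by norm_num)
    have hs4 : 0 ≤ ∑ j, ‖z j‖ ^ 4 := Finset.sum_nonneg fun j _ => by positivity
    rcases lt_or_ge ‖z‖ r with hz | hz
    · rw [hball (by simpa [dist_eq_norm] using hz)]
      positivity
    · have hpz : ∀ j, ‖(p + z) j‖ ^ 2 ≤ 2 * (‖p‖ ^ 2 + ‖z‖ ^ 2) := by
        intro j
        have h1 : ‖(p + z) j‖ ≤ ‖p‖ + ‖z‖ := (norm_le_pi_norm (p + z) j).trans (norm_add_le _ _)
        have h2 : ‖(p + z) j‖ ^ 2 ≤ (‖p‖ + ‖z‖) ^ 2 := by gcongr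
        nlinarith [sq_nonneg (‖p‖ - ‖z‖)]
      have hb : ∀ j, lam j ≤ 2 → 0 ≤ lam j →
          π * lam j * ‖(p + z) j‖ ^ 2 ≤ 4 * π * (‖p‖ ^ 2 + ‖z‖ ^ 2) := by
        intro j hj hj0
        have h1 : π * lam j * ‖(p + z) j‖ ^ 2 ≤ π * 2 * (2 * (‖p‖ ^ 2 + ‖z‖ ^ 2)) := by
          have := hpz j
          gcongr
        linarith
      have h5 : ∑ j, π * lam j * ‖(p + z) j‖ ^ 2 + K (p + z) ≤
          8 * π * ‖z‖ ^ 2 + (8 * π * ‖p‖ ^ 2 + M₁) := by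
        rw [Fin.sum_univ_two]
        have := hb 0 hl0.2.le (by linarith)
        have := hb 1 (by linarith) hl1.1.le
        have := (le_abs_self _).trans (hM₁ (p + z))
        linarith
      have hpos : 0 < ‖z‖ := hr.trans_le hz
      have h6 : ‖z‖ ^ 2 ≤ ‖z‖ ^ 4 / r ^ 2 := by
        rw [le_div_iff₀ (by positivity)]
        have : r ^ 2 ≤ ‖z‖ ^ 2 := by gcongr
        nlinarith [sq_nonneg ‖z‖]
      have h7 : 1 ≤ ‖z‖ ^ 4 / r ^ 4 := by
        rw [le_div_iff₀ (by positivity), one_mul]; gcongr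
      calc ∑ j, π * lam j * ‖(p + z) j‖ ^ 2 + K (p + z)
          ≤ 8 * π * ‖z‖ ^ 2 + (8 * π * ‖p‖ ^ 2 + M₁) * 1 := by linarith
        _ ≤ 8 * π * (‖z‖ ^ 4 / r ^ 2) + (8 * π * ‖p‖ ^ 2 + M₁) * (‖z‖ ^ 4 / r ^ 4) := by gcongr
        _ = (8 * π / r ^ 2 + (8 * π * ‖p‖ ^ 2 + M₁) / r ^ 4) * ‖z‖ ^ 4 := by ring
        _ ≤ (8 * π / r ^ 2 + (8 * π * ‖p‖ ^ 2 + M₁) / r ^ 4 + 1) * ‖z‖ ^ 4 := by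
            exact mul_le_mul_of_nonneg_right (by linarith) (by positivity)
        _ ≤ _ := by gcongr

end

/-! ### Radial profiles -/

section
open Filter Topology
open scoped ContDiff

/-- A smooth radial profile on `[0, R]` that rises from `0` to a value `m > a` with slope less
than one. -/
lemma exists_profile {a R : ℝ} (ha : 0 < a) (haR : a < R) :
    ∃ (f : ℝ → ℝ) (γ m R' : ℝ), 0 < γ ∧ R' < R ∧ a < m ∧ ContDiff ℝ ∞ f ∧
      (∀ s ≤ γ, f s = 0) ∧ (∀ s, R' ≤ s → f s = m) ∧ (∀ s, 0 ≤ f s) ∧ (∀ s, f s ≤ m) ∧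
      (∀ s, 0 ≤ deriv f s) ∧ ∀ s, deriv f s < 1 := by
  obtain ⟨γ, hγ⟩ : ∃ γ, γ = (R - a) / 8 := ⟨_, rfl⟩
  have hγ0 : 0 < γ := by rw [hγ]; linarith
  have hR : 0 < R := ha.trans haR
  let χ : ContDiffBump (R / 2 : ℝ) := ⟨R / 2 - 2 * γ, R / 2 - γ, by linarith, by linarith⟩
  obtain ⟨θ, hθ⟩ : ∃ θ, θ = 1 - γ / R := ⟨_, rfl⟩
  have hγR : γ / R < 1 := by rw [div_lt_one hR]; linarith
  have hγR0 : 0 < γ / R := by positivity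
  have hθ0 : 0 < θ := by linarith
  have hθ1 : θ < 1 := by linarith
  have hχc : Continuous fun s => χ s := χ.continuous
  have hInt : ∀ u v, IntervalIntegrable (fun s => χ s) volume u v :=
    fun u v => hχc.intervalIntegrable u v
  have hχ0 : ∀ s, s ≤ γ → χ s = 0 := fun s hs => χ.zero_of_le_dist (by
    rw [Real.dist_eq]; show R / 2 - γ ≤ _
    rw [abs_of_nonpos (by linarith)]; linarith)
  have hχ0' : ∀ s, R - γ ≤ s → χ s = 0 := fun s hs => χ.zero_of_le_dist (by
    rw [Real.dist_eq]; show R / 2 - γ ≤ _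
    rw [abs_of_nonneg (by linarith)]; linarith)
  have hχ1 : ∀ s, 2 * γ ≤ s → s ≤ R - 2 * γ → χ s = 1 := fun s hs hs' =>
    χ.one_of_mem_closedBall (by
      rw [Metric.mem_closedBall, Real.dist_eq, abs_le]
      show -(R / 2 - 2 * γ) ≤ _ ∧ _ ≤ R / 2 - 2 * γ
      constructor <;> linarith)
  have hder : ∀ s, HasDerivAt (fun s => θ * ∫ t in γ..s, χ t) (θ * χ s) s := fun s =>
    (intervalIntegral.integral_hasDerivAt_right (hInt _ _)
      (hχc.stronglyMeasurableAtFilter _ _) hχc.continuousAt).const_mul θ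
  have hderiv : deriv (fun s => θ * ∫ t in γ..s, χ t) = fun s => θ * χ s :=
    funext fun s => (hder s).deriv
  have hmono : Monotone (fun s => θ * ∫ t in γ..s, χ t) :=
    monotone_of_deriv_nonneg (fun s => (hder s).differentiableAt) fun s => by
      rw [hderiv]; exact mul_nonneg hθ0.le χ.nonneg
  have hz : ∀ s ≤ γ, θ * ∫ t in γ..s, χ t = 0 := by
    intro s hs
    rw [intervalIntegral.integral_zero_ae, mul_zero]
    refine Filter.Eventually.of_forall fun t ht => hχ0 t ?_
    rw [uIoc_of_ge hs] at ht
    exact ht.2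
  have hm : ∀ s, R - γ ≤ s → θ * ∫ t in γ..s, χ t = θ * ∫ t in γ..(R - γ), χ t := by
    intro s hs
    rw [← intervalIntegral.integral_add_adjacent_intervals (hInt γ (R - γ)) (hInt _ s)]
    rw [intervalIntegral.integral_zero_ae (a := R - γ), add_zero]
    refine Filter.Eventually.of_forall fun t ht => hχ0' t ?_
    rw [uIoc_of_le hs] at ht
    exact ht.1.le
  refine ⟨fun s => θ * ∫ t in γ..s, χ t, γ, θ * ∫ t in γ..(R - γ), χ t, R - γ, hγ0, by linarith,
    ?_, ?_, hz, hm, ?_, ?_, ?_, ?_⟩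
  · have h1 : ∫ t in (2 * γ)..(R - 2 * γ), χ t = R - 4 * γ := by
      rw [intervalIntegral.integral_congr (g := fun _ => (1 : ℝ))]
      · simp; ring
      · intro t ht
        rw [uIcc_of_le (by linarith)] at ht
        exact hχ1 t ht.1 ht.2
    have h2 : R - 4 * γ ≤ ∫ t in γ..(R - γ), χ t := by
      rw [← h1]
      exact intervalIntegral.integral_mono_interval (by linarith) (by linarith) (by linarith)
        (Filter.Eventually.of_forall fun _ => χ.nonneg) (hInt _ _)
    have h3 : θ * (R - 4 * γ) ≤ θ * ∫ t in γ..(R - γ), χ t := by gcongr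
    have h4 : θ * (R - 4 * γ) = R - 5 * γ + 4 * γ * (γ / R) := by
      rw [hθ]; field_simp; ring
    have : 0 < 4 * γ * (γ / R) := by positivity
    linarith
  · rw [contDiff_infty_iff_deriv, hderiv]
    exact ⟨fun s => (hder s).differentiableAt, contDiff_const.mul χ.contDiff⟩
  · intro s
    rcases le_total s γ with h | h
    · exact (hz s h).ge
    · exact (hz γ le_rfl).symm.le.trans (hmono h)
  · intro s
    rcases le_total s (R - γ) with h | h
    · exact hmono h
    · exact (hm s h).le
  · intro s; rw [hderiv]; exact mul_nonneg hθ0.le χ.nonneg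
  · intro s; rw [hderiv]; show θ * χ s < 1
    have := χ.le_one (x := s)
    have := χ.nonneg (x := s)
    nlinarith

/-- The profile outside the image of the ball: `F s = κ s + k s` equals `m` for `s ≤ 1` and `κ s`
for large `s`. The last clause says `s F'(s) ≤ F s`, so orbits outside the image of the ball have
nonpositive action. -/
lemma exists_outer_profile {κ m : ℝ} (hκ : 0 < κ) (hκm : κ < m) :
    ∃ (k : ℝ → ℝ) (s₀ : ℝ), ContDiff ℝ ∞ k ∧ (∀ s ≤ 1, k s = m - κ * s) ∧
      (∀ s, s₀ ≤ s → k s = 0) ∧ (∀ s, 0 ≤ s → 0 ≤ κ * s + k s) ∧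
      ∀ s, 0 ≤ s → s * deriv k s - k s ≤ 0 := by
  obtain ⟨s₀, hs₀⟩ : ∃ s, s = m / κ := ⟨_, rfl⟩
  have hs1 : 1 < s₀ := by rw [hs₀, one_lt_div hκ]; exact hκm
  have hκs : κ * s₀ = m := by rw [hs₀]; field_simp
  let σ : ℝ → ℝ := fun s => Real.smoothTransition ((s - 1) / (s₀ - 1))
  have hσc : ContDiff ℝ ∞ σ := Real.smoothTransition.contDiff.comp
    ((contDiff_id.sub contDiff_const).div_const _)
  have hσ0 : ∀ s, 0 ≤ σ s := fun s => Real.smoothTransition.nonneg _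
  have hσ1 : ∀ s, σ s ≤ 1 := fun s => Real.smoothTransition.le_one _
  have hσz : ∀ s ≤ 1, σ s = 0 := fun s hs => Real.smoothTransition.zero_of_nonpos
    (div_nonpos_of_nonpos_of_nonneg (by linarith) (by linarith))
  have hσo : ∀ s, s₀ ≤ s → σ s = 1 := fun s hs => Real.smoothTransition.one_of_one_le
    (by rw [one_le_div (by linarith)]; linarith)
  have hσm : Monotone σ := fun s t h => Real.smoothTransition.monotone (by
    have : 0 < s₀ - 1 := by linarith
    gcongr)
  have hσd : ∀ s, HasDerivAt σ (deriv σ s) s := fun s =>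
    (hσc.differentiable (by norm_num)).differentiableAt.hasDerivAt
  refine ⟨fun s => (1 - σ s) * (m - κ * s), s₀, ?_, ?_, ?_, ?_, ?_⟩
  · exact (contDiff_const.sub hσc).mul (contDiff_const.sub (contDiff_const.mul contDiff_id))
  · intro s hs; simp only [hσz s hs]; ring
  · intro s hs; simp only [hσo s hs]; ring
  · intro s hs
    have h1 := hσ0 s
    have h2 := hσ1 s
    have : κ * s + (1 - σ s) * (m - κ * s) = (1 - σ s) * m + σ s * (κ * s) := by ring
    rw [this]
    have : 0 ≤ κ * s := by positivity
    have : 0 < m := hκ.trans hκm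
    have : 0 ≤ 1 - σ s := by linarith
    positivity
  · intro s hs
    have hd : HasDerivAt (fun s => (1 - σ s) * (m - κ * s))
        ((-deriv σ s) * (m - κ * s) + (1 - σ s) * (-(κ * 1))) s :=
      ((hσd s).const_sub 1).mul (((hasDerivAt_id s).const_mul κ).const_sub m)
    rw [hd.deriv]
    have h0 : 0 ≤ deriv σ s := hσm.deriv_nonneg
    have h2 := hσ1 s
    have hm : 0 < m := hκ.trans hκm
    have h3 : 0 ≤ deriv σ s * (m - κ * s) := by
      rcases le_or_gt s s₀ with h | h
      · refine mul_nonneg h0 ?_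
        nlinarith
      · have : deriv σ s = 0 := by
          have he : σ =ᶠ[𝓝 s] fun _ => 1 := by
            filter_upwards [lt_mem_nhds h] with t ht using hσo t ht.le
          rw [he.deriv_eq]; simp
        rw [this, zero_mul]
    have h4 : 0 ≤ s * (deriv σ s * (m - κ * s)) := mul_nonneg hs h3
    have h5 : 0 ≤ (1 - σ s) * m := mul_nonneg (by linarith) hm.le
    nlinarith

end

/-! ### Linear symplectic maps and quadratic forms -/

section
open Filter Topology
open scoped ContDiff

lemma stdSymp_eq_re (u v : Fin 2 → ℂ) :
    stdSymp 2 (fun j => Complex.I * u j) v = -∑ j, ((starRingEnd ℂ) (u j) * v j).re := by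
  simp only [stdSymp, ← Finset.sum_neg_distrib]
  refine Finset.sum_congr rfl fun j _ => ?_
  simp [Complex.mul_im, Complex.mul_re]
  ring

lemma stdSymp_sub_left (u u' v : Fin 2 → ℂ) :
    stdSymp 2 (u - u') v = stdSymp 2 u v - stdSymp 2 u' v := by
  simp only [stdSymp, ← Finset.sum_sub_distrib]
  refine Finset.sum_congr rfl fun j _ => ?_
  simp; ring

lemma eq_zero_of_stdSymp {u : Fin 2 → ℂ} (h : ∀ v, stdSymp 2 u v = 0) : u = 0 := by
  have h1 := h (fun j => Complex.I * u j)
  have h2 : stdSymp 2 u (fun j => Complex.I * u j) = ∑ j, ‖u j‖ ^ 2 := by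
    simp only [stdSymp]
    refine Finset.sum_congr rfl fun j _ => ?_
    rw [Complex.sq_norm, Complex.normSq_apply]
    simp [Complex.mul_im, Complex.mul_re]
  rw [h2, Finset.sum_eq_zero_iff_of_nonneg (fun j _ => by positivity)] at h1
  ext j
  simpa using h1 j (Finset.mem_univ j)

lemma injective_of_symplectic {A : (Fin 2 → ℂ) →L[ℝ] (Fin 2 → ℂ)}
    (hA : ∀ v w, stdSymp 2 (A v) (A w) = stdSymp 2 v w) : Function.Injective A := by
  rw [injective_iff_map_eq_zero]
  intro v hv
  refine eq_zero_of_stdSymp fun w => ?_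
  rw [← hA, hv]
  simp [stdSymp]

/-- A linear symplectic map of `ℂ²` as a continuous linear equivalence. -/
lemma exists_equiv_of_symplectic {A : (Fin 2 → ℂ) →L[ℝ] (Fin 2 → ℂ)}
    (hA : ∀ v w, stdSymp 2 (A v) (A w) = stdSymp 2 v w) :
    ∃ e : (Fin 2 → ℂ) ≃L[ℝ] (Fin 2 → ℂ), (e : (Fin 2 → ℂ) →L[ℝ] (Fin 2 → ℂ)) = A := by
  let e := LinearEquiv.ofInjectiveEndo (A : (Fin 2 → ℂ) →ₗ[ℝ] (Fin 2 → ℂ))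
    (injective_of_symplectic hA)
  exact ⟨e.toContinuousLinearEquiv, by ext v; rfl⟩

/-- The quadratic form `∑ π lⱼ |zⱼ|²`. -/
def quadE (l : Fin 2 → ℝ) (z : Fin 2 → ℂ) : ℝ := ∑ j, π * l j * ‖z j‖ ^ 2

lemma contDiff_quadE (l : Fin 2 → ℝ) {n : WithTop ℕ∞} : ContDiff ℝ n (quadE l) := by
  unfold quadE
  refine ContDiff.sum fun j _ => contDiff_const.mul ?_
  exact (contDiff_norm_sq ℝ).comp (contDiff_apply ℝ ℂ j)

lemma quadE_nonneg {l : Fin 2 → ℝ} (hl : ∀ j, 0 ≤ l j) (z : Fin 2 → ℂ) : 0 ≤ quadE l z :=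
  Finset.sum_nonneg fun j _ => by have := hl j; positivity

lemma fderiv_quadE (l : Fin 2 → ℝ) (z w : Fin 2 → ℂ) :
    fderiv ℝ (quadE l) z w = ∑ j, ((starRingEnd ℂ) (2 * π * l j * z j) * w j).re := by
  have hd : ∀ j : Fin 2, HasFDerivAt (fun z : Fin 2 → ℂ => ‖z j‖ ^ 2)
      ((2 • (innerSL ℝ (z j))).comp (ContinuousLinearMap.proj (R := ℝ) (φ := fun _ : Fin 2 => ℂ) j)) z :=
    fun j => HasFDerivAt.comp (g := fun c : ℂ => ‖c‖ ^ 2) z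
      (hasStrictFDerivAt_norm_sq (z j)).hasFDerivAt
      (ContinuousLinearMap.proj (R := ℝ) (φ := fun _ : Fin 2 => ℂ) j).hasFDerivAt
  have : HasFDerivAt (quadE l) (∑ j, (π * l j) •
      ((2 • (innerSL ℝ (z j))).comp (ContinuousLinearMap.proj (R := ℝ) (φ := fun _ : Fin 2 => ℂ) j))) z :=
    HasFDerivAt.fun_sum fun j _ => (hd j).const_mul _
  rw [this.fderiv]
  simp only [sum_apply]
  refine Finset.sum_congr rfl fun j _ => ?_
  simp [Complex.inner, Complex.mul_re]
  ring

lemma isCompact_quadE_le {l : Fin 2 → ℝ} (hl : ∀ j, 0 < l j) (s : ℝ) :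
    IsCompact {z | quadE l z ≤ s} := by
  refine Metric.isCompact_of_isClosed_isBounded
    (isClosed_le (contDiff_quadE l (n := 0)).continuous continuous_const) ?_
  rw [isBounded_iff_forall_norm_le]
  refine ⟨1 + |s| / (π * l 0) + |s| / (π * l 1), fun z hz => ?_⟩
  have h0 := hl 0
  have h1 := hl 1
  have hz' : π * l 0 * ‖z 0‖ ^ 2 + π * l 1 * ‖z 1‖ ^ 2 ≤ s := by
    simpa [quadE, Fin.sum_univ_two] using hz
  have hA : 0 ≤ |s| / (π * l 0) := by positivity
  have hB : 0 ≤ |s| / (π * l 1) := by positivity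
  have h3 : ‖z 0‖ ^ 2 ≤ |s| / (π * l 0) := by
    rw [le_div_iff₀ (by positivity)]
    have : 0 ≤ π * l 1 * ‖z 1‖ ^ 2 := by positivity
    linarith [le_abs_self s]
  have h4 : ‖z 1‖ ^ 2 ≤ |s| / (π * l 1) := by
    rw [le_div_iff₀ (by positivity)]
    have : 0 ≤ π * l 0 * ‖z 0‖ ^ 2 := by positivity
    linarith [le_abs_self s]
  rw [pi_norm_le_iff_of_nonneg (by positivity)]
  intro j
  fin_cases j
  · show ‖z 0‖ ≤ _
    nlinarith [sq_nonneg (‖z 0‖ - 1)]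
  · show ‖z 1‖ ≤ _
    nlinarith [sq_nonneg (‖z 1‖ - 1)]

/-- If the covector with gradient `g` pulls back under the symplectic map `A` to the one with
gradient `u`, then `A` carries the Hamiltonian vector `i u` to `i g`. -/
lemma symplectic_pushforward {A : (Fin 2 → ℂ) →L[ℝ] (Fin 2 → ℂ)}
    (hA : ∀ v w, stdSymp 2 (A v) (A w) = stdSymp 2 v w) (g u : Fin 2 → ℂ)
    (h : ∀ v, ∑ j, ((starRingEnd ℂ) (g j) * A v j).re = ∑ j, ((starRingEnd ℂ) (u j) * v j).re) :
    A (fun j => Complex.I * u j) = fun j => Complex.I * g j := by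
  obtain ⟨e, he⟩ := exists_equiv_of_symplectic hA
  rw [← sub_eq_zero]
  refine eq_zero_of_stdSymp fun v => ?_
  obtain ⟨w, rfl⟩ : ∃ w, A w = v := ⟨e.symm v, by rw [← he]; simp⟩
  rw [stdSymp_sub_left, hA, stdSymp_eq_re, stdSymp_eq_re, h, sub_self]

end

/-! ### Transport by a symplectic embedding -/

section
open Filter Topology
open scoped ContDiff

/-- The inverse function theorem for `φ`, whose differential is symplectic, hence invertible. -/
lemma exists_local_inverse {φ : (Fin 2 → ℂ) → (Fin 2 → ℂ)} {U : Set (Fin 2 → ℂ)} (hU : IsOpen U)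
    (hφ : ContDiffOn ℝ ∞ φ U)
    (hs : ∀ x ∈ U, ∀ v w, stdSymp 2 (fderiv ℝ φ x v) (fderiv ℝ φ x w) = stdSymp 2 v w)
    {y : Fin 2 → ℂ} (hy : y ∈ U) :
    ∃ g : (Fin 2 → ℂ) → (Fin 2 → ℂ), ContDiffAt ℝ ∞ g (φ y) ∧ g (φ y) = y ∧
      ∀ᶠ w in 𝓝 (φ y), g w ∈ U ∧ φ (g w) = w := by
  have hc : ContDiffAt ℝ ∞ φ y := hφ.contDiffAt (hU.mem_nhds hy)
  obtain ⟨e, he⟩ := exists_equiv_of_symplectic (hs y hy)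
  have hd : HasFDerivAt φ (e : (Fin 2 → ℂ) →L[ℝ] (Fin 2 → ℂ)) y := by
    rw [he]; exact (hc.differentiableAt (by norm_num)).hasFDerivAt
  have hsd := hc.hasStrictFDerivAt' hd (by norm_num)
  have hg : ContDiffAt ℝ ∞ (hc.localInverse hd (by norm_num)) (φ y) :=
    hc.to_localInverse hd (by norm_num)
  have hgy : hc.localInverse hd (by norm_num) (φ y) = y := hc.localInverse_apply_image hd (by norm_num)
  refine ⟨_, hg, hgy, ?_⟩
  have h1 : ∀ᶠ w in 𝓝 (φ y), hc.localInverse hd (by norm_num) w ∈ U :=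
    hg.continuousAt.eventually_mem (by rw [hgy]; exact hU.mem_nhds hy)
  exact h1.and hsd.eventually_right_inverse

open Classical in
/-- The function `F` on `U` transported by `φ` and extended by zero off `φ(U)`. -/
def pushF (φ : (Fin 2 → ℂ) → (Fin 2 → ℂ)) (U : Set (Fin 2 → ℂ)) (F : (Fin 2 → ℂ) → ℝ)
    (w : Fin 2 → ℂ) : ℝ :=
  if w ∈ φ '' U then F (Function.invFunOn φ U w) else 0

lemma pushF_apply {φ : (Fin 2 → ℂ) → (Fin 2 → ℂ)} {U : Set (Fin 2 → ℂ)} (hi : InjOn φ U)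
    (F : (Fin 2 → ℂ) → ℝ) {y : Fin 2 → ℂ} (hy : y ∈ U) : pushF φ U F (φ y) = F y := by
  rw [pushF, if_pos (mem_image_of_mem φ hy), hi.leftInvOn_invFunOn hy]

lemma pushF_eq_zero {φ : (Fin 2 → ℂ) → (Fin 2 → ℂ)} {U S : Set (Fin 2 → ℂ)} (hi : InjOn φ U)
    {F : (Fin 2 → ℂ) → ℝ} (hF : ∀ y ∈ U, y ∉ S → F y = 0) {w : Fin 2 → ℂ} (hw : w ∉ φ '' S) :
    pushF φ U F w = 0 := by
  by_cases h : w ∈ φ '' U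
  · obtain ⟨y, hy, rfl⟩ := h
    rw [pushF_apply hi F hy]
    exact hF y hy fun hyS => hw (mem_image_of_mem φ hyS)
  · rw [pushF, if_neg h]

lemma contDiff_pushF {φ : (Fin 2 → ℂ) → (Fin 2 → ℂ)} {U S : Set (Fin 2 → ℂ)} (hU : IsOpen U)
    (hi : InjOn φ U) (hφ : ContDiffOn ℝ ∞ φ U)
    (hs : ∀ x ∈ U, ∀ v w, stdSymp 2 (fderiv ℝ φ x v) (fderiv ℝ φ x w) = stdSymp 2 v w)
    (hS : IsCompact (φ '' S)) (hSU : S ⊆ U) {F : (Fin 2 → ℂ) → ℝ} (hF : ∀ y ∈ U, y ∉ S → F y = 0)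
    (hFc : ContDiff ℝ ∞ F) : ContDiff ℝ ∞ (pushF φ U F) := by
  rw [contDiff_iff_contDiffAt]
  intro w
  by_cases hw : w ∈ φ '' S
  · obtain ⟨y, hy, rfl⟩ := hw
    obtain ⟨g, hg, hgy, hev⟩ := exists_local_inverse hU hφ hs (hSU hy)
    refine (hFc.contDiffAt.comp (φ y) hg).congr_of_eventuallyEq ?_
    filter_upwards [hev] with w hw
    conv_lhs => rw [← hw.2]
    exact pushF_apply hi F hw.1
  · refine (contDiffAt_const (c := (0 : ℝ))).congr_of_eventuallyEq ?_
    filter_upwards [hS.isClosed.isOpen_compl.mem_nhds hw] with w' hw'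
    exact pushF_eq_zero hi hF hw'

/-- A `1`-periodic orbit of the field `X` which meets the image of `φ` at `φ y₀`, where `X` is
conjugate to the rotation field `2π i w y` with `0 ≤ w < 1`, is constant. -/
lemma orbit_const {φ : (Fin 2 → ℂ) → (Fin 2 → ℂ)} {U : Set (Fin 2 → ℂ)} (hU : IsOpen U)
    (hi : InjOn φ U) (hφ : ContDiffOn ℝ ∞ φ U) {X : (Fin 2 → ℂ) → (Fin 2 → ℂ)} {C : NNReal}
    (hX : LipschitzWith C X) {x : ℝ → Fin 2 → ℂ} (hper : ∀ t, x (t + 1) = x t)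
    (hx : ∀ t, HasDerivAt x (X (x t)) t) {y₀ : Fin 2 → ℂ} {w t₀ : ℝ}
    (hw0 : 0 ≤ w) (hw1 : w < 1) (hxt : x t₀ = φ y₀)
    (hrot : ∀ c : ℂ, ‖c‖ = 1 → c • y₀ ∈ U)
    (hconj : ∀ c : ℂ, ‖c‖ = 1 → fderiv ℝ φ (c • y₀) (fun j => Complex.I * (2 * π * w * (c • y₀) j)) =
      X (φ (c • y₀))) : ∀ t, x t = x t₀ := by
  let c : ℝ → ℂ := fun t => Complex.exp ((2 * π * w * (t - t₀) : ℝ) * Complex.I)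
  have hc1 : ∀ t, ‖c t‖ = 1 := fun t => Complex.norm_exp_ofReal_mul_I _
  have hcd : ∀ t, HasDerivAt c (c t * ((2 * π * w : ℝ) * Complex.I)) t := by
    intro t
    have h1 : HasDerivAt (fun t : ℝ => 2 * π * w * (t - t₀)) (2 * π * w * 1) t :=
      ((hasDerivAt_id t).sub_const t₀).const_mul _
    have h2 := (h1.ofReal_comp.mul_const Complex.I).cexp
    rw [mul_one] at h2
    exact h2
  have hY : ∀ t, HasDerivAt (fun t => c t • y₀)
      (fun j => Complex.I * (2 * π * w * (c t • y₀) j)) t := by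
    intro t
    have he : (fun j => Complex.I * (2 * π * w * (c t • y₀) j)) =
        (c t * ((2 * π * w : ℝ) * Complex.I)) • y₀ := by
      ext j
      simp
      ring
    rw [he]
    exact (hcd t).smul_const y₀
  have hz : ∀ t, HasDerivAt (fun t => φ (c t • y₀)) (X (φ (c t • y₀))) t := by
    intro t
    have hd : DifferentiableAt ℝ φ (c t • y₀) :=
      (hφ.contDiffAt (hU.mem_nhds (hrot _ (hc1 t)))).differentiableAt (by norm_num)
    rw [← hconj _ (hc1 t)]
    exact hd.hasFDerivAt.comp_hasDerivAt t (hY t)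
  have hc0 : c t₀ = 1 := by simp [c]
  have huniq : x = fun t => φ (c t • y₀) :=
    ODE_solution_unique_univ (v := fun _ => X) (s := fun _ => univ) (K := C) (t₀ := t₀)
      (fun t => hX.lipschitzOnWith) (fun t => ⟨hx t, mem_univ _⟩) (fun t => ⟨hz t, mem_univ _⟩)
      (by simp only [hc0, one_smul]; exact hxt)
  have hy1 : c (t₀ + 1) • y₀ = y₀ := by
    have h1 := hper t₀
    rw [huniq] at h1
    have h2 := hi (hrot _ (hc1 _)) (hrot _ (hc1 _)) h1
    rwa [hc0, one_smul] at h2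
  have hconst : ∀ t, c t • y₀ = y₀ := by
    by_cases hy : y₀ = 0
    · intro t; rw [hy, smul_zero]
    · have hc : c (t₀ + 1) = 1 := by
        have : (c (t₀ + 1) - 1) • y₀ = 0 := by rw [sub_smul, hy1, one_smul, sub_self]
        rcases smul_eq_zero.1 this with h | h
        · exact sub_eq_zero.1 h
        · exact absurd h hy
      obtain ⟨n, hn⟩ := Complex.exp_eq_one_iff.1 hc
      have hn' : w = n := by
        have h3 := congrArg Complex.im hn
        simp at h3
        have := Real.pi_pos
        have h4 : 2 * π * w = 2 * π * n := by linarith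
        exact mul_left_cancel₀ (by positivity) h4
      have hn0 : n = 0 := by
        have h5 : (0 : ℝ) ≤ n := hn' ▸ hw0
        have h6 : (n : ℝ) < 1 := hn' ▸ hw1
        have h7 : 0 ≤ n := by exact_mod_cast h5
        have h8 : n < 1 := by exact_mod_cast h6
        omega
      intro t
      simp [c, hn', hn0]
  intro t
  rw [huniq]
  simp only [hconst]

end

/-! ### Nonsqueezing -/

section
open Filter Topology
open scoped ContDiff

/-- Nonsqueezing: a ball of capacity `R` that embeds symplectically into `E(a, b)` has `R ≤ a`. -/
theorem nonsqueezing {a b R : ℝ} (ha : 0 < a) (hab : a ≤ b)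
    {φ : (Fin 2 → ℂ) → (Fin 2 → ℂ)} (hi : InjOn φ {z | quadE (fun _ => 1) z < R})
    (hφ : ContDiffOn ℝ ∞ φ {z | quadE (fun _ => 1) z < R})
    (hs : ∀ x ∈ {z | quadE (fun _ => 1) z < R}, ∀ v w,
      stdSymp 2 (fderiv ℝ φ x v) (fderiv ℝ φ x w) = stdSymp 2 v w)
    (himg : φ '' {z | quadE (fun _ => 1) z < R} ⊆ ellipsoid ![a, b]) : R ≤ a := by
  by_contra hcon
  rw [not_le] at hcon
  obtain ⟨ρ, hρ⟩ : ∃ ρ, ρ = quadE (fun _ => 1) := ⟨_, rfl⟩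
  obtain ⟨U, hUdef⟩ : ∃ U, U = {z | ρ z < R} := ⟨_, rfl⟩
  rw [← hρ, ← hUdef] at hi hφ hs himg
  have hρc : ContDiff ℝ ∞ ρ := hρ ▸ contDiff_quadE _
  have hU : IsOpen U := hUdef ▸ isOpen_lt hρc.continuous continuous_const
  have hb : 0 < b := ha.trans_le hab
  obtain ⟨f, γ, m, R', hγ, hR', ham, hfc, hfγ, hfR, hf0, hfm, hfd0, hfd1⟩ := exists_profile ha hcon
  obtain ⟨κ, hκa, hκ2⟩ : ∃ κ, a < κ ∧ κ < min m (2 * a) := exists_between (lt_min ham (by linarith))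
  have hκm : κ < m := hκ2.trans_le (min_le_left _ _)
  have hκ2a : κ < 2 * a := hκ2.trans_le (min_le_right _ _)
  have hκ : 0 < κ := ha.trans hκa
  obtain ⟨k, s₀, hkc, hk1, hk0, hkn, hkd⟩ := exists_outer_profile hκ hκm
  -- doubling the long axis makes the second frequency `κ / (2 b)` less than one
  let l : Fin 2 → ℝ := ![1 / a, 1 / (2 * b)]
  have hl : ∀ j, 0 < l j := by
    intro j; fin_cases j
    · show 0 < 1 / a; positivity
    · show 0 < 1 / (2 * b); positivity
  let lam : Fin 2 → ℝ := fun j => κ * l j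
  obtain ⟨q, hq⟩ : ∃ q, q = quadE l := ⟨_, rfl⟩
  have hqc : ContDiff ℝ ∞ q := hq ▸ contDiff_quadE _
  have hqn : ∀ z, 0 ≤ q z := fun z => hq ▸ quadE_nonneg (fun j => (hl j).le) z
  have hQ : ∀ z : Fin 2 → ℂ, ∑ j, π * lam j * ‖z j‖ ^ 2 = κ * q z := by
    intro z
    rw [hq, quadE, Finset.mul_sum]
    exact Finset.sum_congr rfl fun j _ => by simp only [lam]; ring
  have hqU : ∀ y ∈ U, q (φ y) ≤ 1 := by
    intro y hy
    have h1 := himg (mem_image_of_mem φ hy)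
    simp only [ellipsoid, mem_ofPred_eq, Fin.sum_univ_two] at h1
    refine le_trans ?_ h1
    rw [hq, quadE, Fin.sum_univ_two]
    simp only [l, Matrix.cons_val_zero, Matrix.cons_val_one]
    refine add_le_add (le_of_eq (by ring)) ?_
    have : π * (1 / (2 * b)) * ‖φ y 1‖ ^ 2 = (π * ‖φ y 1‖ ^ 2 / b) / 2 := by field_simp
    rw [this]
    have : 0 ≤ π * ‖φ y 1‖ ^ 2 / b := by positivity
    linarith
  obtain ⟨S, hSdef⟩ : ∃ S, S = {z | ρ z ≤ R'} := ⟨_, rfl⟩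
  have hSU : S ⊆ U := by
    rw [hSdef, hUdef]; intro z hz; exact lt_of_le_of_lt hz hR'
  have hScomp : IsCompact S := by
    rw [hSdef, hρ]; exact isCompact_quadE_le (fun _ => one_pos) _
  have hC : IsCompact (φ '' S) := hScomp.image_of_continuousOn (hφ.continuousOn.mono hSU)
  let F : (Fin 2 → ℂ) → ℝ := fun z => m - f (ρ z)
  have hFc : ContDiff ℝ ∞ F := contDiff_const.sub (hfc.comp hρc)
  have hFS : ∀ y ∈ U, y ∉ S → F y = 0 := by
    intro y _ hy
    rw [hSdef] at hy
    have : R' < ρ y := not_le.1 hy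
    simp only [F]; rw [hfR _ this.le, sub_self]
  let T := pushF φ U F
  have hTc : ContDiff ℝ ∞ T := contDiff_pushF hU hi hφ hs hC hSU hFS hFc
  have hT0 : ∀ w, w ∉ φ '' S → T w = 0 := fun w hw => pushF_eq_zero hi hFS hw
  have hTU : ∀ y ∈ U, T (φ y) = m - f (ρ y) := fun y hy => pushF_apply hi F hy
  let K : (Fin 2 → ℂ) → ℝ := fun z => k (q z) - T z
  have hKc : ContDiff ℝ ∞ K := (hkc.comp hqc).sub hTc
  have hKU : ∀ y ∈ U, κ * q (φ y) + K (φ y) = f (ρ y) := by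
    intro y hy
    simp only [K]
    rw [hTU y hy, hk1 _ (hqU y hy)]; ring
  have hKout : ∀ w, w ∉ φ '' S → K w = k (q w) := by
    intro w hw; simp only [K]; rw [hT0 w hw, sub_zero]
  have hKcs : HasCompactSupport K := by
    refine HasCompactSupport.intro ((isCompact_quadE_le hl s₀).union hC) fun z hz => ?_
    rw [mem_union, not_or] at hz
    rw [hKout z hz.2]
    refine hk0 _ ?_
    have := hz.1
    rw [mem_ofPred_eq, ← hq, not_le] at this
    exact this.le
  have hHn : ∀ z, 0 ≤ ∑ j, π * lam j * ‖z j‖ ^ 2 + K z := by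
    intro z
    rw [hQ]
    by_cases hz : z ∈ φ '' S
    · obtain ⟨y, hy, rfl⟩ := hz
      rw [hKU y (hSU hy)]; exact hf0 _
    · rw [hKout z hz]; exact hkn _ (hqn z)
  have h0U : (0 : Fin 2 → ℂ) ∈ U := by
    rw [hUdef, hρ]; show quadE _ 0 < R
    simp [quadE]; linarith
  have hH0 : ∀ᶠ z in 𝓝 (φ 0), ∑ j, π * lam j * ‖z j‖ ^ 2 + K z = 0 := by
    obtain ⟨g, hg, hgy, hev⟩ := exists_local_inverse hU hφ hs h0U
    have h1 : ∀ᶠ w in 𝓝 (φ 0), ρ (g w) < γ := by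
      have hcont : ContinuousAt (fun w => ρ (g w)) (φ 0) :=
        hρc.continuous.continuousAt.comp hg.continuousAt
      refine hcont.eventually_lt_const ?_
      simp only [hgy]
      rw [hρ]; simpa [quadE] using hγ
    filter_upwards [hev, h1] with w hw hw'
    rw [hQ, ← hw.2, hKU _ hw.1]
    exact hfγ _ hw'.le
  have hl0 : 1 < lam 0 ∧ lam 0 < 2 := by
    show 1 < κ * (1 / a) ∧ κ * (1 / a) < 2
    rw [mul_one_div, one_lt_div ha, div_lt_iff₀ ha]
    exact ⟨hκa, hκ2a⟩
  have hl1 : 0 < lam 1 ∧ lam 1 < 1 := by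
    show 0 < κ * (1 / (2 * b)) ∧ κ * (1 / (2 * b)) < 1
    rw [mul_one_div, div_lt_one (by linarith)]
    exact ⟨by positivity, by linarith⟩
  have hK2 : ContDiff ℝ 2 K := by exact_mod_cast contDiff_infty.1 hKc 2
  obtain ⟨M, L, A, hdata⟩ := exists_hamData hl0 hl1 hK2 hKcs hHn hH0
  obtain ⟨x, hper, hx, hact⟩ := hdata.exists_periodic_orbit
  refine absurd hact (not_lt.2 ?_)
  have hxc : Continuous x := by
    refine continuous_pi fun j => ?_
    exact continuous_iff_continuousAt.2 fun t => (hx t j).continuousAt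
  suffices hpt : ∀ t, (1 / 2) * ∑ j, ((starRingEnd ℂ) (gradE K (x t) j) * x t j).re - K (x t) ≤ 0 by
    rw [← neg_nonneg, ← intervalIntegral.integral_neg]
    exact intervalIntegral.integral_nonneg zero_le_one fun t _ => by linarith [hpt t]
  by_cases hmeet : ∃ t₀, x t₀ ∈ φ '' S
  · obtain ⟨t₀, y₀, hy₀, hxt⟩ := hmeet
    obtain ⟨X, hXdef⟩ : ∃ X : (Fin 2 → ℂ) → (Fin 2 → ℂ),
      X = fun z j => Complex.I * (2 * π * lam j * z j + gradE K z j) := ⟨_, rfl⟩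
    obtain ⟨C₁, hC₁⟩ := exists_lipschitz_fderiv hK2 hKcs
    have hXL : ∃ C, LipschitzWith C X := by
      refine ⟨⟨4 * π + 2 * C₁, by positivity⟩, LipschitzWith.of_dist_le_mul fun z w => ?_⟩
      rw [dist_eq_norm, dist_eq_norm]
      refine (pi_norm_le_iff_of_nonneg
        (mul_nonneg (NNReal.coe_nonneg _) (norm_nonneg _))).2 fun j => ?_
      have h1 : (X z - X w) j =
          Complex.I * (2 * π * lam j * (z - w) j + (gradE K z j - gradE K w j)) := by
        rw [hXdef]; simp; ring
      have h2 := gradE_sub_le K z w j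
      have h3 := hC₁.dist_le_mul z w
      rw [dist_eq_norm, dist_eq_norm] at h3
      have hlam : 0 ≤ lam j ∧ lam j ≤ 2 := by
        revert j
        rw [Fin.forall_fin_two]
        exact ⟨fun _ _ => ⟨by linarith [hl0.1], hl0.2.le⟩,
          fun _ _ => ⟨hl1.1.le, by linarith [hl1.2]⟩⟩
      have h4 : ‖(2 * π * lam j * (z - w) j : ℂ)‖ ≤ 4 * π * ‖z - w‖ := by
        have h5 : ‖(2 * π * lam j * (z - w) j : ℂ)‖ = 2 * π * lam j * ‖(z - w) j‖ := by
          rw [norm_mul, norm_mul, norm_mul, Complex.norm_real, Complex.norm_real, Real.norm_eq_abs,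
            Real.norm_eq_abs, abs_of_pos Real.pi_pos, abs_of_nonneg hlam.1]
          simp
        rw [h5]
        have h6 := norm_le_pi_norm (z - w) j
        have h7 : 2 * π * lam j * ‖(z - w) j‖ ≤ 2 * π * 2 * ‖z - w‖ := by
          have := hlam.2
          gcongr
        linarith
      rw [h1, norm_mul, Complex.norm_I, one_mul]
      refine (norm_add_le _ _).trans ?_
      show _ ≤ (4 * π + 2 * C₁) * ‖z - w‖
      linarith
    obtain ⟨C, hXL⟩ := hXL
    have hρrot : ∀ c : ℂ, ‖c‖ = 1 → ∀ y : Fin 2 → ℂ, ρ (c • y) = ρ y := by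
      intro c hc y; rw [hρ]; simp [quadE, hc]
    have hrot : ∀ c : ℂ, ‖c‖ = 1 → c • y₀ ∈ U := by
      intro c hc
      have := hSU hy₀
      rw [hUdef] at this ⊢
      show ρ _ < R
      rw [hρrot c hc]; exact this
    -- on `U` the pulled back Hamiltonian is `f ∘ ρ`
    have hconj : ∀ y ∈ U, fderiv ℝ φ y (fun j => Complex.I * (2 * π * deriv f (ρ y) * y j)) =
        X (φ y) := by
      intro y hy
      rw [hXdef]
      have hφd : DifferentiableAt ℝ φ y :=
        (hφ.contDiffAt (hU.mem_nhds hy)).differentiableAt (by norm_num)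
      refine symplectic_pushforward (hs y hy) (fun j => 2 * π * lam j * φ y j + gradE K (φ y) j)
        (fun j => 2 * π * deriv f (ρ y) * y j) fun v => ?_
      have hHd : HasFDerivAt (fun z => quadE lam z + K z)
          (fderiv ℝ (quadE lam) (φ y) + fderiv ℝ K (φ y)) (φ y) :=
        ((contDiff_quadE lam (n := 1)).differentiable (by norm_num)).differentiableAt.hasFDerivAt.add
          (hK2.differentiable (by norm_num)).differentiableAt.hasFDerivAt
      have e1 : HasFDerivAt (fun y => quadE lam (φ y) + K (φ y))
          ((fderiv ℝ (quadE lam) (φ y) + fderiv ℝ K (φ y)).comp (fderiv ℝ φ y)) y :=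
        HasFDerivAt.comp (g := fun z => quadE lam z + K z) y hHd hφd.hasFDerivAt
      have e2 : HasFDerivAt (fun y => f (ρ y)) (deriv f (ρ y) • fderiv ℝ ρ y) y :=
        ((hfc.differentiable (by norm_num)).differentiableAt.hasDerivAt).comp_hasFDerivAt y
          ((hρc.differentiable (by norm_num)).differentiableAt.hasFDerivAt)
      have e3 : (fun y => quadE lam (φ y) + K (φ y)) =ᶠ[𝓝 y] fun y => f (ρ y) := by
        filter_upwards [hU.mem_nhds hy] with y' hy'
        rw [← hKU y' hy', ← hQ]; rfl
      have e4 := (e1.congr_of_eventuallyEq e3.symm).unique e2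
      have e5 := congrArg (fun T : (Fin 2 → ℂ) →L[ℝ] ℝ => T v) e4
      simp only [ContinuousLinearMap.comp_apply, add_apply,
        smul_apply, smul_eq_mul] at e5
      rw [fderiv_quadE, ← sum_gradE, hρ, fderiv_quadE, ← hρ] at e5
      have e6 : ∑ j, ((starRingEnd ℂ) (2 * π * lam j * φ y j + gradE K (φ y) j) *
          fderiv ℝ φ y v j).re = ∑ j, ((starRingEnd ℂ) (2 * π * lam j * φ y j) *
          fderiv ℝ φ y v j).re + ∑ j, ((starRingEnd ℂ) (gradE K (φ y) j) * fderiv ℝ φ y v j).re := by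
        rw [← Finset.sum_add_distrib]
        exact Finset.sum_congr rfl fun j _ => by rw [map_add, add_mul, Complex.add_re]
      rw [e6, e5, Finset.mul_sum]
      refine Finset.sum_congr rfl fun j _ => ?_
      simp [Complex.mul_re]
      ring
    have hxd : ∀ t, HasDerivAt x (X (x t)) t := by
      intro t; rw [hXdef]; exact hasDerivAt_pi.2 fun j => hx t j
    have hxconst := orbit_const hU hi hφ hXL hper hxd (hfd0 (ρ y₀)) (hfd1 (ρ y₀)) hxt.symm hrot
      (fun c hc => by
        have := hconj _ (hrot c hc)
        rwa [hρrot c hc] at this)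
    intro t
    have hzero : X (x t) = 0 := by
      have h1 : x = fun _ => x t₀ := funext hxconst
      have h2 := hxd t
      rw [h1] at h2 ⊢
      exact h2.unique (hasDerivAt_const t (x t₀))
    have hg : ∀ j, gradE K (x t) j = -(2 * π * lam j * x t j) := by
      intro j
      have h1 := congrFun hzero j
      rw [hXdef] at h1
      have h2 := (mul_eq_zero.1 h1).resolve_left Complex.I_ne_zero
      exact eq_neg_of_add_eq_zero_right h2
    have hsum : (1 / 2) * ∑ j, ((starRingEnd ℂ) (gradE K (x t) j) * x t j).re =
        -∑ j, π * lam j * ‖x t j‖ ^ 2 := by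
      rw [Finset.mul_sum, ← Finset.sum_neg_distrib]
      refine Finset.sum_congr rfl fun j _ => ?_
      rw [hg, Complex.sq_norm, Complex.normSq_apply]
      simp [Complex.mul_re]
      ring
    rw [hsum]
    linarith [hHn (x t)]
  · intro t
    have hnot : x t ∉ φ '' S := fun h => hmeet ⟨t, h⟩
    rw [sum_gradE, hKout _ hnot]
    have he : K =ᶠ[𝓝 (x t)] fun z => k (q z) := by
      filter_upwards [hC.isClosed.isOpen_compl.mem_nhds hnot] with z hz using hKout z hz
    have hd : HasFDerivAt (fun z => k (q z)) (deriv k (q (x t)) • fderiv ℝ q (x t)) (x t) :=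
      ((hkc.differentiable (by norm_num)).differentiableAt.hasDerivAt).comp_hasFDerivAt (x t)
        ((hqc.differentiable (by norm_num)).differentiableAt.hasFDerivAt)
    rw [he.fderiv_eq, hd.fderiv]
    have hqx : fderiv ℝ q (x t) (x t) = 2 * q (x t) := by
      rw [hq, fderiv_quadE, quadE, Finset.mul_sum]
      refine Finset.sum_congr rfl fun j _ => ?_
      rw [Complex.sq_norm, Complex.normSq_apply]
      simp [Complex.mul_re]
      ring
    rw [smul_apply, hqx, smul_eq_mul]
    have := hkd _ (hqn (x t))
    linarith

end

/-! ### Volumes -/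

section
open Filter Topology
open scoped ContDiff

lemma volume_disk (t : ℝ) : volume {z : ℂ | π * ‖z‖ ^ 2 ≤ t} = ENNReal.ofReal t := by
  rcases lt_or_ge t 0 with ht | ht
  · rw [ENNReal.ofReal_of_nonpos ht.le]
    convert measure_empty (μ := (volume : Measure ℂ))
    ext z
    have : 0 ≤ π * ‖z‖ ^ 2 := by positivity
    simp
    linarith
  · have : {z : ℂ | π * ‖z‖ ^ 2 ≤ t} = Metric.closedBall 0 (√(t / π)) := by
      ext z
      rw [mem_closedBall_zero_iff, Real.le_sqrt (norm_nonneg _) (by positivity),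
        le_div_iff₀ Real.pi_pos, mul_comm]
      rfl
    rw [this, Complex.volume_closedBall, ← ENNReal.ofReal_pow (Real.sqrt_nonneg _),
      Real.sq_sqrt (by positivity)]
    have : (NNReal.pi : ENNReal) = ENNReal.ofReal π := by
      rw [← NNReal.coe_real_pi, ENNReal.ofReal_coe_nnreal]
    rw [this, ← ENNReal.ofReal_mul (by positivity)]
    congr 1
    field_simp

/-- The area of a disk as action variable: `z ↦ π |z|²` pushes Lebesgue measure on `ℂ` to Lebesgue
measure on `[0, ∞)`. -/
lemma measurePreserving_area :
    MeasurePreserving (fun z : ℂ => π * ‖z‖ ^ 2) volume (volume.restrict (Ici (0 : ℝ))) := by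
  have hm : Measurable fun z : ℂ => π * ‖z‖ ^ 2 := by fun_prop
  have h1 : ∀ t, Measure.map (fun z : ℂ => π * ‖z‖ ^ 2) volume (Iic t) = ENNReal.ofReal t := by
    intro t
    rw [Measure.map_apply hm measurableSet_Iic]
    exact volume_disk t
  have h2 : ∀ t, (volume.restrict (Ici (0 : ℝ))) (Iic t) = ENNReal.ofReal t := by
    intro t
    rw [Measure.restrict_apply measurableSet_Iic, inter_comm, Ici_inter_Iic, Real.volume_Icc,
      sub_zero]
  have h3 : ∀ (μ : Measure ℝ), (∀ t, μ (Iic t) = ENNReal.ofReal t) → ∀ s t, s < t →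
      μ (Ioc s t) = ENNReal.ofReal t - ENNReal.ofReal s := by
    intro μ hμ s t hst
    rw [← Iic_sdiff_Iic, measure_sdiff (Iic_subset_Iic.2 hst.le)
      measurableSet_Iic.nullMeasurableSet (by rw [hμ]; exact ENNReal.ofReal_ne_top), hμ, hμ]
  refine ⟨hm, Measure.ext_of_Ioc' _ _ (fun s t hst => ?_) fun s t hst => ?_⟩
  · rw [h3 _ h1 s t hst]
    exact (tsub_le_self.trans_lt ENNReal.ofReal_lt_top).ne
  · rw [h3 _ h1 s t hst, h3 _ h2 s t hst]

lemma volume_momentMap_preimage {A : Set (Fin 2 → ℝ)} (hA : MeasurableSet A) :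
    volume (momentMap 2 ⁻¹' A) = volume (A ∩ univ.pi fun _ => Ici 0) := by
  have h := measurePreserving_pi (fun _ : Fin 2 => (volume : Measure ℂ))
    (fun _ : Fin 2 => volume.restrict (Ici (0 : ℝ))) (fun _ => measurePreserving_area)
  rw [← Measure.restrict_pi_pi] at h
  have h1 := h.measure_preimage hA.nullMeasurableSet
  rw [Measure.restrict_apply hA] at h1
  exact h1

/-- The standard symplectic form as a bilinear form. -/
def sympForm : LinearMap.BilinForm ℝ (Fin 2 → ℂ) :=
  LinearMap.mk₂ ℝ (stdSymp 2)
    (fun u u' v => by simp [stdSymp, Fin.sum_univ_two]; ring)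
    (fun c u v => by simp [stdSymp, Fin.sum_univ_two]; ring)
    (fun u v v' => by simp [stdSymp, Fin.sum_univ_two]; ring)
    (fun c u v => by simp [stdSymp, Fin.sum_univ_two]; ring)

lemma stdSymp_swap (u v : Fin 2 → ℂ) : stdSymp 2 u v = -stdSymp 2 v u := by
  simp [stdSymp, Fin.sum_univ_two, Complex.mul_im]; ring

/-- Taking determinants in `Aᵀ J A = J`. -/
lemma abs_det_of_symplectic {A : (Fin 2 → ℂ) →L[ℝ] (Fin 2 → ℂ)}
    (hA : ∀ v w, stdSymp 2 (A v) (A w) = stdSymp 2 v w) : |A.det| = 1 := by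
  let bs := Module.finBasis ℝ (Fin 2 → ℂ)
  have hnd : sympForm.Nondegenerate := by
    refine ⟨fun u hu => eq_zero_of_stdSymp hu, fun u hu => eq_zero_of_stdSymp fun v => ?_⟩
    have := hu v
    rw [stdSymp_swap, neg_eq_zero]; exact this
  have hdet := (LinearMap.BilinForm.nondegenerate_iff_det_ne_zero bs).1 hnd
  have hcomp : sympForm.comp (A : (Fin 2 → ℂ) →ₗ[ℝ] (Fin 2 → ℂ)) A = sympForm :=
    LinearMap.ext₂ fun v w => hA v w
  have h1 := LinearMap.BilinForm.toMatrix_comp bs bs sympForm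
    (A : (Fin 2 → ℂ) →ₗ[ℝ] (Fin 2 → ℂ)) (A : (Fin 2 → ℂ) →ₗ[ℝ] (Fin 2 → ℂ))
  rw [hcomp] at h1
  have h2 := congrArg Matrix.det h1
  rw [Matrix.det_mul, Matrix.det_mul, Matrix.det_transpose, LinearMap.det_toMatrix] at h2
  have h3 : A.det = LinearMap.det (A : (Fin 2 → ℂ) →ₗ[ℝ] (Fin 2 → ℂ)) := rfl
  rw [← h3] at h2
  have h4 : A.det ^ 2 = 1 := by
    have h5 : (A.det ^ 2 - 1) * (LinearMap.BilinForm.toMatrix bs sympForm).det = 0 := by linarith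
    rcases mul_eq_zero.1 h5 with h | h
    · linarith
    · exact absurd h hdet
  rw [← sq_abs] at h4
  exact (pow_eq_one_iff_of_nonneg (abs_nonneg _) two_ne_zero).1 h4

lemma volume_image_of_symplectic {φ : (Fin 2 → ℂ) → (Fin 2 → ℂ)} {U : Set (Fin 2 → ℂ)}
    (hU : IsOpen U) (hi : InjOn φ U) (hφ : ContDiffOn ℝ ∞ φ U)
    (hs : ∀ x ∈ U, ∀ v w, stdSymp 2 (fderiv ℝ φ x v) (fderiv ℝ φ x w) = stdSymp 2 v w) :
    volume (φ '' U) = volume U := by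
  rw [← lintegral_abs_det_fderiv_eq_addHaar_image volume hU.measurableSet (f' := fderiv ℝ φ)
    (fun x hx => ((hφ.contDiffAt (hU.mem_nhds hx)).differentiableAt
      (by norm_num)).hasFDerivAt.hasFDerivWithinAt) hi]
  rw [setLIntegral_congr_fun hU.measurableSet (g := fun _ => 1)
    (fun x hx => by simp only [abs_det_of_symplectic (hs x hx), ENNReal.ofReal_one])]
  simp

/-- The open standard triangle. -/
def openTri : Set (Fin 2 → ℝ) := {p | 0 < p 0 ∧ 0 < p 1 ∧ p 0 + p 1 < 1}

/-- The closed standard triangle. -/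
def closedTri : Set (Fin 2 → ℝ) := {p | 0 ≤ p 0 ∧ 0 ≤ p 1 ∧ p 0 + p 1 ≤ 1}

lemma isOpen_openTri : IsOpen openTri :=
  (isOpen_lt continuous_const (continuous_apply 0)).inter
    ((isOpen_lt continuous_const (continuous_apply 1)).inter
      (isOpen_lt ((continuous_apply 0).add (continuous_apply 1)) continuous_const))

lemma isClosed_closedTri : IsClosed closedTri :=
  (isClosed_le continuous_const (continuous_apply 0)).inter
    ((isClosed_le continuous_const (continuous_apply 1)).inter
      (isClosed_le ((continuous_apply 0).add (continuous_apply 1)) continuous_const))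

lemma convex_openTri : Convex ℝ openTri := by
  intro p hp q hq s t hs ht hst
  simp only [openTri, mem_ofPred_eq, Pi.add_apply, Pi.smul_apply, smul_eq_mul] at *
  rcases hs.eq_or_lt with rfl | hs
  · simp at hst; subst hst; simpa using hq
  have : s * p 0 + s * p 1 < s := by nlinarith
  have : t * q 0 + t * q 1 ≤ t := by nlinarith
  have := mul_pos hs hp.1
  have := mul_pos hs hp.2.1
  have := mul_nonneg ht hq.1.le
  have := mul_nonneg ht hq.2.1.le
  exact ⟨by linarith, by linarith, by linarith⟩

lemma closedTri_subset_closure : closedTri ⊆ closure openTri := by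
  intro p hp
  let c : Fin 2 → ℝ := fun _ => 1 / 3
  have hcont : Continuous fun t : ℝ => p + t • (c - p) := by fun_prop
  have ht : Tendsto (fun t : ℝ => p + t • (c - p)) (𝓝[>] 0) (𝓝 p) := by
    have := (hcont.tendsto 0).mono_left (nhdsWithin_le_nhds (s := Ioi 0))
    simpa using this
  refine mem_closure_of_tendsto ht ?_
  filter_upwards [Ioo_mem_nhdsGT (zero_lt_one (α := ℝ))] with t ht
  obtain ⟨h0, h1, h2⟩ := hp
  simp only [openTri, mem_ofPred_eq, Pi.add_apply, Pi.smul_apply, smul_eq_mul, Pi.sub_apply, c]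
  have ht0 := ht.1
  have h3 : 0 < 1 - t := by linarith [ht.2]
  have := mul_nonneg h3.le h0
  have := mul_nonneg h3.le h1
  have := mul_le_mul_of_nonneg_left h2 h3.le
  exact ⟨by nlinarith, by nlinarith, by nlinarith⟩

lemma volume_closedTri_le : volume closedTri ≤ volume openTri := by
  have h1 : volume (closure openTri) = volume openTri := by
    have hf := convex_openTri.addHaar_frontier volume
    refine le_antisymm ?_ (measure_mono subset_closure)
    rw [closure_eq_self_union_frontier]
    refine (measure_union_le _ _).trans ?_
    rw [hf, add_zero]
  exact (measure_mono closedTri_subset_closure).trans h1.le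

lemma volume_openTri_pos : 0 < volume openTri :=
  isOpen_openTri.measure_pos _ ⟨fun _ => 1 / 3, by simp [openTri]; norm_num⟩

lemma volume_openTri_lt_top : volume openTri < ⊤ := by
  refine (measure_mono (t := Icc (0 : Fin 2 → ℝ) 1) ?_).trans_lt
    (isCompact_Icc.measure_lt_top)
  intro p hp
  obtain ⟨h0, h1, h2⟩ := hp
  refine ⟨fun j => ?_, fun j => ?_⟩ <;> fin_cases j <;> simp <;> linarith

lemma volume_matrix_preimage {M : Matrix (Fin 2) (Fin 2) ℝ} (hM : 0 < M.det)
    (s : Set (Fin 2 → ℝ)) :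
    volume ((fun p => M.mulVec p) ⁻¹' s) = ENNReal.ofReal (M.det)⁻¹ * volume s := by
  have h := Measure.addHaar_preimage_linearMap (volume : Measure (Fin 2 → ℝ))
    (f := Matrix.toLin' M) (by rw [LinearMap.det_toLin']; exact hM.ne') s
  rw [LinearMap.det_toLin', abs_of_pos (inv_pos.2 hM)] at h
  exact h

end

/-! ### The domain and the number N₂ -/

section
open Filter Topology
open scoped ContDiff

lemma mem_convexHull_triple {A B C p : Fin 2 → ℝ} {s t : ℝ} (hs : 0 ≤ s) (ht : 0 ≤ t)
    (hst : s + t ≤ 1) (hp : p = (1 - s - t) • A + s • B + t • C) :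
    p ∈ convexHull ℝ {A, B, C} := by
  have h := (convex_convexHull ℝ ({A, B, C} : Set (Fin 2 → ℝ))).sum_mem
    (t := Finset.univ) (w := ![1 - s - t, s, t]) (z := ![A, B, C])
    (fun i _ => by fin_cases i <;> simp <;> linarith)
    (by simp [Fin.sum_univ_three]; ring)
    (fun i _ => subset_convexHull ℝ _ (by fin_cases i <;> simp))
  rw [hp]
  simpa [Fin.sum_univ_three] using h

/-- In barycentric coordinates the triangle with vertices `0`, `(1, 0)`, `(ε, ε)` is cut out by
`p₀ - p₁ ≥ 0`, `p₁ ≥ 0` and `(p₀ - p₁) + p₁ / ε ≤ 1`. -/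
lemma mem_Qeps_lower {ε : ℝ} (hε : 0 < ε) {p : Fin 2 → ℝ} (h0 : 0 ≤ p 0 - p 1) (h1 : 0 ≤ p 1)
    (h : p 0 - p 1 + p 1 / ε ≤ 1) : p ∈ Qeps ε := by
  refine Or.inl (mem_convexHull_triple h0 (div_nonneg h1 hε.le) h ?_)
  ext j; fin_cases j <;> simp <;> field_simp <;> ring

lemma mem_Qeps_upper {ε : ℝ} (hε : 0 < ε) {p : Fin 2 → ℝ} (h0 : 0 ≤ p 0) (h1 : 0 ≤ p 1 - p 0)
    (h : p 0 / ε + (p 1 - p 0) ≤ 1) : p ∈ Qeps ε := by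
  refine Or.inr (mem_convexHull_triple (div_nonneg h0 hε.le) h1 h ?_)
  ext j; fin_cases j <;> simp <;> field_simp <;> ring

lemma continuous_momentMap : Continuous (momentMap 2) := by
  unfold momentMap
  fun_prop

lemma momentMap_nonneg (z : Fin 2 → ℂ) (j : Fin 2) : 0 ≤ momentMap 2 z j := by
  unfold momentMap
  positivity

/-- `V_ε` contains the open ball of capacity `2 ε`. -/
lemma ball_subset_interior {ε : ℝ} (hε : 0 < ε) (hε2 : 2 * ε < 1) :
    {z | quadE (fun _ => 1) z < 2 * ε} ⊆ interior (toricDomain (Qeps ε)) := by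
  refine interior_maximal ?_ (isOpen_lt (contDiff_quadE _ (n := 0)).continuous continuous_const)
  intro z hz
  have hz' : momentMap 2 z 0 + momentMap 2 z 1 < 2 * ε := by
    simpa [quadE, momentMap, Fin.sum_univ_two] using hz
  have h0 := momentMap_nonneg z 0
  have h1 := momentMap_nonneg z 1
  have hinv : 0 ≤ 1 / ε - 2 := by
    rw [sub_nonneg, le_div_iff₀ hε]; linarith
  have hone : ε * (1 / ε) = 1 := by field_simp
  show momentMap 2 z ∈ Qeps ε
  rcases le_total (momentMap 2 z 1) (momentMap 2 z 0) with h | h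
  · refine mem_Qeps_lower hε (by linarith) h1 ?_
    have : momentMap 2 z 1 * (1 / ε - 2) ≤ ε * (1 / ε - 2) := by gcongr; linarith
    rw [div_eq_mul_one_div]
    nlinarith
  · refine mem_Qeps_upper hε h0 (by linarith) ?_
    have : momentMap 2 z 0 * (1 / ε - 2) ≤ ε * (1 / ε - 2) := by gcongr; linarith
    rw [div_eq_mul_one_div]
    nlinarith

/-- The volume obstruction: `ε = vol V_ε ≤ vol E(a, b) = a b / 2`. -/
lemma volume_bound {ε a b : ℝ} (hε : 0 < ε) (ha : 0 < a) (hb : 0 < b)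
    (hemb : SympEmb 2 (toricDomain (Qeps ε)) (ellipsoid ![a, b])) : 2 * ε ≤ a * b := by
  obtain ⟨φ, hi, himg, hφ, hs⟩ := hemb
  -- `M₁`, `M₂` carry the two triangles of `Q_ε`, and `M₃` the moment image of `E(a, b)`, to the
  -- standard triangle; all areas are compared with its area, whose value is not needed
  let M₁ : Matrix (Fin 2) (Fin 2) ℝ := !![1, -1; 0, 1 / ε]
  let M₂ : Matrix (Fin 2) (Fin 2) ℝ := !![1 / ε, 0; -1, 1]
  let M₃ : Matrix (Fin 2) (Fin 2) ℝ := !![1 / a, 0; 0, 1 / b]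
  have hd₁ : M₁.det = ε⁻¹ := by simp [M₁, Matrix.det_fin_two]
  have hd₂ : M₂.det = ε⁻¹ := by simp [M₂, Matrix.det_fin_two]
  have hd₃ : M₃.det = (a * b)⁻¹ := by simp [M₃, Matrix.det_fin_two, mul_comm]
  have hcont : ∀ M : Matrix (Fin 2) (Fin 2) ℝ, Continuous fun p => M.mulVec p := fun M => by
    fun_prop
  let T₁ := (fun p => M₁.mulVec p) ⁻¹' openTri
  let T₂ := (fun p => M₂.mulVec p) ⁻¹' openTri
  let T₃ := (fun p => M₃.mulVec p) ⁻¹' closedTri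
  have ho₁ : IsOpen T₁ := isOpen_openTri.preimage (hcont _)
  have ho₂ : IsOpen T₂ := isOpen_openTri.preimage (hcont _)
  have hc₃ : IsClosed T₃ := isClosed_closedTri.preimage (hcont _)
  have hT₁ : ∀ p ∈ T₁, 0 < p 0 - p 1 ∧ 0 < p 1 / ε ∧ p 0 - p 1 + p 1 / ε < 1 := by
    intro p hp
    have hp' : M₁.mulVec p ∈ openTri := hp
    simpa [M₁, openTri, Matrix.mulVec, dotProduct, Fin.sum_univ_two, div_eq_inv_mul,
      sub_eq_add_neg] using hp'
  have hT₂ : ∀ p ∈ T₂, 0 < p 0 / ε ∧ 0 < p 1 - p 0 ∧ p 0 / ε + (p 1 - p 0) < 1 := by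
    intro p hp
    have hp' : M₂.mulVec p ∈ openTri := hp
    simpa [M₂, openTri, Matrix.mulVec, dotProduct, Fin.sum_univ_two, div_eq_inv_mul,
      sub_eq_add_neg, add_comm] using hp'
  have hpos₁ : ∀ p ∈ T₁, 0 < p 1 := fun p hp => by
    have := mul_pos (hT₁ p hp).2.1 hε
    rwa [div_mul_cancel₀ _ hε.ne'] at this
  have hpos₂ : ∀ p ∈ T₂, 0 < p 0 := fun p hp => by
    have := mul_pos (hT₂ p hp).1 hε
    rwa [div_mul_cancel₀ _ hε.ne'] at this
  have hQ : T₁ ∪ T₂ ⊆ Qeps ε := by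
    rintro p (hp | hp)
    · obtain ⟨h1, -, h3⟩ := hT₁ p hp
      exact mem_Qeps_lower hε h1.le (hpos₁ p hp).le h3.le
    · obtain ⟨-, h2, h3⟩ := hT₂ p hp
      exact mem_Qeps_upper hε (hpos₂ p hp).le h2.le h3.le
  have hquad : T₁ ∪ T₂ ⊆ univ.pi fun _ => Ici 0 := by
    rintro p (hp | hp) j - <;> fin_cases j
    · have := hpos₁ p hp; have := (hT₁ p hp).1; show 0 ≤ p 0; linarith
    · exact (hpos₁ p hp).le
    · exact (hpos₂ p hp).le
    · have := hpos₂ p hp; have := (hT₂ p hp).2.1; show 0 ≤ p 1; linarith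
  have hdisj : Disjoint T₁ T₂ := by
    rw [Set.disjoint_left]
    intro p h1 h2
    linarith [(hT₁ p h1).1, (hT₂ p h2).2.1]
  let W := momentMap 2 ⁻¹' (T₁ ∪ T₂)
  have hW : IsOpen W := (ho₁.union ho₂).preimage continuous_momentMap
  have hWV : W ⊆ toricDomain (Qeps ε) := preimage_mono hQ
  have hWi : W ⊆ interior (toricDomain (Qeps ε)) := interior_maximal hWV hW
  have hvolW : volume W = ENNReal.ofReal ε * volume openTri + ENNReal.ofReal ε * volume openTri := by
    rw [volume_momentMap_preimage (ho₁.union ho₂).measurableSet, inter_eq_left.2 hquad,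
      measure_union hdisj ho₂.measurableSet,
      volume_matrix_preimage (by rw [hd₁]; positivity), volume_matrix_preimage (by rw [hd₂]; positivity),
      hd₁, hd₂, inv_inv]
  have hE : ellipsoid ![a, b] ⊆ momentMap 2 ⁻¹' T₃ := by
    intro z hz
    have h0 := momentMap_nonneg z 0
    have h1 := momentMap_nonneg z 1
    have hz' : momentMap 2 z 0 / a + momentMap 2 z 1 / b ≤ 1 := by
      simpa [ellipsoid, momentMap, Fin.sum_univ_two] using hz
    show M₃.mulVec (momentMap 2 z) ∈ closedTri
    have h2 : 0 ≤ momentMap 2 z 0 / a := by positivity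
    have h3 : 0 ≤ momentMap 2 z 1 / b := by positivity
    simp only [M₃, closedTri, mem_ofPred_eq, Matrix.mulVec, dotProduct, Fin.sum_univ_two]
    simp only [Matrix.of_apply, Matrix.cons_val_zero, Matrix.cons_val_one, Matrix.cons_val',
      zero_mul, add_zero, zero_add, one_div, ← div_eq_inv_mul]
    exact ⟨h2, h3, hz'⟩
  have hvolE : volume (ellipsoid ![a, b]) ≤ ENNReal.ofReal (a * b) * volume openTri := by
    refine (measure_mono hE).trans ?_
    rw [volume_momentMap_preimage hc₃.measurableSet]
    refine (measure_mono inter_subset_left).trans ?_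
    rw [volume_matrix_preimage (by rw [hd₃]; positivity), hd₃, inv_inv]
    exact mul_le_mul' le_rfl volume_closedTri_le
  have hmain : volume W ≤ volume (ellipsoid ![a, b]) := by
    rw [← volume_image_of_symplectic hW (hi.mono hWV) (hφ.mono hWi) fun x hx => hs x (hWi hx)]
    exact measure_mono ((image_mono hWV).trans himg)
  have h := hvolW.symm.le.trans (hmain.trans hvolE)
  rw [← add_mul, ← ENNReal.ofReal_add hε.le hε.le,
    ENNReal.mul_le_mul_iff_left volume_openTri_pos.ne' volume_openTri_lt_top.ne,
    ENNReal.ofReal_le_ofReal_iff (by positivity)] at h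
  linarith

/-- Below `min (2a) b` only `1 · a` is counted. -/
lemma Nk_two {a b : ℝ} (ha : 0 < a) (hab : a ≤ b) : Nk 2 ![a, b] = min (2 * a) b := by
  have hset : {t : ℝ | 2 ≤ {p : Fin 2 × ℕ | ((p.2 : ℝ) + 1) * ![a, b] p.1 ≤ t}.ncard} =
      Ici (min (2 * a) b) := by
    ext t
    rw [mem_ofPred_eq, mem_Ici]
    constructor
    · intro h
      by_contra hlt
      rw [not_le, lt_min_iff] at hlt
      have hsub : {p : Fin 2 × ℕ | ((p.2 : ℝ) + 1) * ![a, b] p.1 ≤ t} ⊆ {(0, 0)} := by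
        rintro ⟨i, n⟩ hp
        have hp' : ((n : ℝ) + 1) * ![a, b] i ≤ t := hp
        have hn : (0 : ℝ) ≤ n := n.cast_nonneg
        fin_cases i
        · have hp2 : ((n : ℝ) + 1) * a ≤ t := hp'
          rcases Nat.eq_zero_or_pos n with rfl | hn1
          · rfl
          · have : (1 : ℝ) ≤ n := by exact_mod_cast hn1
            nlinarith
        · have hp2 : ((n : ℝ) + 1) * b ≤ t := hp'
          nlinarith
      have := ncard_le_ncard hsub (finite_singleton _)
      rw [ncard_singleton] at this
      omega
    · intro h
      have hfin : {p : Fin 2 × ℕ | ((p.2 : ℝ) + 1) * ![a, b] p.1 ≤ t}.Finite := by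
        refine (Set.finite_univ.prod (Set.finite_Iic ⌊t / a⌋₊)).subset ?_
        rintro ⟨i, n⟩ hp
        refine ⟨mem_univ _, ?_⟩
        have hp' : ((n : ℝ) + 1) * ![a, b] i ≤ t := hp
        have hai : a ≤ ![a, b] i := by fin_cases i <;> simp [hab]
        have hn : (0 : ℝ) ≤ n := n.cast_nonneg
        rw [mem_Iic]
        refine Nat.le_floor ?_
        rw [le_div_iff₀ ha]
        nlinarith
      rcases min_le_iff.1 h with h1 | h1
      · have hsub : ({(0, 0), (0, 1)} : Set (Fin 2 × ℕ)) ⊆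
            {p : Fin 2 × ℕ | ((p.2 : ℝ) + 1) * ![a, b] p.1 ≤ t} := by
          rintro p (rfl | rfl)
          · simp; linarith
          · simp; linarith
        have := ncard_le_ncard hsub hfin
        rwa [ncard_pair (by simp)] at this
      · have hsub : ({(0, 0), (1, 0)} : Set (Fin 2 × ℕ)) ⊆
            {p : Fin 2 × ℕ | ((p.2 : ℝ) + 1) * ![a, b] p.1 ≤ t} := by
          rintro p (rfl | rfl)
          · simp; linarith
          · simp; linarith
        have := ncard_le_ncard hsub hfin
        rwa [ncard_pair (by simp)] at this
  rw [Nk, hset, csInf_Ici]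

end

/-- For `ε ∈ (0,2/9)` and `0 < a ≤ b` such that `V_ε` symplectically embeds
into `E(a,b)`, one has `a ≥ 2ε`, `b ≥ √(2ε)`, and
`N₂(a,b) = min(2a,b) ≥ min(4ε, √(2ε)) > 3ε`. -/
theorem stmt19 (ε a b : ℝ) (hε : ε ∈ Set.Ioo (0 : ℝ) (2 / 9)) (ha : 0 < a) (hab : a ≤ b)
    (hemb : SympEmb 2 (toricDomain (Qeps ε)) (ellipsoid ![a, b])) :
    2 * ε ≤ a ∧ Real.sqrt (2 * ε) ≤ b ∧
    Nk 2 ![a, b] = min (2 * a) b ∧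
    min (4 * ε) (Real.sqrt (2 * ε)) ≤ min (2 * a) b ∧
    3 * ε < min (4 * ε) (Real.sqrt (2 * ε)) := by
  obtain ⟨hε0, hε1⟩ := hε
  have hb : 0 < b := ha.trans_le hab
  have hA : 2 * ε ≤ a := by
    obtain ⟨φ, hi, himg, hφ, hs⟩ := hemb
    have hsub := ball_subset_interior hε0 (by linarith)
    have hsub' := hsub.trans interior_subset
    exact nonsqueezing ha hab (hi.mono hsub') (hφ.mono hsub) (fun x hx => hs x (hsub hx))
      ((image_mono hsub').trans himg)
  have hB : Real.sqrt (2 * ε) ≤ b := by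
    have := volume_bound hε0 ha hb hemb
    rw [Real.sqrt_le_left hb.le]
    nlinarith
  refine ⟨hA, hB, Nk_two ha hab, min_le_min (by linarith) hB, lt_min (by linarith) ?_⟩
  rw [Real.lt_sqrt (by linarith)]
  nlinarith

end
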